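/- Let $G/K$ be a simply connected symmetric space of compact type: $G$ is a compact simply connected Lie group (realized as a compact subgroup of the unit group of a finite-dimensional real algebra, which is no restriction), $K$ is the identity component of the fixed point group of an involutive automorphism $\theta$ of $G$, the Lie algebra $\mathfrak g$ of $G$ carries an inner product invariant under $\mathrm{Ad}(G)$ and $d\theta$, and $G/K$ carries the induced metric. Let $\pi:G\to G/K$ be the projection and let $\phi:H^0([0,1],\mathfrak g)\to G$ be the parallel transport map on the Hilbert space of $L^2$-paths in $\mathfrak g$: $\phi(u)=g_u(1)$, where $g_u^{-1}g_u'=u$ and $g_u(0)=e$. Let $M$ be a connected equifocal submanifold of $G/K$, that is, a properly immersed complete submanifold such that (a) its normal holonomy group is trivial; (b) if $\nu$ is a parallel normal field and $\nu_{x}$ is a focal normal of multiplicity $k$ for some $x\in M$, then $\nu_{x}$ is one for all $x\in M$; (c) through each $x\in M$ there is a section, i.e. a properly embedded complete connected totally geodesic submanifold $\Sigma_x\ni x$ with $\dim\Sigma_x=\operatorname{codim}M$ meeting all parallel submanifolds of $M$ orthogonally. Fix $x_0\in M$ and assume that $\Sigma_{x_0}$ is not flat and that $T_{x_0}\Sigma_{x_0}=W_1\oplus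 W_2$ is an orthogonal decomposition into non-zero subspaces invariant under the restricted holonomy group of $\Sigma_{x_0}$, chosen so that the factor of the universal covering of $\Sigma_{x_0}$ corresponding to $W_1$ has no Euclidean part (no non-zero vector of $W_1$ is fixed by the restricted holonomy group). Let $D^N_i$ be the $\nabla^\perp$-parallel subbundle of the normal bundle $T^\perp M$ with $(D^N_i)_{x_0}=W_i$, so that $T^\perp M=D^N_1\oplus D^N_2$. Let $\widetilde M:=(\pi\circ\phi)^{-1}(M)\subset H^0([0,1],\mathfrak g)$ (the pull-back of $M$, if $M$ is only immersed), with shape tensor $\widetilde A$ and normal connection $\widetilde\nabla^\perp$, and let $\widetilde\nabla$ be the flat connection of $H^0([0,1],\mathfrak g)$. Let $\widetilde D^N_i\subset T^\perp\widetilde M$ be the horizontal lift of $D^N_i$, and put $$(\widetilde D^T_0)_u:=\bigcap_{n\in T^\perp_u\widetilde M}\operatorname{Ker}\widetilde A_n,\qquad (\widetilde D^T_j)_u:=\Big(\bigcap_{n\in(\widetilde D^N_k)_u}\operatorname{Ker}\widetilde A_n\Big)\ominus(\widetilde D^T_0)_u\quad(\{j,k\}=\{1,2\}).$$ Let $v$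 be a normal vector of $M$ belonging to $D^N_i$, let $\widetilde v$ be the parallel normal field of $M$ extending $v$, and let $\widetilde v^L$ be its horizontal lift to $\widetilde M$. Then $\widetilde v^L$ is differentiable along $\widetilde M$ and: (i) for every $X$ tangent to $\widetilde M$, the normal derivative $\widetilde\nabla^\perp_X\widetilde v^L$ belongs to $\widetilde D^N_i$; (ii) for every $Y\in\widetilde D^T_j\oplus\widetilde D^T_0$ with $j\ne i$, the derivative $\widetilde\nabla_Y\widetilde v^L$ in $H^0([0,1],\mathfrak g)$ vanishes. -/

import Mathlib

open MeasureTheory Set Filter Module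
open scoped Topology Manifold ContDiff RealInnerProductSpace

noncomputable section

/-- A simply connected symmetric space `G/K` of compact type, presented by a symmetric pair
`(G, K)` with `G` simply connected and `K` connected, and carrying the metric induced by a
bi-invariant metric of `G`.

* `G` is a compact simply connected Lie group, written as a compact subgroup of the unit group of a
  finite-dimensional real algebra `𝔸` (for instance a matrix algebra); every compact Lie group is
  isomorphic to such a group. A compact simply connected Lie group is automatically semisimple.
* The Euclidean space `𝔤` is the Lie algebra of `G` with its invariant inner product: `lie`
  identifies it with `{X ∈ 𝔸 | exp (t X) ∈ G for all t}`.
* `θ` is an involutive automorphism of `G`, with differential `dθ`, and `K` is the identity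
  component of its fixed point group. The inner product of `𝔤` is invariant under `Ad G` and
  `dθ`. -/
structure CompactSymmetricSpace (𝔸 𝔤 : Type*) [NormedRing 𝔸] [NormedAlgebra ℝ 𝔸]
    [FiniteDimensional ℝ 𝔸] [NormedAddCommGroup 𝔤] [InnerProductSpace ℝ 𝔤]
    [FiniteDimensional ℝ 𝔤] where
  G : Subgroup 𝔸ˣ
  isCompact_G : IsCompact (G : Set 𝔸ˣ)
  simplyConnected_G : SimplyConnectedSpace G
  lie : 𝔤 →ₗ[ℝ] 𝔸
  lie_injective : Function.Injective lie
  mem_range_lie_iff : ∀ X : 𝔸,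
    X ∈ LinearMap.range lie ↔ ∀ t : ℝ, ∃ g : G, ((g : 𝔸ˣ) : 𝔸) = NormedSpace.exp (t • X)
  norm_ad : ∀ (g : G) (ξ η : 𝔤),
    lie η = ((g : 𝔸ˣ) : 𝔸) * lie ξ * (((g⁻¹ : G) : 𝔸ˣ) : 𝔸) → ‖η‖ = ‖ξ‖
  θ : G ≃* G
  continuous_θ : Continuous θ
  θ_involutive : ∀ g : G, θ (θ g) = g
  dθ : 𝔤 →ₗᵢ[ℝ] 𝔤
  θ_exp : ∀ (ξ : 𝔤) (a b : G), ((a : 𝔸ˣ) : 𝔸) = NormedSpace.exp (lie ξ) →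
    ((b : 𝔸ˣ) : 𝔸) = NormedSpace.exp (lie (dθ ξ)) → θ a = b
  K : Subgroup G
  K_eq : (K : Set G) = connectedComponentIn {g : G | θ g = g} 1

namespace CompactSymmetricSpace

variable {𝔸 𝔤 : Type*} [NormedRing 𝔸] [NormedAlgebra ℝ 𝔸] [FiniteDimensional ℝ 𝔸]
  [NormedAddCommGroup 𝔤] [InnerProductSpace ℝ 𝔤] [FiniteDimensional ℝ 𝔤]

variable (S : CompactSymmetricSpace 𝔸 𝔤)

/-! ### The homogeneous space `G/K` -/

/-- The quotient space `G/K`. -/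
abbrev Q : Type _ := S.G ⧸ S.K

/-- The inclusion of `G` into the algebra `𝔸`. -/
def val (g : S.G) : 𝔸 := ((g : 𝔸ˣ) : 𝔸)

/-- The natural projection `π : G → G/K`. -/
def proj (g : S.G) : S.Q := QuotientGroup.mk g

theorem exists_exp (ξ : 𝔤) : ∃ g : S.G, S.val g = NormedSpace.exp (S.lie ξ) := by
  simpa [val] using (S.mem_range_lie_iff (S.lie ξ)).1 ⟨ξ, rfl⟩ 1

/-- The exponential map `𝔤 → G`. -/
def expG (ξ : 𝔤) : S.G := (S.exists_exp ξ).choose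

/-- The Lie algebra `𝔨_x` of the stabilizer of `x` in `G`. -/
def isotropy (x : S.Q) : Submodule ℝ 𝔤 :=
  Submodule.span ℝ {ζ : 𝔤 | ∀ t : ℝ, S.expG (t • ζ) • x = x}

/-- The tangent space `T_x(G/K)`, realized as the orthogonal complement `𝔭_x` of `𝔨_x` in `𝔤`:
the element `ξ ∈ 𝔭_x` stands for the velocity at `t = 0` of `t ↦ exp(tξ)·x`. For `x = gK` this is
`Ad(g)𝔭`, with `ξ = Ad(g)ξ₀` standing for `g_*ξ₀`, and the inner product of `𝔤` restricts to the
metric of `G/K`. So `T(G/K)` is a subbundle of the trivial bundle with fibre `𝔤`, and vector fields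
along maps into `G/K` are `𝔤`-valued functions. Since `[𝔭, 𝔭] ⊆ 𝔨`, the Levi-Civita connection of
`G/K` is the orthogonal projection to `𝔭_x` of the derivative of `𝔤`-valued functions. -/
def tangent (x : S.Q) : Submodule ℝ 𝔤 := (S.isotropy x)ᗮ

/-- The Riemannian exponential map of `G/K`. -/
def Exp (x : S.Q) (ξ : 𝔤) : S.Q := S.expG ξ • x

section Maps

variable {F : Type*} [NormedAddCommGroup F] [NormedSpace ℝ F]
  {B : Type*} [TopologicalSpace B] {P : Type*} [TopologicalSpace P] [ChartedSpace B P]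

/-- A map from a manifold to `G/K` is smooth on a set if, near each point of it, it lifts to a
smooth map to `G`. -/
def IsSmoothOn (I : ModelWithCorners ℝ F B) (f : P → S.Q) (U : Set P) : Prop :=
  ∀ p ∈ U, ∃ V : Set P, IsOpen V ∧ p ∈ V ∧ ∃ h : P → S.G,
    ContMDiffOn I 𝓘(ℝ, 𝔸) ∞ (fun q => S.val (h q)) V ∧ ∀ q ∈ V, S.proj (h q) = f q

/-- `L` is the differential of `f : P → G/K` at `p`: for a local lift `h` of `f` to `G` one has
`dh(X) h(p)⁻¹ = L X + ζ` with `L X ∈ T_{f p}(G/K)` and `ζ ∈ 𝔨_{f p}`. -/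
def IsDifferentialAt (I : ModelWithCorners ℝ F B) (f : P → S.Q) (p : P)
    (L : TangentSpace I p →L[ℝ] 𝔤) : Prop :=
  ∃ (h : P → S.G) (h' : TangentSpace I p →L[ℝ] 𝔸),
    (∀ᶠ q in 𝓝 p, S.proj (h q) = f q) ∧
    HasMFDerivAt I 𝓘(ℝ, 𝔸) (fun q => S.val (h q)) p h' ∧
    ∀ X, L X ∈ S.tangent (f p) ∧
      ∃ ζ ∈ S.isotropy (f p), h' X = S.lie (L X + ζ) * S.val (h p)

open Classical in
/-- The differential of a map to `G/K` (zero if the map is not differentiable). -/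
def diff (I : ModelWithCorners ℝ F B) (f : P → S.Q) (p : P) : TangentSpace I p →L[ℝ] 𝔤 :=
  if h : ∃ L, S.IsDifferentialAt I f p L then h.choose else 0

end Maps

/-! ### Embedded submanifolds of `G/K` and their holonomy -/

/-- An embedded submanifold of `G/K`, with its tangent spaces. -/
structure Submfd where
  carrier : Set S.Q
  dim : ℕ
  tangent : S.Q → Submodule ℝ 𝔤
  exists_param : ∀ y ∈ carrier,
    ∃ (U : Set (EuclideanSpace ℝ (Fin dim))) (O : Set S.Q) (ψ : EuclideanSpace ℝ (Fin dim) → S.Q),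
      IsOpen U ∧ 0 ∈ U ∧ ψ 0 = y ∧ IsOpen O ∧ ψ '' U = carrier ∩ O ∧
      Topology.IsEmbedding (U.domRestrict ψ) ∧
      S.IsSmoothOn 𝓘(ℝ, EuclideanSpace ℝ (Fin dim)) ψ U ∧
      ∀ a ∈ U, Function.Injective (S.diff 𝓘(ℝ, EuclideanSpace ℝ (Fin dim)) ψ a) ∧
        LinearMap.range (S.diff 𝓘(ℝ, EuclideanSpace ℝ (Fin dim)) ψ a).toLinearMap = tangent (ψ a)

namespace Submfd

variable {S} (N : S.Submfd)

/-- `N` is totally geodesic: covariant derivatives in `G/K` of vector fields tangent to `N` along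
curves in `N` are tangent to `N`. -/
def IsTotallyGeodesic : Prop :=
  ∀ (c : ℝ → S.Q) (c' : ℝ →L[ℝ] 𝔤) (ξ : ℝ → 𝔤) (η ζ : 𝔤),
    (∀ᶠ t in 𝓝 (0 : ℝ), c t ∈ N.carrier ∧ ξ t ∈ N.tangent (c t)) →
    S.IsDifferentialAt 𝓘(ℝ, ℝ) c 0 c' →
    η ∈ S.tangent (c 0) → ζ ∈ S.isotropy (c 0) → HasDerivAt ξ (η + ζ) 0 →
    η ∈ N.tangent (c 0)

/-- `c` restricted to `[0,1]` is a smooth loop in `N` at `y` that is null-homotopic in `N`. -/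
def IsNullLoop (y : S.Q) (c : ℝ → S.Q) : Prop :=
  S.IsSmoothOn 𝓘(ℝ, ℝ) c univ ∧
  ∃ (hy : y ∈ N.carrier) (p : Path (⟨y, hy⟩ : N.carrier) ⟨y, hy⟩),
    (∀ t : unitInterval, (p t : S.Q) = c t) ∧ p.Homotopic (Path.refl _)

/-- `ξ` is a vector field tangent to `N` along `c|[0,1]` that is parallel for the Levi-Civita
connection of the induced metric of `N` (the tangential part of the derivative). -/
def IsParallelAlong (c : ℝ → S.Q) (ξ : ℝ → 𝔤) : Prop :=
  ∀ t ∈ Icc (0 : ℝ) 1, ξ t ∈ N.tangent (c t) ∧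
    ∃ ξ' : 𝔤, HasDerivWithinAt ξ ξ' (Icc 0 1) t ∧ ∀ w ∈ N.tangent (c t), ⟪ξ', w⟫ = 0

/-- The subspace `W` of `T_yN` is invariant under the restricted holonomy group of `N` at `y`. -/
def IsHolonomyInvariant (y : S.Q) (W : Submodule ℝ 𝔤) : Prop :=
  ∀ c ξ, N.IsNullLoop y c → N.IsParallelAlong c ξ → ξ 0 ∈ W → ξ 1 ∈ W

/-- The vector `w ∈ T_yN` is fixed by the restricted holonomy group of `N` at `y`. -/
def IsHolonomyFixed (y : S.Q) (w : 𝔤) : Prop :=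
  ∀ c ξ, N.IsNullLoop y c → N.IsParallelAlong c ξ → ξ 0 = w → ξ 1 = w

/-- The connected submanifold `N` through `y` is flat: its restricted holonomy is trivial. -/
def IsFlatAt (y : S.Q) : Prop := ∀ w ∈ N.tangent y, N.IsHolonomyFixed y w

end Submfd

/-! ### Immersed submanifolds of `G/K` and equifocality -/

section Immersed

variable (E : Type*) [NormedAddCommGroup E] [NormedSpace ℝ E]
  {M : Type*} [TopologicalSpace M] [ChartedSpace E M]

/-- `f : M → G/K` is an immersion. -/
def IsImmersion (f : M → S.Q) : Prop :=
  S.IsSmoothOn 𝓘(ℝ, E) f univ ∧ ∀ m, Function.Injective (S.diff 𝓘(ℝ, E) f m)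

/-- The tangent space of the immersed submanifold `f : M → G/K` at `m`. -/
def tangentOf (f : M → S.Q) (m : M) : Submodule ℝ 𝔤 :=
  LinearMap.range (S.diff 𝓘(ℝ, E) f m).toLinearMap

/-- The normal space of the immersed submanifold `f : M → G/K` at `m`. -/
def normalOf (f : M → S.Q) (m : M) : Submodule ℝ 𝔤 :=
  S.tangent (f m) ⊓ (S.tangentOf E f m)ᗮ

/-- `ν` is a normal vector field of `f : M → G/K`, parallel for the normal connection `∇^⊥`
(the normal part of the derivative). -/
def IsParallelNormal (f : M → S.Q) (ν : M → 𝔤) : Prop :=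
  ContMDiff 𝓘(ℝ, E) 𝓘(ℝ, 𝔤) ∞ ν ∧ (∀ m, ν m ∈ S.normalOf E f m) ∧
  ∀ m (X : TangentSpace 𝓘(ℝ, E) m), ∀ w ∈ S.normalOf E f m,
    @inner ℝ 𝔤 _ (mfderiv 𝓘(ℝ, E) 𝓘(ℝ, 𝔤) ν m X) w = 0

/-- The end-point map `η_ν : M → G/K` of a normal vector field `ν`. -/
def endPoint (f : M → S.Q) (ν : M → 𝔤) (m : M) : S.Q := S.Exp (f m) (ν m)

/-- The normal exponential map of `f`, precomposed with the surjective bundle map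
`M × 𝔤 → T^⊥M` given by orthogonal projection. -/
def normalExp (f : M → S.Q) (p : M × 𝔤) : S.Q :=
  haveI := FiniteDimensional.complete ℝ (S.normalOf E f p.1)
  S.Exp (f p.1) ((S.normalOf E f p.1).starProjection p.2)

/-- The multiplicity of the normal vector `v` at `m` as a focal normal of `f`, i.e. the dimension
`dim T^⊥M - rank` of the kernel of the differential of the normal exponential map at `v`
(where `dim T^⊥M = dim G/K`); `v` is a focal normal if it is positive. -/
def focalMultiplicity (f : M → S.Q) (m : M) (v : 𝔤) : ℕ :=
  finrank ℝ (S.tangent (f m)) - finrank ℝ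
    (LinearMap.range (S.diff (𝓘(ℝ, E).prod 𝓘(ℝ, 𝔤)) (S.normalExp E f) (m, v)).toLinearMap)

/-- `N` is a section of `f : M → G/K` through `f m`: a properly embedded complete connected totally
geodesic submanifold through `f m`, of dimension `codim M`, that meets all parallel submanifolds
`η_ν(M)` (`ν` parallel, `η_ν` an immersion) of `M` orthogonally. A closed subset of the compact
space `G/K` is properly embedded and complete. -/
def IsSection (f : M → S.Q) (m : M) (N : S.Submfd) : Prop :=
  f m ∈ N.carrier ∧ IsClosed N.carrier ∧ IsConnected N.carrier ∧ N.IsTotallyGeodesic ∧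
  N.dim = finrank ℝ (S.normalOf E f m) ∧
  ∀ ν, S.IsParallelNormal E f ν → S.IsImmersion E (S.endPoint f ν) →
    (∃ m', S.endPoint f ν m' ∈ N.carrier) ∧
    ∀ m', S.endPoint f ν m' ∈ N.carrier →
      N.tangent (S.endPoint f ν m') ⟂ S.tangentOf E (S.endPoint f ν) m'

/-- `f : M → G/K` is an equifocal submanifold (a submanifold with parallel focal structure).
A properly immersed submanifold of the compact space `G/K` is compact, hence complete. -/
structure IsEquifocal (f : M → S.Q) : Prop where
  immersion : S.IsImmersion E f
  proper : IsProperMap f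
  /-- The normal holonomy group is trivial: every normal vector extends to a parallel field. -/
  trivialNormalHolonomy : ∀ m, ∀ v ∈ S.normalOf E f m, ∃ ν, S.IsParallelNormal E f ν ∧ ν m = v
  parallelFocal : ∀ ν, S.IsParallelNormal E f ν → ∀ (k : ℕ) (m₀ : M), 1 ≤ k →
    S.focalMultiplicity E f m₀ (ν m₀) = k → ∀ m, S.focalMultiplicity E f m (ν m) = k
  sections : ∀ m, ∃ N, S.IsSection E f m N

/-- The `∇^⊥`-parallel subbundle `D` of the normal bundle of `f` with `D_{x₀} = W`, for `f` with
trivial normal holonomy and `W` a subspace of the normal space at `x₀`. -/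
def parallelSubbundle (f : M → S.Q) (x₀ : M) (W : Submodule ℝ 𝔤) (m : M) : Submodule ℝ 𝔤 :=
  Submodule.span ℝ {v | ∃ ν, S.IsParallelNormal E f ν ∧ ν x₀ ∈ W ∧ ν m = v}

/-- The section `N` of `f` through `f x₀` is not flat, and its tangent space at `f x₀` has the
non-trivial orthogonal decomposition `W 0 ⊕ W 1`, invariant under the restricted holonomy group of
`N`, where the de Rham factor of the universal covering of `N` corresponding to `W 0` has no
Euclidean part (the Euclidean part is tangent to the vectors fixed by the restricted holonomy). -/
structure IsSectionSplitting (f : M → S.Q) (x₀ : M) (N : S.Submfd)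
    (W : Fin 2 → Submodule ℝ 𝔤) : Prop where
  isSection : S.IsSection E f x₀ N
  not_flat : ¬ N.IsFlatAt (f x₀)
  ne_bot : ∀ i, W i ≠ ⊥
  orthogonal : W 0 ⟂ W 1
  sup_eq : W 0 ⊔ W 1 = N.tangent (f x₀)
  invariant : ∀ i, N.IsHolonomyInvariant (f x₀) (W i)
  no_euclidean_part : ∀ w ∈ W 0, N.IsHolonomyFixed (f x₀) w → w = 0

end Immersed

/-! ### The parallel transport map and the lifted submanifold -/

/-- The Hilbert space `H⁰([0,1], 𝔤)` of square integrable paths in `𝔤`. -/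
abbrev H0 (_S : CompactSymmetricSpace 𝔸 𝔤) : Type _ :=
  Lp 𝔤 2 (volume.restrict (Icc (0 : ℝ) 1))

/-- `g` is the `H¹`-path in `G` with `g(0) = e` and `g⁻¹ g' = u`. -/
def IsTransport (u : S.H0) (g : ℝ → S.G) : Prop :=
  ContinuousOn g (Icc 0 1) ∧
  ∀ t ∈ Icc (0 : ℝ) 1, S.val (g t) = 1 + ∫ s in (0 : ℝ)..t, S.val (g s) * S.lie (u s)

open Classical in
/-- The parallel transport map `φ : H⁰([0,1], 𝔤) → G`, `φ(u) = g_u(1)`. -/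
def φ (u : S.H0) : S.G := if h : ∃ g, S.IsTransport u g then h.choose 1 else 1

/-- The composition `π ∘ φ : H⁰([0,1], 𝔤) → G/K`. -/
def πφ (u : S.H0) : S.Q := S.proj (S.φ u)

/-- The differential of `π ∘ φ` at `u`. -/
def dπφ (u : S.H0) : S.H0 →L[ℝ] 𝔤 := S.diff 𝓘(ℝ, S.H0) S.πφ u

/-- The horizontal lift to `u` of a tangent vector `v` of `G/K` at `(π ∘ φ)(u)`. -/
def hlift (u : S.H0) (v : 𝔤) : S.H0 :=
  Classical.epsilon fun n => n ∈ (LinearMap.ker (S.dπφ u).toLinearMap)ᗮ ∧ S.dπφ u n = v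

section Lift

variable (E : Type*) [NormedAddCommGroup E] [NormedSpace ℝ E]
  {M : Type*} [TopologicalSpace M] [ChartedSpace E M]

/-- The lift `M̃ = (π ∘ φ)⁻¹(M)`; since `f : M → G/K` need not be injective, a point of the
immersed submanifold `M̃` of `H⁰([0,1], 𝔤)` is a point `u` with a point of `M` over `(π ∘ φ)(u)`. -/
def lift (f : M → S.Q) : Set (M × S.H0) := {p | f p.1 = S.πφ p.2}

/-- The tangent space `T_u M̃`, the preimage of the tangent space of `M`. -/
def tangentLift (f : M → S.Q) (p : M × S.H0) : Submodule ℝ S.H0 :=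
  (S.tangentOf E f p.1).comap (S.dπφ p.2).toLinearMap

/-- The normal space `T^⊥_u M̃`. -/
def normalLift (f : M → S.Q) (p : M × S.H0) : Submodule ℝ S.H0 := (S.tangentLift E f p)ᗮ

/-- `c` is a curve in `M̃` with `c(0) = p`, differentiable at `0` with velocity `X` in
`H⁰([0,1], 𝔤)`. -/
def IsLiftCurve (f : M → S.Q) (p : M × S.H0) (c : ℝ → M × S.H0) (X : S.H0) : Prop :=
  (∀ t, c t ∈ S.lift f) ∧ c 0 = p ∧
  MDifferentiableAt 𝓘(ℝ, ℝ) 𝓘(ℝ, E) (fun t => (c t).1) 0 ∧ HasDerivAt (fun t => (c t).2) X 0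

/-- `A` is the shape operator `Ã_n` of `M̃` at `p`: for every normal field `η` along a curve in `M̃`
with velocity `X` and `η(0) = n`, the tangential part of the derivative of `η` is `-A X`. -/
def IsShapeOperator (f : M → S.Q) (p : M × S.H0) (n : S.H0) (A : S.H0 →L[ℝ] S.H0) : Prop :=
  (∀ X ∈ S.tangentLift E f p, A X ∈ S.tangentLift E f p) ∧
  ∀ c X (η : ℝ → S.H0) η', S.IsLiftCurve E f p c X → (∀ t, η t ∈ S.normalLift E f (c t)) →
    η 0 = n → HasDerivAt η η' 0 → η' + A X ∈ S.normalLift E f p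

open Classical in
/-- The shape tensor `Ã` of `M̃`; only its values on tangent vectors matter. -/
def shape (f : M → S.Q) (p : M × S.H0) (n : S.H0) : S.H0 →L[ℝ] S.H0 :=
  if h : ∃ A, S.IsShapeOperator E f p n A then h.choose else 0

/-- The horizontal lift `D̃^N` to the normal bundle of `M̃` of a subbundle `D` of the normal bundle
of `M`. -/
def DNLift (f : M → S.Q) (D : M → Submodule ℝ 𝔤) (p : M × S.H0) : Submodule ℝ S.H0 :=
  S.normalLift E f p ⊓ (D p.1).comap (S.dπφ p.2).toLinearMap

/-- The intersection in `T_u M̃` of the kernels of the operators `Ã_n`, `n ∈ V`. -/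
def shapeKer (f : M → S.Q) (p : M × S.H0) (V : Submodule ℝ S.H0) : Submodule ℝ S.H0 :=
  S.tangentLift E f p ⊓ ⨅ n ∈ V, LinearMap.ker (S.shape E f p n).toLinearMap

/-- `D̃^T_0`, the intersection of the kernels of `Ã_n` over all normal vectors `n`. -/
def DT0 (f : M → S.Q) (p : M × S.H0) : Submodule ℝ S.H0 :=
  S.shapeKer E f p (S.normalLift E f p)

/-- `D̃^T_j`, for the decomposition `D 0 ⊕ D 1` of the normal bundle of `M`: the intersection of
the kernels of `Ã_n` over `n ∈ D̃^N_k`, `k ≠ j`, minus `D̃^T_0`. Here `j + 1` is the index in `Fin 2`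
other than `j`. -/
def DT (f : M → S.Q) (D : Fin 2 → M → Submodule ℝ 𝔤) (j : Fin 2) (p : M × S.H0) :
    Submodule ℝ S.H0 :=
  S.shapeKer E f p (S.DNLift E f (D (j + 1)) p) ⊓ (S.DT0 E f p)ᗮ

/-- The horizontal lift `ν^L` to `M̃` of a normal vector field `ν` of `M`. -/
def fieldLift (ν : M → 𝔤) (p : M × S.H0) : S.H0 := S.hlift p.2 (ν p.1)

end Lift

end CompactSymmetricSpace

end

/-!
At a point `u` of `M̃`, the horizontal lift of a normal vector `v` is the path `s ↦ Ad(g_u(s))⁻¹ v`.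
For a parallel normal field `ν` of `M` its derivative along a curve of `M̃` with velocity `X` is the
path `s ↦ Ad(g_u(s))⁻¹ (ν' - [η s, ν])`, where `η 0 = 0`. If `w` is a normal vector with
`[ν, w] = 0`, then invariance of the inner product turns the inner product of this derivative with
the lift of `w` into `⟪ν', w⟫`, which vanishes because `ν` is parallel. Part (i) is therefore the
commutation `[D^N_1, D^N_2] = 0`. Over `x₀` it says that the curvature `R(x, y) = -ad [x, y]` of the
totally geodesic section preserves the splitting, which follows from the holonomy of small loops; it
propagates along `M` because the norm of the bracket of two parallel normal fields is constant.

In part (ii), `X` is in the kernel of the shape operator of the lift, so the derivative is normal,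
that is, the horizontal lift of a normal vector `w`. At `s = 0` this reads `w = ν'`, and `ν'` is
tangent to `M`, so `w = 0`.
-/

noncomputable section

/-! ### Exponentials in a Banach algebra -/

lemma norm_pow_sub_pow_le {R : Type*} [NormedRing R] {a b : R} {C C' : ℝ} {n : ℕ}
    (ha : ∀ j ≤ n, ‖a ^ j‖ ≤ C) (hb : ∀ j ≤ n, ‖b ^ j‖ ≤ C') :
    ‖a ^ n - b ^ n‖ ≤ C * C' * (n * ‖a - b‖) := by
  have hC : 0 ≤ C := (norm_nonneg _).trans (ha 0 n.zero_le)
  suffices telescope : ∀ k m : ℕ, k + m ≤ n →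
      ‖(a ^ k - b ^ k) * b ^ m‖ ≤ C * C' * (k * ‖a - b‖) by
    simpa using telescope n 0 le_rfl
  intro k
  induction k with
  | zero => intro m _; simp
  | succ k ih =>
    intro m hm
    have split : (a ^ (k + 1) - b ^ (k + 1)) * b ^ m
        = a ^ k * (a - b) * b ^ m + (a ^ k - b ^ k) * b ^ (m + 1) := by
      rw [pow_succ, pow_succ, pow_succ' b m]
      noncomm_ring
    have hhead : ‖a ^ k * (a - b) * b ^ m‖ ≤ C * ‖a - b‖ * C' := by
      refine (norm_mul_le _ _).trans (mul_le_mul ((norm_mul_le _ _).trans ?_)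
        (hb m (by lia)) (norm_nonneg _) (by positivity))
      gcongr
      exact ha k (by lia)
    calc ‖(a ^ (k + 1) - b ^ (k + 1)) * b ^ m‖
        ≤ ‖a ^ k * (a - b) * b ^ m‖ + ‖(a ^ k - b ^ k) * b ^ (m + 1)‖ := split ▸ norm_add_le _ _
      _ ≤ C * ‖a - b‖ * C' + C * C' * (k * ‖a - b‖) := add_le_add hhead (ih (m + 1) (by lia))
      _ = C * C' * ((k + 1 : ℕ) * ‖a - b‖) := by push_cast; ring

lemma tendsto_natCast_smul_of_hasDerivAt {V : Type*} [NormedAddCommGroup V] [NormedSpace ℝ V]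
    {r : ℝ → V} {r' : V} (hr : HasDerivAt r r' 0) (hr0 : r 0 = 0) (s : ℝ) :
    Tendsto (fun n : ℕ => (n : ℝ) • r (s / n)) atTop (𝓝 (s • r')) := by
  have hrs : HasDerivAt (fun x => r (s * x)) (s • r') 0 :=
    hr.scomp_of_eq (0 : ℝ) (hasDerivAt_const_mul s) (mul_zero s).symm
  have h := hrs.tendsto_slope_zero_right.comp
    (tendsto_inv_atTop_nhdsGT_zero.comp tendsto_natCast_atTop_atTop)
  simpa [Function.comp_def, hr0, div_eq_mul_inv] using h

section BanachAlgebra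

variable {𝔸 : Type*} [NormedRing 𝔸] [NormedAlgebra ℝ 𝔸] [CompleteSpace 𝔸]

lemma exp_add_smul (x : 𝔸) (s t : ℝ) :
    NormedSpace.exp ((s + t) • x) = NormedSpace.exp (s • x) * NormedSpace.exp (t • x) := by
  let _ : NormedAlgebra ℚ 𝔸 := NormedAlgebra.restrictScalars ℚ ℝ 𝔸
  rw [add_smul]
  exact NormedSpace.exp_add_of_commute (((Commute.refl x).smul_left s).smul_right t)

lemma exp_pow_eq_exp_natCast_smul (x : 𝔸) (n : ℕ) :
    NormedSpace.exp x ^ n = NormedSpace.exp ((n : ℝ) • x) := by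
  let _ : NormedAlgebra ℚ 𝔸 := NormedAlgebra.restrictScalars ℚ ℝ 𝔸
  rw [Nat.cast_smul_eq_nsmul, NormedSpace.exp_nsmul]

lemma exp_conj_units (y : 𝔸ˣ) (x : 𝔸) :
    NormedSpace.exp (y * x * ↑y⁻¹ : 𝔸) = y * NormedSpace.exp x * ↑y⁻¹ := by
  let _ : NormedAlgebra ℚ 𝔸 := NormedAlgebra.restrictScalars ℚ ℝ 𝔸
  exact NormedSpace.exp_units_conj y x

lemma hasDerivAt_exp_smul_zero (x : 𝔸) :
    HasDerivAt (fun t : ℝ => NormedSpace.exp (t • x)) x 0 := by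
  simpa using hasDerivAt_exp_smul_const (𝕂 := ℝ) x 0

lemma continuous_exp_smul (x : 𝔸) : Continuous fun t : ℝ => NormedSpace.exp (t • x) :=
  continuous_iff_continuousAt.2 fun t => (hasDerivAt_exp_smul_const (𝕂 := ℝ) x t).continuousAt

lemma exp_div_smul_pow (x : 𝔸) (s : ℝ) {n : ℕ} (hn : n ≠ 0) :
    NormedSpace.exp ((s / n) • x) ^ n = NormedSpace.exp (s • x) := by
  rw [exp_pow_eq_exp_natCast_smul, smul_smul, mul_div_cancel₀ _ (Nat.cast_ne_zero.2 hn)]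

lemma exists_norm_exp_div_smul_pow_le (x : 𝔸) (s : ℝ) :
    ∃ C, ∀ n : ℕ, ∀ j ≤ n, ‖NormedSpace.exp ((s / n) • x) ^ j‖ ≤ C := by
  obtain ⟨C, hC⟩ : ∃ C, ∀ t ∈ Icc (0 : ℝ) 1, ‖NormedSpace.exp (t • s • x)‖ ≤ C :=
    isCompact_Icc.exists_bound_of_continuousOn (continuous_exp_smul (s • x)).continuousOn
  refine ⟨C, fun n j hj => ?_⟩
  rw [exp_pow_eq_exp_natCast_smul, smul_smul, mul_div_left_comm, mul_comm s, ← smul_smul]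
  exact hC _ ⟨by positivity, div_le_one_of_le₀ (mod_cast hj) n.cast_nonneg⟩

/- The telescoping estimate for `k(s/n)^n - exp((s/n)A)^n` costs a factor `n`, which the common
tangent vector of the two curves compensates. -/
lemma tendsto_pow_div_exp {k : ℝ → 𝔸} {A : 𝔸} (hk : HasDerivAt k A 0) (hk0 : k 0 = 1) {C : ℝ}
    (hC : ∀ (t : ℝ) (j : ℕ), ‖k t ^ j‖ ≤ C) (s : ℝ) :
    Tendsto (fun n : ℕ => k (s / n) ^ n) atTop (𝓝 (NormedSpace.exp (s • A))) := by
  obtain ⟨C', hC'⟩ := exists_norm_exp_div_smul_pow_le A s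
  have hdiff : Tendsto (fun n : ℕ =>
      (n : ℝ) • (k (s / n) - NormedSpace.exp ((s / n : ℝ) • A))) atTop (𝓝 0) := by
    simpa using tendsto_natCast_smul_of_hasDerivAt (hk.fun_sub (hasDerivAt_exp_smul_zero A))
      (by simp [hk0]) s
  have hpow : Tendsto (fun n : ℕ => k (s / n) ^ n - NormedSpace.exp ((s / n : ℝ) • A) ^ n)
      atTop (𝓝 0) := by
    refine squeeze_zero_norm (fun n => norm_pow_sub_pow_le (fun j _ => hC _ j) (hC' n)) ?_
    simpa [norm_smul] using hdiff.norm.const_mul (C * C')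
  have hexp : Tendsto (fun n : ℕ => NormedSpace.exp ((s / n : ℝ) • A) ^ n) atTop
      (𝓝 (NormedSpace.exp (s • A))) :=
    tendsto_const_nhds.congr' <| (eventually_ne_atTop 0).mono fun n hn =>
      (exp_div_smul_pow A s hn).symm
  simpa using hpow.add hexp

end BanachAlgebra

namespace CompactSymmetricSpace

variable {𝔸 𝔤 : Type*} [NormedRing 𝔸] [NormedAlgebra ℝ 𝔸] [FiniteDimensional ℝ 𝔸]
  [NormedAddCommGroup 𝔤] [InnerProductSpace ℝ 𝔤] [FiniteDimensional ℝ 𝔤]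

variable (S : CompactSymmetricSpace 𝔸 𝔤)

/-! ### The group `G` -/

lemma val_mul (a b : S.G) : S.val (a * b) = S.val a * S.val b := by simp [val]

lemma val_one : S.val 1 = 1 := by simp [val]

lemma val_inv_mul (a : S.G) : S.val a⁻¹ * S.val a = 1 := by rw [← val_mul]; simp [val_one]

lemma val_mul_inv (a : S.G) : S.val a * S.val a⁻¹ = 1 := by rw [← val_mul]; simp [val_one]

lemma val_pow (a : S.G) (n : ℕ) : S.val (a ^ n) = S.val a ^ n := by simp [val]

lemma ringInverse_val (a : S.G) : Ring.inverse (S.val a) = S.val a⁻¹ := by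
  simp [val]

lemma val_injective : Function.Injective S.val := fun _ _ h => Subtype.ext (Units.ext h)

lemma isEmbedding_val : Topology.IsEmbedding S.val := by
  exact Units.isOpenEmbedding_val.isEmbedding.comp Topology.IsEmbedding.subtypeVal

lemma continuous_val : Continuous S.val := S.isEmbedding_val.continuous

lemma isCompact_range_val : IsCompact (range S.val) := by
  have : CompactSpace S.G := isCompact_iff_compactSpace.1 S.isCompact_G
  exact isCompact_range S.continuous_val

lemma exists_norm_val_le : ∃ C, ∀ g, ‖S.val g‖ ≤ C := by
  obtain ⟨C, hC⟩ := S.isCompact_range_val.isBounded.exists_norm_le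
  exact ⟨C, fun g => hC _ ⟨g, rfl⟩⟩

lemma val_expG (ξ : 𝔤) : S.val (S.expG ξ) = NormedSpace.exp (S.lie ξ) :=
  (S.exists_exp ξ).choose_spec

lemma expG_zero : S.expG 0 = 1 := S.val_injective (by
  rw [val_expG, map_zero, NormedSpace.exp_zero, val_one])

lemma expG_neg (ξ : 𝔤) : S.expG (-ξ) = (S.expG ξ)⁻¹ := by
  refine eq_inv_of_mul_eq_one_left (S.val_injective ?_)
  simpa [val_mul, val_one, val_expG] using (exp_add_smul (S.lie ξ) (-1) 1).symm

/-- The inclusion `𝔤 → 𝔸` as a continuous linear map. -/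
def lieL : 𝔤 →L[ℝ] 𝔸 := LinearMap.toContinuousLinearMap S.lie

lemma exists_lieInv : ∃ p : 𝔸 →ₗ[ℝ] 𝔤, p ∘ₗ S.lie = LinearMap.id :=
  S.lie.exists_leftInverse_of_injective (LinearMap.ker_eq_bot.2 S.lie_injective)

@[simp] lemma lieL_apply (ξ : 𝔤) : S.lieL ξ = S.lie ξ := rfl

/-- A linear retraction of the inclusion `𝔤 → 𝔸`. -/
def lieInv : 𝔸 →L[ℝ] 𝔤 := LinearMap.toContinuousLinearMap S.exists_lieInv.choose

@[simp] lemma lieInv_lie (ξ : 𝔤) : S.lieInv (S.lie ξ) = ξ :=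
  LinearMap.congr_fun S.exists_lieInv.choose_spec ξ

lemma lie_lieInv {A : 𝔸} (h : A ∈ LinearMap.range S.lie) : S.lie (S.lieInv A) = A := by
  obtain ⟨ξ, rfl⟩ := h
  rw [lieInv_lie]

lemma isClosed_range_lie : IsClosed (LinearMap.range S.lie : Set 𝔸) :=
  Submodule.closed_of_finiteDimensional _

lemma exists_velocity {g : ℝ → S.G} {A : 𝔸} (hg : HasDerivAt (fun t => S.val (g t)) A 0) :
    ∃ ξ, A = S.lie ξ * S.val (g 0) := by
  obtain ⟨C, hC⟩ := S.exists_norm_val_le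
  have hk : HasDerivAt (fun t => S.val (g t * (g 0)⁻¹)) (A * S.val (g 0)⁻¹) 0 := by
    simpa only [val_mul] using hg.mul_const (S.val (g 0)⁻¹)
  have hexp (s : ℝ) : NormedSpace.exp (s • (A * S.val (g 0)⁻¹)) ∈ range S.val := by
    have hlim := tendsto_pow_div_exp hk (by rw [mul_inv_cancel, val_one])
      (fun t j => by rw [← val_pow]; exact hC _) s
    simp only [← val_pow] at hlim
    exact S.isCompact_range_val.isClosed.mem_of_tendsto hlim (.of_forall fun n => ⟨_, rfl⟩)
  obtain ⟨ξ, hξ⟩ := (S.mem_range_lie_iff _).2 hexp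
  exact ⟨ξ, by rw [hξ, mul_assoc, val_inv_mul, mul_one]⟩

lemma eq_of_forall_expG_smul_eq {ξ η : 𝔤} (h : ∀ t : ℝ, S.expG (t • ξ) = S.expG (t • η)) :
    ξ = η := by
  refine S.lie_injective ((hasDerivAt_exp_smul_zero (S.lie ξ)).unique ?_)
  refine (hasDerivAt_exp_smul_zero (S.lie η)).congr_of_eventuallyEq (.of_forall fun t => ?_)
  simpa only [val_expG, map_smul] using congrArg S.val (h t)

/-! ### The adjoint representation and the bracket -/

lemma conj_mem_range_lie (g : S.G) (ξ : 𝔤) :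
    S.val g * S.lie ξ * S.val g⁻¹ ∈ LinearMap.range S.lie := by
  refine (S.mem_range_lie_iff _).2 fun t => ⟨g * S.expG (t • ξ) * g⁻¹, ?_⟩
  change S.val _ = _
  rw [val_mul, val_mul, val_expG, map_smul]
  have := exp_conj_units (g : 𝔸ˣ) (t • S.lie ξ)
  rw [mul_smul_comm, smul_mul_assoc] at this
  exact this.symm

/-- The adjoint representation of `G` on `𝔤`. -/
def Ad (g : S.G) : 𝔤 →ₗ[ℝ] 𝔤 :=
  S.lieInv.toLinearMap ∘ₗ LinearMap.mulLeft ℝ (S.val g) ∘ₗ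
    LinearMap.mulRight ℝ (S.val g⁻¹) ∘ₗ S.lie

lemma Ad_apply (g : S.G) (ξ : 𝔤) : S.Ad g ξ = S.lieInv (S.val g * S.lie ξ * S.val g⁻¹) := by
  simp [Ad, mul_assoc]

lemma lie_Ad (g : S.G) (ξ : 𝔤) : S.lie (S.Ad g ξ) = S.val g * S.lie ξ * S.val g⁻¹ := by
  rw [Ad_apply, S.lie_lieInv (S.conj_mem_range_lie g ξ)]

lemma Ad_mul (a b : S.G) (ξ : 𝔤) : S.Ad (a * b) ξ = S.Ad a (S.Ad b ξ) := by
  apply S.lie_injective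
  simp only [lie_Ad, mul_inv_rev, val_mul, mul_assoc]

lemma Ad_one (ξ : 𝔤) : S.Ad 1 ξ = ξ := by
  apply S.lie_injective
  simp [lie_Ad, val_one]

@[simp] lemma Ad_inv_Ad (a : S.G) (ξ : 𝔤) : S.Ad a⁻¹ (S.Ad a ξ) = ξ := by
  rw [← Ad_mul, inv_mul_cancel, Ad_one]

@[simp] lemma Ad_Ad_inv (a : S.G) (ξ : 𝔤) : S.Ad a (S.Ad a⁻¹ ξ) = ξ := by
  rw [← Ad_mul, mul_inv_cancel, Ad_one]

lemma norm_Ad (g : S.G) (ξ : 𝔤) : ‖S.Ad g ξ‖ = ‖ξ‖ := S.norm_ad g ξ _ (S.lie_Ad g ξ)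

lemma inner_Ad (g : S.G) (ξ η : 𝔤) : ⟪S.Ad g ξ, S.Ad g η⟫ = ⟪ξ, η⟫ :=
  LinearIsometry.inner_map_map ⟨S.Ad g, S.norm_Ad g⟩ ξ η

lemma hasDerivAt_lie_Ad_expG (ξ η : 𝔤) :
    HasDerivAt (fun t : ℝ => S.lie (S.Ad (S.expG (t • ξ)) η))
      (S.lie ξ * S.lie η - S.lie η * S.lie ξ) 0 := by
  have hconj : HasDerivAt (fun t : ℝ => NormedSpace.exp (t • S.lie ξ) * S.lie η *
      NormedSpace.exp (t • -S.lie ξ)) (S.lie ξ * S.lie η - S.lie η * S.lie ξ) 0 := by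
    simpa [sub_eq_add_neg] using ((hasDerivAt_exp_smul_zero (S.lie ξ)).mul_const (S.lie η)).fun_mul
      (hasDerivAt_exp_smul_zero (-S.lie ξ))
  refine hconj.congr_of_eventuallyEq (.of_forall fun t => ?_)
  simp only [lie_Ad, ← expG_neg, val_expG, map_neg, map_smul, smul_neg]

lemma commutator_mem_range_lie (ξ η : 𝔤) :
    S.lie ξ * S.lie η - S.lie η * S.lie ξ ∈ LinearMap.range S.lie := by
  have h := (S.hasDerivAt_lie_Ad_expG ξ η).tendsto_slope
  refine S.isClosed_range_lie.mem_of_tendsto h (.of_forall fun t => ?_)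
  rw [slope_def_module]
  exact Submodule.smul_mem _ _ (Submodule.sub_mem _ ⟨_, rfl⟩ ⟨_, rfl⟩)

/-- The Lie bracket of `𝔤`. -/
def bracket : 𝔤 →L[ℝ] 𝔤 →L[ℝ] 𝔤 :=
  (LinearMap.mk₂ ℝ (fun ξ η => S.lieInv (S.lie ξ * S.lie η - S.lie η * S.lie ξ))
    (fun a b c => by rw [← map_add, map_add]; congr 1; noncomm_ring)
    (fun r a b => by
      rw [← map_smul, map_smul, smul_mul_assoc, mul_smul_comm, smul_sub])
    (fun a b c => by rw [← map_add, map_add]; congr 1; noncomm_ring)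
    (fun r a b => by
      rw [← map_smul, map_smul, smul_mul_assoc, mul_smul_comm, smul_sub])).toContinuousBilinearMap

lemma bracket_apply (ξ η : 𝔤) :
    S.bracket ξ η = S.lieInv (S.lie ξ * S.lie η - S.lie η * S.lie ξ) := rfl

lemma lie_bracket (ξ η : 𝔤) : S.lie (S.bracket ξ η) = S.lie ξ * S.lie η - S.lie η * S.lie ξ := by
  rw [bracket_apply, S.lie_lieInv (S.commutator_mem_range_lie ξ η)]

lemma bracket_swap (ξ η : 𝔤) : S.bracket ξ η = -S.bracket η ξ := by
  apply S.lie_injective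
  rw [map_neg, lie_bracket, lie_bracket, neg_sub]

lemma bracket_jacobi (ξ η ζ : 𝔤) :
    S.bracket ξ (S.bracket η ζ) = S.bracket (S.bracket ξ η) ζ + S.bracket η (S.bracket ξ ζ) := by
  apply S.lie_injective
  simp only [map_add, lie_bracket]
  noncomm_ring

lemma Ad_bracket (g : S.G) (ξ η : 𝔤) :
    S.Ad g (S.bracket ξ η) = S.bracket (S.Ad g ξ) (S.Ad g η) := by
  apply S.lie_injective
  simp only [lie_Ad, lie_bracket]
  have h : ∀ x y : 𝔸, S.val g * x * S.val g⁻¹ * (S.val g * y * S.val g⁻¹)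
      = S.val g * (x * y) * S.val g⁻¹ := fun x y => by
    calc _ = S.val g * x * (S.val g⁻¹ * S.val g) * y * S.val g⁻¹ := by noncomm_ring
      _ = _ := by rw [val_inv_mul]; noncomm_ring
  rw [h, h, mul_sub, sub_mul]

lemma hasDerivAt_Ad_expG (ξ η : 𝔤) :
    HasDerivAt (fun t : ℝ => S.Ad (S.expG (t • ξ)) η) (S.bracket ξ η) 0 := by
  refine (S.lieInv.hasFDerivAt.comp_hasDerivAt (0 : ℝ)
    (S.hasDerivAt_lie_Ad_expG ξ η)).congr_of_eventuallyEq (.of_forall fun t => ?_)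
  simp

lemma inner_bracket_left (ξ η ζ : 𝔤) : ⟪S.bracket ξ η, ζ⟫ = -⟪η, S.bracket ξ ζ⟫ := by
  have h := (S.hasDerivAt_Ad_expG ξ η).inner ℝ (S.hasDerivAt_Ad_expG ξ ζ)
  simp only [inner_Ad, zero_smul, expG_zero, Ad_one] at h
  have := h.unique (hasDerivAt_const (0 : ℝ) _)
  linarith

lemma expG_Ad (g : S.G) (ξ : 𝔤) : S.expG (S.Ad g ξ) = g * S.expG ξ * g⁻¹ := by
  apply S.val_injective
  rw [val_expG, lie_Ad, val_mul, val_mul, val_expG]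
  exact exp_conj_units (g : 𝔸ˣ) _

lemma θ_expG (ξ : 𝔤) : S.θ (S.expG ξ) = S.expG (S.dθ ξ) :=
  S.θ_exp ξ _ _ (S.val_expG ξ) (S.val_expG _)

@[simp] lemma dθ_dθ (ξ : 𝔤) : S.dθ (S.dθ ξ) = ξ := by
  refine S.eq_of_forall_expG_smul_eq fun t => ?_
  rw [← map_smul, ← map_smul, ← θ_expG, ← θ_expG, S.θ_involutive]

lemma dθ_Ad (a : S.G) (η : 𝔤) : S.dθ (S.Ad a η) = S.Ad (S.θ a) (S.dθ η) := by
  refine S.eq_of_forall_expG_smul_eq fun t => ?_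
  rw [← map_smul, ← map_smul, ← map_smul, ← map_smul, ← θ_expG, expG_Ad, expG_Ad, map_mul, map_mul,
    map_inv, θ_expG]

lemma dθ_bracket (ξ η : 𝔤) : S.dθ (S.bracket ξ η) = S.bracket (S.dθ ξ) (S.dθ η) := by
  have hleft := S.dθ.toContinuousLinearMap.hasFDerivAt.comp_hasDerivAt (0 : ℝ)
    (S.hasDerivAt_Ad_expG ξ η)
  refine hleft.unique ((S.hasDerivAt_Ad_expG (S.dθ ξ) (S.dθ η)).congr_of_eventuallyEq
    (.of_forall fun t => ?_))
  simp [dθ_Ad, θ_expG]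

lemma inner_dθ (ξ η : 𝔤) : ⟪S.dθ ξ, S.dθ η⟫ = ⟪ξ, η⟫ := S.dθ.inner_map_map ξ η

/-! ### The isotropy algebras and the tangent spaces of `G/K` -/

lemma continuous_expG_smul (ξ : 𝔤) : Continuous fun t : ℝ => S.expG (t • ξ) := by
  rw [S.isEmbedding_val.continuous_iff]
  refine (continuous_exp_smul (S.lie ξ)).congr fun t => ?_
  simp [val_expG]

lemma θ_eq_of_mem_K {k : S.G} (hk : k ∈ S.K) : S.θ k = k := by
  have : k ∈ (S.K : Set S.G) := hk
  rw [S.K_eq] at this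
  exact connectedComponentIn_subset {g : S.G | S.θ g = g} _ this

lemma forall_expG_mem_K_iff (ζ : 𝔤) : (∀ t : ℝ, S.expG (t • ζ) ∈ S.K) ↔ S.dθ ζ = ζ := by
  constructor
  · intro h
    refine S.eq_of_forall_expG_smul_eq fun t => ?_
    rw [← map_smul, ← θ_expG, S.θ_eq_of_mem_K (h t)]
  · intro h t
    change _ ∈ (S.K : Set S.G)
    rw [S.K_eq]
    have hpre : IsPreconnected (range fun t : ℝ => S.expG (t • ζ)) :=
      isPreconnected_range (S.continuous_expG_smul ζ)
    refine hpre.subset_connectedComponentIn ⟨0, by simp [expG_zero]⟩ ?_ ⟨t, rfl⟩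
    rintro _ ⟨s, rfl⟩
    change S.θ _ = _
    rw [θ_expG, map_smul, h]

lemma mem_isotropy_proj (g : S.G) (ζ : 𝔤) :
    ζ ∈ S.isotropy (S.proj g) ↔ S.dθ (S.Ad g⁻¹ ζ) = S.Ad g⁻¹ ζ := by
  let F : Submodule ℝ 𝔤 :=
    LinearMap.eqLocus (S.dθ.toLinearMap ∘ₗ S.Ad g⁻¹) (S.Ad g⁻¹)
  have hF : {ζ : 𝔤 | ∀ t : ℝ, S.expG (t • ζ) • S.proj g = S.proj g} = (F : Set 𝔤) := by
    ext ζ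
    change (∀ t : ℝ, S.expG (t • ζ) • S.proj g = S.proj g) ↔ S.dθ (S.Ad g⁻¹ ζ) = S.Ad g⁻¹ ζ
    rw [← forall_expG_mem_K_iff]
    refine forall_congr' fun t => ?_
    rw [← map_smul, expG_Ad, inv_inv, eq_comm]
    change (QuotientGroup.mk g = QuotientGroup.mk (S.expG (t • ζ) * g)) ↔ _
    rw [QuotientGroup.eq, mul_assoc]
  rw [isotropy, hF, Submodule.span_eq]
  rfl

lemma mem_tangent_proj (g : S.G) (ξ : 𝔤) :
    ξ ∈ S.tangent (S.proj g) ↔ S.dθ (S.Ad g⁻¹ ξ) = -S.Ad g⁻¹ ξ := by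
  rw [tangent, Submodule.mem_orthogonal]
  constructor
  · intro h
    set w := S.Ad g⁻¹ ξ with hw
    have hfixed : S.Ad g (w + S.dθ w) ∈ S.isotropy (S.proj g) := by
      rw [mem_isotropy_proj, Ad_inv_Ad, map_add, dθ_dθ, add_comm]
    have hleft : ⟪w + S.dθ w, w⟫ = 0 := by
      rw [← S.inner_Ad g, hw, Ad_Ad_inv, ← hw, h _ hfixed]
    have hright : ⟪w + S.dθ w, S.dθ w⟫ = 0 := by
      rw [← S.inner_dθ, map_add, dθ_dθ, add_comm, hleft]
    have hself : ⟪w + S.dθ w, w + S.dθ w⟫ = 0 := by rw [inner_add_right, hleft, hright, add_zero]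
    exact eq_neg_of_add_eq_zero_right (inner_self_eq_zero.1 hself)
  · intro h ζ hζ
    rw [mem_isotropy_proj] at hζ
    have hneg := S.inner_dθ (S.Ad g⁻¹ ζ) (S.Ad g⁻¹ ξ)
    rw [h, hζ, inner_neg_right, inner_Ad] at hneg
    linarith

lemma proj_surjective : Function.Surjective S.proj := QuotientGroup.mk_surjective

variable {S}

lemma bracket_mem_isotropy {x : S.Q} {ξ η : 𝔤} (hξ : ξ ∈ S.tangent x) (hη : η ∈ S.tangent x) :
    S.bracket ξ η ∈ S.isotropy x := by
  obtain ⟨g, rfl⟩ := S.proj_surjective x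
  rw [mem_tangent_proj] at *
  rw [mem_isotropy_proj, Ad_bracket, dθ_bracket, hξ, hη]
  simp

lemma bracket_isotropy_mem_tangent {x : S.Q} {ξ η : 𝔤} (hξ : ξ ∈ S.isotropy x)
    (hη : η ∈ S.tangent x) : S.bracket ξ η ∈ S.tangent x := by
  obtain ⟨g, rfl⟩ := S.proj_surjective x
  rw [mem_tangent_proj] at *
  rw [mem_isotropy_proj] at hξ
  rw [Ad_bracket, dθ_bracket, hξ, hη]
  simp

lemma bracket_isotropy_mem_isotropy {x : S.Q} {ξ η : 𝔤} (hξ : ξ ∈ S.isotropy x)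
    (hη : η ∈ S.isotropy x) : S.bracket ξ η ∈ S.isotropy x := by
  obtain ⟨g, rfl⟩ := S.proj_surjective x
  rw [mem_isotropy_proj] at *
  rw [Ad_bracket, dθ_bracket, hξ, hη]

lemma inner_isotropy_tangent {x : S.Q} {ζ ξ : 𝔤} (hζ : ζ ∈ S.isotropy x)
    (hξ : ξ ∈ S.tangent x) : ⟪ζ, ξ⟫ = 0 := Submodule.inner_right_of_mem_orthogonal hζ hξ

lemma inner_tangent_isotropy {x : S.Q} {ζ ξ : 𝔤} (hζ : ζ ∈ S.isotropy x)
    (hξ : ξ ∈ S.tangent x) : ⟪ξ, ζ⟫ = 0 := Submodule.inner_left_of_mem_orthogonal hζ hξ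

lemma eq_zero_of_mem_tangent_of_mem_isotropy {x : S.Q} {ξ : 𝔤} (h : ξ ∈ S.tangent x)
    (h' : ξ ∈ S.isotropy x) : ξ = 0 := inner_self_eq_zero.1 (inner_isotropy_tangent h' h)

variable (S)

/-- The orthogonal projection of `𝔤` to the tangent space of `G/K` at `gK`. -/
def tanProj (g : S.G) : 𝔤 →ₗ[ℝ] 𝔤 :=
  S.Ad g ∘ₗ ((1 / 2 : ℝ) • (LinearMap.id - S.dθ.toLinearMap)) ∘ₗ S.Ad g⁻¹

lemma tanProj_apply (g : S.G) (ξ : 𝔤) :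
    S.tanProj g ξ = S.Ad g ((1 / 2 : ℝ) • (S.Ad g⁻¹ ξ - S.dθ (S.Ad g⁻¹ ξ))) := rfl

lemma tanProj_mem (g : S.G) (ξ : 𝔤) : S.tanProj g ξ ∈ S.tangent (S.proj g) := by
  rw [mem_tangent_proj, tanProj_apply, Ad_inv_Ad, map_smul, map_sub, dθ_dθ, ← smul_neg, neg_sub]

lemma sub_tanProj_mem (g : S.G) (ξ : 𝔤) : ξ - S.tanProj g ξ ∈ S.isotropy (S.proj g) := by
  rw [mem_isotropy_proj, map_sub, tanProj_apply, Ad_inv_Ad, map_sub, map_smul, map_sub, dθ_dθ]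
  module

end CompactSymmetricSpace

/-! ### Curves through a point of a manifold -/

section ChartCurve

variable {F : Type*} [NormedAddCommGroup F] [NormedSpace ℝ F]
  {P : Type*} [TopologicalSpace P] [ChartedSpace F P]

/-- The curve through `p` that is the straight line with velocity `X` in the chart at `p`; it
reduces statements about differentials at `p` to statements about curves. -/
def chartCurve (p : P) (X : F) (t : ℝ) : P := (chartAt F p).symm (chartAt F p p + t • X)

lemma chartCurve_zero (p : P) (X : F) : chartCurve p X 0 = p := by
  simp [chartCurve]

lemma tendsto_chartCurve (p : P) (X : F) : Tendsto (chartCurve p X) (𝓝 0) (𝓝 p) := by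
  have hline : Tendsto (fun t : ℝ => chartAt F p p + t • X) (𝓝 0) (𝓝 (chartAt F p p)) := by
    have hcont : Continuous fun t : ℝ => chartAt F p p + t • X := by fun_prop
    simpa using hcont.tendsto 0
  have hsymm := (chartAt F p).continuousAt_symm (mem_chart_target F p)
  rw [ContinuousAt, (chartAt F p).left_inv (mem_chart_source F p)] at hsymm
  exact hsymm.comp hline

lemma hasDerivAt_comp_chartCurve {V : Type*} [NormedAddCommGroup V] [NormedSpace ℝ V]
    {f : P → V} {p : P} {f' : TangentSpace 𝓘(ℝ, F) p →L[ℝ] V}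
    (h : HasMFDerivAt 𝓘(ℝ, F) 𝓘(ℝ, V) f p f') (X : F) :
    HasDerivAt (fun t => f (chartCurve p X t)) (f' X) 0 := by
  let g : F →L[ℝ] V := f'
  have hchart := h.2
  rw [ModelWithCorners.range_eq_univ] at hchart
  have hfderiv : HasFDerivAt (fun y => f ((chartAt F p).symm y)) g (chartAt F p p) :=
    hasFDerivWithinAt_univ.1 hchart
  have hline : HasDerivAt (fun t : ℝ => chartAt F p p + t • X) X 0 := by
    simpa using ((hasDerivAt_id (0 : ℝ)).smul_const X).const_add (chartAt F p p)
  exact HasFDerivAt.comp_hasDerivAt (x := (0 : ℝ)) (f := fun t : ℝ => chartAt F p p + t • X)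
    (l := fun y => f ((chartAt F p).symm y)) (l' := g) (by simpa using hfderiv) hline

end ChartCurve

namespace CompactSymmetricSpace

variable {𝔸 𝔤 : Type*} [NormedRing 𝔸] [NormedAlgebra ℝ 𝔸] [FiniteDimensional ℝ 𝔸]
  [NormedAddCommGroup 𝔤] [InnerProductSpace ℝ 𝔤] [FiniteDimensional ℝ 𝔤]

variable {S : CompactSymmetricSpace 𝔸 𝔤}

/-! ### Differentials of maps to `G/K` -/

lemma hasDerivAt_val_inv {h : ℝ → S.G} {w : 𝔤} {t : ℝ}
    (hh : HasDerivAt (fun t => S.val (h t)) (S.lie w * S.val (h t)) t) :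
    HasDerivAt (fun t => S.val (h t)⁻¹) (-(S.val (h t)⁻¹ * S.lie w)) t := by
  have hinv := (hasFDerivAt_ringInverse (𝕜 := ℝ) (h t : 𝔸ˣ)).comp_hasDerivAt t hh
  have hfun : (Ring.inverse ∘ fun t => S.val (h t)) = fun t => S.val (h t)⁻¹ :=
    funext fun s => S.ringInverse_val (h s)
  have hderiv : -(S.val (h t)⁻¹ * (S.lie w * S.val (h t)) * S.val (h t)⁻¹)
      = -(S.val (h t)⁻¹ * S.lie w) := by
    rw [mul_assoc, mul_assoc, val_mul_inv, mul_one]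
  rw [hfun] at hinv
  rw [← hderiv]
  exact hinv

/- `exp(sκ)` is the limit of `k(s/n)^n`, and `θ` fixes these powers. -/
lemma dθ_eq_of_hasDerivAt_mem_K {k : ℝ → S.G} {κ : 𝔤}
    (hk : HasDerivAt (fun t => S.val (k t)) (S.lie κ) 0) (hk0 : k 0 = 1)
    (hkK : ∀ᶠ t in 𝓝 0, k t ∈ S.K) : S.dθ κ = κ := by
  obtain ⟨C, hC⟩ := S.exists_norm_val_le
  refine S.eq_of_forall_expG_smul_eq fun s => ?_
  have hlim : Tendsto (fun n : ℕ => k (s / n) ^ n) atTop (𝓝 (S.expG (s • κ))) := by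
    rw [S.isEmbedding_val.tendsto_nhds_iff, val_expG, map_smul]
    simpa only [Function.comp_def, val_pow] using tendsto_pow_div_exp hk (by rw [hk0, val_one])
      (fun t j => by rw [← val_pow]; exact hC _) s
  rw [← map_smul, ← θ_expG]
  refine tendsto_nhds_unique ((S.continuous_θ.tendsto _).comp hlim) (hlim.congr' ?_)
  filter_upwards [(tendsto_const_div_atTop_nhds_zero_nat s).eventually hkK] with n hn
  simp [S.θ_eq_of_mem_K hn]

lemma velocity_sub_mem_isotropy {h₁ h₂ : ℝ → S.G} {w₁ w₂ : 𝔤}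
    (hproj : ∀ᶠ t in 𝓝 (0 : ℝ), S.proj (h₁ t) = S.proj (h₂ t))
    (hd₁ : HasDerivAt (fun t => S.val (h₁ t)) (S.lie w₁ * S.val (h₁ 0)) 0)
    (hd₂ : HasDerivAt (fun t => S.val (h₂ t)) (S.lie w₂ * S.val (h₂ 0)) 0) :
    w₂ - w₁ ∈ S.isotropy (S.proj (h₁ 0)) := by
  rw [mem_isotropy_proj]
  let k : ℝ → S.G := fun t => (h₁ t)⁻¹ * h₂ t * ((h₁ 0)⁻¹ * h₂ 0)⁻¹
  refine dθ_eq_of_hasDerivAt_mem_K (k := k) ?_ (by simp [k]) ?_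
  · have hk := ((hasDerivAt_val_inv hd₁).fun_mul hd₂).mul_const (S.val ((h₁ 0)⁻¹ * h₂ 0)⁻¹)
    simp only [k, val_mul]
    convert hk using 1
    rw [lie_Ad, map_sub, mul_inv_rev, inv_inv, val_mul]
    calc S.val (h₁ 0)⁻¹ * (S.lie w₂ - S.lie w₁) * S.val (h₁ 0)
        = (-(S.val (h₁ 0)⁻¹ * S.lie w₁) + S.val (h₁ 0)⁻¹ * S.lie w₂) * 1 * S.val (h₁ 0) := by
          noncomm_ring
      _ = _ := by rw [← S.val_mul_inv (h₂ 0)]; noncomm_ring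
  · filter_upwards [hproj] with t ht
    exact S.K.mul_mem (QuotientGroup.eq.1 ht)
      (S.K.inv_mem (QuotientGroup.eq.1 hproj.self_of_nhds))

section

variable {F : Type*} [NormedAddCommGroup F] [NormedSpace ℝ F]
  {P : Type*} [TopologicalSpace P] [ChartedSpace F P]

lemma IsDifferentialAt.unique {f : P → S.Q} {p : P} {L L' : TangentSpace 𝓘(ℝ, F) p →L[ℝ] 𝔤}
    (h : S.IsDifferentialAt 𝓘(ℝ, F) f p L) (h' : S.IsDifferentialAt 𝓘(ℝ, F) f p L') : L = L' := by
  obtain ⟨a, a', ha, hda, hL⟩ := h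
  obtain ⟨b, b', hb, hdb, hL'⟩ := h'
  refine ContinuousLinearMap.ext fun (X : F) => ?_
  obtain ⟨hLX, ζ, hζ, ha'⟩ := hL X
  obtain ⟨hLX', ζ', hζ', hb'⟩ := hL' X
  have hca := hasDerivAt_comp_chartCurve hda X
  have hcb := hasDerivAt_comp_chartCurve hdb X
  have hproj : ∀ᶠ t in 𝓝 (0 : ℝ), S.proj (a (chartCurve p X t)) = S.proj (b (chartCurve p X t)) :=
    (tendsto_chartCurve p X).eventually (p := fun q => S.proj (a q) = S.proj (b q))
      (by filter_upwards [ha, hb] with q hqa hqb; rw [hqa, hqb])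
  rw [ha'] at hca
  rw [hb'] at hcb
  have hiso := velocity_sub_mem_isotropy (h₁ := fun t => a (chartCurve p X t))
    (h₂ := fun t => b (chartCurve p X t)) (w₁ := L X + ζ) (w₂ := L' X + ζ') hproj
    (by simpa [chartCurve_zero] using hca) (by simpa [chartCurve_zero] using hcb)
  simp only [chartCurve_zero, ha.self_of_nhds] at hiso
  have hsub : L X - L' X ∈ S.isotropy (f p) := by
    convert Submodule.sub_mem _ (Submodule.sub_mem _ hζ' hζ) hiso using 1
    abel
  exact sub_eq_zero.1
    (eq_zero_of_mem_tangent_of_mem_isotropy (Submodule.sub_mem _ hLX hLX') hsub)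

lemma IsDifferentialAt.diff_eq {f : P → S.Q} {p : P} {L : TangentSpace 𝓘(ℝ, F) p →L[ℝ] 𝔤}
    (h : S.IsDifferentialAt 𝓘(ℝ, F) f p L) : S.diff 𝓘(ℝ, F) f p = L := by
  have hex : ∃ L, S.IsDifferentialAt 𝓘(ℝ, F) f p L := ⟨L, h⟩
  rw [diff, dif_pos hex]
  exact hex.choose_spec.unique h

variable (S) in
/-- The differential of `π ∘ h`, where `h' : F →L[ℝ] 𝔸` is the differential of a map `h` to `G` at
a point with value `a`. -/
def diffOfLift (a : S.G) (h' : F →L[ℝ] 𝔸) : F →L[ℝ] 𝔤 :=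
  (LinearMap.toContinuousLinearMap (S.tanProj a)) ∘L S.lieInv ∘L
    ((ContinuousLinearMap.mul ℝ 𝔸).flip (S.val a⁻¹)) ∘L h'

lemma diffOfLift_apply (a : S.G) (h' : F →L[ℝ] 𝔸) (X : F) :
    S.diffOfLift a h' X = S.tanProj a (S.lieInv (h' X * S.val a⁻¹)) := rfl

lemma lie_lieInv_of_hasMFDerivAt {h : P → S.G} {p : P} {h' : TangentSpace 𝓘(ℝ, F) p →L[ℝ] 𝔸}
    (hh : HasMFDerivAt 𝓘(ℝ, F) 𝓘(ℝ, 𝔸) (fun q => S.val (h q)) p h')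
    (X : TangentSpace 𝓘(ℝ, F) p) :
    S.lie (S.lieInv (h' X * S.val (h p)⁻¹)) * S.val (h p) = h' X := by
  let Y : F := X
  obtain ⟨ξ, hξ⟩ := S.exists_velocity (g := fun t => h (chartCurve p Y t))
    (hasDerivAt_comp_chartCurve hh Y)
  rw [chartCurve_zero] at hξ
  have hX : h' X = S.lie ξ * S.val (h p) := hξ
  rw [hX, mul_assoc, val_mul_inv, mul_one, lieInv_lie]

lemma isDifferentialAt_of_lift {f : P → S.Q} {h : P → S.G} {p : P}
    {h' : TangentSpace 𝓘(ℝ, F) p →L[ℝ] 𝔸}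
    (hh : HasMFDerivAt 𝓘(ℝ, F) 𝓘(ℝ, 𝔸) (fun q => S.val (h q)) p h')
    (hf : ∀ᶠ q in 𝓝 p, S.proj (h q) = f q) :
    S.IsDifferentialAt 𝓘(ℝ, F) f p (S.diffOfLift (F := F) (h p) h') := by
  refine ⟨h, h', hf, hh, fun X => ?_⟩
  let ξ := S.lieInv (h' X * S.val (h p)⁻¹)
  rw [← hf.self_of_nhds]
  refine ⟨S.tanProj_mem (h p) ξ, ξ - S.tanProj (h p) ξ, S.sub_tanProj_mem (h p) ξ, ?_⟩
  refine (lie_lieInv_of_hasMFDerivAt hh X).symm.trans ?_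
  congr 2
  exact (add_sub_cancel _ _).symm

lemma IsSmoothOn.isDifferentialAt {f : P → S.Q} {U : Set P} (hf : S.IsSmoothOn 𝓘(ℝ, F) f U)
    {p : P} (hp : p ∈ U) : S.IsDifferentialAt 𝓘(ℝ, F) f p (S.diff 𝓘(ℝ, F) f p) := by
  obtain ⟨V, hV, hpV, h, hh, hproj⟩ := hf p hp
  have hdiff : MDifferentiableAt 𝓘(ℝ, F) 𝓘(ℝ, 𝔸) (fun q => S.val (h q)) p :=
    ((hh p hpV).contMDiffAt (hV.mem_nhds hpV)).mdifferentiableAt (by simp)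
  have hlift : ∀ᶠ q in 𝓝 p, S.proj (h q) = f q := by
    filter_upwards [hV.mem_nhds hpV] with q hq using hproj q hq
  have hdiffAt := isDifferentialAt_of_lift hdiff.hasMFDerivAt hlift
  rw [hdiffAt.diff_eq]
  exact hdiffAt

lemma IsDifferentialAt.mem_tangent {f : P → S.Q} {p : P} {L : TangentSpace 𝓘(ℝ, F) p →L[ℝ] 𝔤}
    (h : S.IsDifferentialAt 𝓘(ℝ, F) f p L) (X : TangentSpace 𝓘(ℝ, F) p) :
    L X ∈ S.tangent (f p) := by
  obtain ⟨_, _, _, _, hL⟩ := h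
  exact (hL X).1

lemma IsDifferentialAt.comp_curve {f : P → S.Q} {c : ℝ → P}
    {L : TangentSpace 𝓘(ℝ, F) (c 0) →L[ℝ] 𝔤} (h : S.IsDifferentialAt 𝓘(ℝ, F) f (c 0) L)
    {c' : TangentSpace 𝓘(ℝ, ℝ) (0 : ℝ) →L[ℝ] TangentSpace 𝓘(ℝ, F) (c 0)}
    (hc : HasMFDerivAt 𝓘(ℝ, ℝ) 𝓘(ℝ, F) c 0 c') :
    S.IsDifferentialAt 𝓘(ℝ, ℝ) (fun t => f (c t)) 0 (L ∘L c') := by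
  obtain ⟨a, a', ha, hda, hL⟩ := h
  exact ⟨fun t => a (c t), a' ∘L c', hc.continuousAt.eventually ha,
    HasMFDerivAt.comp (g := fun q => S.val (a q)) (0 : ℝ) hda hc, fun X => hL (c' X)⟩

end

lemma hasDerivAt_Ad_inv {h : ℝ → S.G} {w : 𝔤} {ξ : ℝ → 𝔤} {ξ' : 𝔤}
    (hh : HasDerivAt (fun t => S.val (h t)) (S.lie w * S.val (h 0)) 0) (hξ : HasDerivAt ξ ξ' 0) :
    HasDerivAt (fun t => S.Ad (h t)⁻¹ (ξ t)) (S.Ad (h 0)⁻¹ (ξ' - S.bracket w (ξ 0))) 0 := by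
  have hlie : HasDerivAt (fun t => S.lie (ξ t)) (S.lie ξ') 0 :=
    S.lieL.hasFDerivAt.comp_hasDerivAt (0 : ℝ) hξ
  have hconj := S.lieInv.hasFDerivAt.comp_hasDerivAt (0 : ℝ)
    (((hasDerivAt_val_inv hh).fun_mul hlie).fun_mul hh)
  have hfun : (fun t => S.Ad (h t)⁻¹ (ξ t)) =
      S.lieInv ∘ fun t => S.val (h t)⁻¹ * S.lie (ξ t) * S.val (h t) := by
    ext t
    simp [Ad_apply]
  rw [hfun]
  convert hconj using 1
  rw [Ad_apply, inv_inv, map_sub, lie_bracket]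
  congr 1
  noncomm_ring

lemma IsDifferentialAt.exists_hasDerivAt {c : ℝ → S.Q} {c' : ℝ →L[ℝ] 𝔤}
    (hc : S.IsDifferentialAt 𝓘(ℝ, ℝ) c 0 c') :
    ∃ (a : ℝ → S.G) (ζ : 𝔤), (∀ᶠ t in 𝓝 (0 : ℝ), S.proj (a t) = c t) ∧ ζ ∈ S.isotropy (c 0) ∧
      HasDerivAt (fun t => S.val (a t)) (S.lie (c' 1 + ζ) * S.val (a 0)) 0 := by
  obtain ⟨a, a', ha, hda, hL⟩ := hc
  obtain ⟨-, ζ, hζ, ha'⟩ := hL (1 : ℝ)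
  let b : ℝ →L[ℝ] 𝔸 := a'
  have hdb : HasFDerivAt (fun t => S.val (a t)) b 0 := hasMFDerivAt_iff_hasFDerivAt.1 hda
  have hb : b 1 = S.lie (c' 1 + ζ) * S.val (a 0) := ha'
  exact ⟨a, ζ, ha, hζ, hb ▸ hdb.hasDerivAt⟩

lemma dθ_Ad_inv_deriv {a : ℝ → S.G} {w : 𝔤} {ξ : ℝ → 𝔤} {ξ' : 𝔤} {ε : ℝ}
    (ha : HasDerivAt (fun t => S.val (a t)) (S.lie w * S.val (a 0)) 0) (hξ : HasDerivAt ξ ξ' 0)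
    (hε : ∀ᶠ t in 𝓝 (0 : ℝ), S.dθ (S.Ad (a t)⁻¹ (ξ t)) = ε • S.Ad (a t)⁻¹ (ξ t)) :
    S.dθ (S.Ad (a 0)⁻¹ (ξ' - S.bracket w (ξ 0)))
      = ε • S.Ad (a 0)⁻¹ (ξ' - S.bracket w (ξ 0)) := by
  have hAd := hasDerivAt_Ad_inv ha hξ
  have hdθ : HasDerivAt (fun t => S.dθ (S.Ad (a t)⁻¹ (ξ t)))
      (S.dθ (S.Ad (a 0)⁻¹ (ξ' - S.bracket w (ξ 0)))) 0 :=
    S.dθ.toContinuousLinearMap.hasFDerivAt.comp_hasDerivAt (0 : ℝ) hAd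
  exact hdθ.unique ((hAd.fun_const_smul ε).congr_of_eventuallyEq hε)

lemma deriv_sub_bracket_mem_tangent {c : ℝ → S.Q} {c' : ℝ →L[ℝ] 𝔤}
    (hc : S.IsDifferentialAt 𝓘(ℝ, ℝ) c 0 c') {ξ : ℝ → 𝔤} {ξ' : 𝔤}
    (hξ : ∀ᶠ t in 𝓝 (0 : ℝ), ξ t ∈ S.tangent (c t)) (hd : HasDerivAt ξ ξ' 0) :
    ξ' - S.bracket (c' 1) (ξ 0) ∈ S.tangent (c 0) := by
  obtain ⟨a, ζ, ha, hζ, hda⟩ := hc.exists_hasDerivAt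
  have hlift : ξ' - S.bracket (c' 1 + ζ) (ξ 0) ∈ S.tangent (c 0) := by
    rw [← ha.self_of_nhds, mem_tangent_proj, ← neg_one_smul ℝ]
    refine dθ_Ad_inv_deriv hda hd ?_
    filter_upwards [ha, hξ] with t hat hξt
    rwa [← hat, mem_tangent_proj, ← neg_one_smul ℝ] at hξt
  convert Submodule.add_mem _ hlift (bracket_isotropy_mem_tangent hζ hξ.self_of_nhds) using 1
  rw [map_add, add_apply]
  abel

lemma deriv_sub_bracket_mem_isotropy {c : ℝ → S.Q} {c' : ℝ →L[ℝ] 𝔤}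
    (hc : S.IsDifferentialAt 𝓘(ℝ, ℝ) c 0 c') {ξ : ℝ → 𝔤} {ξ' : 𝔤}
    (hξ : ∀ᶠ t in 𝓝 (0 : ℝ), ξ t ∈ S.isotropy (c t)) (hd : HasDerivAt ξ ξ' 0) :
    ξ' - S.bracket (c' 1) (ξ 0) ∈ S.isotropy (c 0) := by
  obtain ⟨a, ζ, ha, hζ, hda⟩ := hc.exists_hasDerivAt
  have hlift : ξ' - S.bracket (c' 1 + ζ) (ξ 0) ∈ S.isotropy (c 0) := by
    rw [← ha.self_of_nhds, mem_isotropy_proj]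
    refine (dθ_Ad_inv_deriv (ε := 1) hda hd ?_).trans (one_smul ℝ _)
    filter_upwards [ha, hξ] with t hat hξt
    rw [← hat, mem_isotropy_proj] at hξt
    rw [hξt, one_smul]
  convert Submodule.add_mem _ hlift (bracket_isotropy_mem_isotropy hζ hξ.self_of_nhds) using 1
  rw [map_add, add_apply]
  abel

end CompactSymmetricSpace

/-! ### Smooth maps from a vector space to `G/K` -/

lemma tendsto_add_smul_nhds_zero {F : Type*} [AddCommGroup F] [Module ℝ F] [TopologicalSpace F]
    [ContinuousAdd F] [ContinuousSMul ℝ F] (x a : F) :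
    Tendsto (fun t : ℝ => x + t • a) (𝓝 0) (𝓝 x) := by
  have hcont : Continuous fun t : ℝ => x + t • a := by fun_prop
  simpa using hcont.tendsto 0

namespace CompactSymmetricSpace

variable {𝔸 𝔤 : Type*} [NormedRing 𝔸] [NormedAlgebra ℝ 𝔸] [FiniteDimensional ℝ 𝔸]
  [NormedAddCommGroup 𝔤] [InnerProductSpace ℝ 𝔤] [FiniteDimensional ℝ 𝔤]

variable {S : CompactSymmetricSpace 𝔸 𝔤}

section VectorSpace

variable {F : Type*} [NormedAddCommGroup F] [NormedSpace ℝ F]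

lemma contDiffAt_val_inv {n : WithTop ℕ∞} {h : F → S.G} {x : F}
    (hh : ContDiffAt ℝ n (fun q => S.val (h q)) x) :
    ContDiffAt ℝ n (fun q => S.val (h q)⁻¹) x :=
  ((contDiffAt_ringInverse ℝ (n := n) (h x : 𝔸ˣ)).comp x (f := fun q => S.val (h q))
    hh).congr_of_eventuallyEq (.of_forall fun q => (S.ringInverse_val (h q)).symm)

lemma contDiffAt_Ad {n : WithTop ℕ∞} {h : F → S.G} {ξ : F → 𝔤} {x : F}
    (hh : ContDiffAt ℝ n (fun q => S.val (h q)) x) (hξ : ContDiffAt ℝ n ξ x) :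
    ContDiffAt ℝ n (fun q => S.Ad (h q) (ξ q)) x := by
  simp only [Ad_apply]
  exact S.lieInv.contDiff.contDiffAt.comp x
    ((hh.mul (S.lieL.contDiff.contDiffAt.comp x hξ)).mul (contDiffAt_val_inv hh))

lemma contDiffAt_tanProj {n : WithTop ℕ∞} {h : F → S.G} {ξ : F → 𝔤} {x : F}
    (hh : ContDiffAt ℝ n (fun q => S.val (h q)) x) (hξ : ContDiffAt ℝ n ξ x) :
    ContDiffAt ℝ n (fun q => S.tanProj (h q) (ξ q)) x := by
  have hAd := contDiffAt_Ad (contDiffAt_val_inv hh) hξ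
  have hdθ := S.dθ.toContinuousLinearMap.contDiff.contDiffAt.comp x hAd
  exact contDiffAt_Ad hh ((hAd.sub hdθ).const_smul (1 / 2 : ℝ))

variable (S) in
/-- The right-invariant Maurer-Cartan form `dh h⁻¹` of a map `h` from a vector space to `G`. -/
def maurerCartan (h : F → S.G) (q : F) : F →L[ℝ] 𝔤 :=
  S.lieInv ∘L (ContinuousLinearMap.mul ℝ 𝔸).flip (S.val (h q)⁻¹) ∘L
    fderiv ℝ (fun q => S.val (h q)) q

lemma contDiffAt_maurerCartan {n : WithTop ℕ∞} {h : F → S.G} {x : F}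
    (hh : ContDiffAt ℝ (n + 1) (fun q => S.val (h q)) x) :
    ContDiffAt ℝ n (S.maurerCartan h) x := by
  have hflip : ContDiffAt ℝ n (fun q => (ContinuousLinearMap.mul ℝ 𝔸).flip (S.val (h q)⁻¹)) x :=
    ((ContinuousLinearMap.mul ℝ 𝔸).flip.contDiff.contDiffAt).comp x
      (contDiffAt_val_inv (hh.of_le le_self_add))
  exact contDiffAt_const.clm_comp (hflip.clm_comp (hh.fderiv_right le_rfl))

lemma lie_maurerCartan {h : F → S.G} {q : F} (hh : DifferentiableAt ℝ (fun q => S.val (h q)) q)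
    (c : F) :
    S.lie (S.maurerCartan h q c) * S.val (h q) = fderiv ℝ (fun q => S.val (h q)) q c :=
  lie_lieInv_of_hasMFDerivAt (hasMFDerivAt_iff_hasFDerivAt.2 hh.hasFDerivAt) c

lemma fderiv_fderiv_val {h : F → S.G} {x : F} (hh : ContDiffAt ℝ 2 (fun q => S.val (h q)) x)
    (d c : F) :
    fderiv ℝ (fderiv ℝ fun q => S.val (h q)) x d c
      = S.lie (fderiv ℝ (S.maurerCartan h) x d c) * S.val (h x)
        + S.lie (S.maurerCartan h x c) * (S.lie (S.maurerCartan h x d) * S.val (h x)) := by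
  have hone : ContDiffAt ℝ (1 + 1) (fun q => S.val (h q)) x := by rwa [one_add_one_eq_two]
  have hval := hh.differentiableAt two_ne_zero
  have hfderiv : HasFDerivAt (fun q => fderiv ℝ (fun q => S.val (h q)) q c)
      ((fderiv ℝ (fderiv ℝ fun q => S.val (h q)) x).flip c) x := by
    simpa using ((hone.fderiv_right le_rfl).differentiableAt one_ne_zero).hasFDerivAt.clm_apply
      (hasFDerivAt_const c x)
  have hmc : HasFDerivAt (fun q => S.maurerCartan h q c) ((fderiv ℝ (S.maurerCartan h) x).flip c)
      x := by
    simpa using ((contDiffAt_maurerCartan hone).differentiableAt one_ne_zero).hasFDerivAt.clm_apply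
      (hasFDerivAt_const c x)
  have hmul := ((S.lieL.hasFDerivAt.comp x hmc).mul' hval.hasFDerivAt).congr_of_eventuallyEq
    (f₁ := fun q => fderiv ℝ (fun q => S.val (h q)) q c)
    ((hh.eventually (by simp)).mono fun q hq =>
      (lie_maurerCartan (hq.differentiableAt two_ne_zero) c).symm)
  have hd := congrArg (fun T => T d) (hfderiv.unique hmul)
  simp only [ContinuousLinearMap.flip_apply] at hd
  rw [hd]
  simp [lie_maurerCartan hval d, add_comm]

lemma maurerCartan_equation {h : F → S.G} {x : F} (hh : ContDiffAt ℝ 2 (fun q => S.val (h q)) x)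
    (a b : F) :
    fderiv ℝ (S.maurerCartan h) x a b - fderiv ℝ (S.maurerCartan h) x b a
      = S.bracket (S.maurerCartan h x a) (S.maurerCartan h x b) := by
  have hsymm := hh.isSymmSndFDerivAt (by simp) a b
  rw [fderiv_fderiv_val hh, fderiv_fderiv_val hh] at hsymm
  have hlie := congrArg (fun y => y * S.val (h x)⁻¹) hsymm
  simp only [add_mul, mul_assoc, val_mul_inv, mul_one] at hlie
  apply S.lie_injective
  rw [map_sub, lie_bracket, sub_eq_sub_iff_add_eq_add, hlie, add_comm]

variable (S) in
/-- The differential of a map from a vector space to `G/K`; this is `diff` with the tangent spaces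
of the vector space replaced by the vector space itself. -/
def vdiff (ψ : F → S.Q) (x : F) : F →L[ℝ] 𝔤 := S.diff 𝓘(ℝ, F) ψ x

variable {ψ : F → S.Q} {U : Set F}

lemma isDifferentialAt_line (hψ : S.IsSmoothOn 𝓘(ℝ, F) ψ U) {x : F} (hx : x ∈ U) (a : F) :
    ∃ c' : ℝ →L[ℝ] 𝔤, c' 1 = S.vdiff ψ x a ∧
      S.IsDifferentialAt 𝓘(ℝ, ℝ) (fun t : ℝ => ψ (x + t • a)) 0 c' := by
  have hx0 : x + (0 : ℝ) • a = x := by simp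
  have hdiff := hψ.isDifferentialAt (p := x + (0 : ℝ) • a) (by rwa [hx0])
  have hline :
      HasFDerivAt (fun t : ℝ => x + t • a) (ContinuousLinearMap.toSpanSingleton ℝ a) 0 := by
    simpa using (((hasDerivAt_id (0 : ℝ)).smul_const a).const_add x).hasFDerivAt
  refine ⟨_, ?_, IsDifferentialAt.comp_curve (c := fun t : ℝ => x + t • a) hdiff
    (hasMFDerivAt_iff_hasFDerivAt.2 hline)⟩
  change S.vdiff ψ (x + (0 : ℝ) • a) ((1 : ℝ) • a) = _
  rw [hx0, one_smul]

lemma vdiff_mem_tangent (hψ : S.IsSmoothOn 𝓘(ℝ, F) ψ U) {x : F} (hx : x ∈ U) (a : F) :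
    S.vdiff ψ x a ∈ S.tangent (ψ x) := (hψ.isDifferentialAt hx).mem_tangent a

lemma fderiv_sub_bracket_mem_tangent (hψ : S.IsSmoothOn 𝓘(ℝ, F) ψ U) {x : F} (hx : x ∈ U)
    {Ξ : F → 𝔤} {Ξ' : F →L[ℝ] 𝔤} (hd : HasFDerivAt Ξ Ξ' x)
    (hΞ : ∀ᶠ y in 𝓝 x, Ξ y ∈ S.tangent (ψ y)) (a : F) :
    Ξ' a - S.bracket (S.vdiff ψ x a) (Ξ x) ∈ S.tangent (ψ x) := by
  obtain ⟨c', hc1, hc⟩ := isDifferentialAt_line hψ hx a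
  simpa [hc1] using deriv_sub_bracket_mem_tangent hc (ξ := fun t => Ξ (x + t • a))
    ((tendsto_add_smul_nhds_zero x a).eventually hΞ) (hd.hasLineDerivAt a)

lemma fderiv_sub_bracket_mem_isotropy (hψ : S.IsSmoothOn 𝓘(ℝ, F) ψ U) {x : F} (hx : x ∈ U)
    {Ξ : F → 𝔤} {Ξ' : F →L[ℝ] 𝔤} (hd : HasFDerivAt Ξ Ξ' x)
    (hΞ : ∀ᶠ y in 𝓝 x, Ξ y ∈ S.isotropy (ψ y)) (a : F) :
    Ξ' a - S.bracket (S.vdiff ψ x a) (Ξ x) ∈ S.isotropy (ψ x) := by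
  obtain ⟨c', hc1, hc⟩ := isDifferentialAt_line hψ hx a
  simpa [hc1] using deriv_sub_bracket_mem_isotropy hc (ξ := fun t => Ξ (x + t • a))
    ((tendsto_add_smul_nhds_zero x a).eventually hΞ) (hd.hasLineDerivAt a)

lemma vdiff_eq_tanProj_maurerCartan {h : F → S.G} {q : F}
    (hh : DifferentiableAt ℝ (fun q => S.val (h q)) q) (hp : ∀ᶠ y in 𝓝 q, S.proj (h y) = ψ y)
    (c : F) : S.vdiff ψ q c = S.tanProj (h q) (S.maurerCartan h q c) := by
  rw [vdiff, (isDifferentialAt_of_lift (hasMFDerivAt_iff_hasFDerivAt.2 hh.hasFDerivAt) hp).diff_eq]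
  rfl

variable [FiniteDimensional ℝ F]

lemma contDiffOn_vdiff (hψ : S.IsSmoothOn 𝓘(ℝ, F) ψ U) : ContDiffOn ℝ ∞ (S.vdiff ψ) U := by
  rw [contDiffOn_clm_apply]
  intro b x hx
  obtain ⟨V, hV, hxV, h, hh, hp⟩ := hψ x hx
  rw [contMDiffOn_iff_contDiffOn] at hh
  have hval : ∀ q ∈ V, ContDiffAt ℝ ∞ (fun q => S.val (h q)) q := fun q hq =>
    (hh q hq).contDiffAt (hV.mem_nhds hq)
  have hmc := (contDiffAt_maurerCartan (n := ∞) (hval x hxV)).clm_apply (contDiffAt_const (c := b))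
  refine ((contDiffAt_tanProj (hval x hxV) hmc).congr_of_eventuallyEq ?_).contDiffWithinAt
  filter_upwards [hV.mem_nhds hxV] with q hq
  exact vdiff_eq_tanProj_maurerCartan ((hval q hq).differentiableAt (by simp))
    (eventually_of_mem (hV.mem_nhds hq) hp) b

lemma hasFDerivAt_vdiff_apply (hU : IsOpen U) (hψ : S.IsSmoothOn 𝓘(ℝ, F) ψ U) {x : F}
    (hx : x ∈ U) (c : F) :
    HasFDerivAt (fun q => S.vdiff ψ q c) ((fderiv ℝ (S.vdiff ψ) x).flip c) x := by
  have hvdiff := (contDiffOn_vdiff hψ).contDiffAt (hU.mem_nhds hx)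
  simpa using (hvdiff.differentiableAt (by simp)).hasFDerivAt.clm_apply (hasFDerivAt_const c x)

/- The tangent part of the difference vanishes because the Levi-Civita connection is torsion-free;
the isotropy part is computed by the Maurer-Cartan equation of a lift of `ψ` to `G`. -/
lemma fderiv_vdiff_sub_swap (hU : IsOpen U) (hψ : S.IsSmoothOn 𝓘(ℝ, F) ψ U) {x : F} (hx : x ∈ U)
    (a b : F) :
    fderiv ℝ (S.vdiff ψ) x a b - fderiv ℝ (S.vdiff ψ) x b a
      = (2 : ℝ) • S.bracket (S.vdiff ψ x a) (S.vdiff ψ x b) := by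
  obtain ⟨V, hV, hxV, h, hh, hp⟩ := hψ x hx
  rw [contMDiffOn_iff_contDiffOn] at hh
  have hval : ∀ q ∈ V, ContDiffAt ℝ ∞ (fun q => S.val (h q)) q := fun q hq =>
    (hh q hq).contDiffAt (hV.mem_nhds hq)
  have htan (c d : F) : fderiv ℝ (S.vdiff ψ) x d c - S.bracket (S.vdiff ψ x d) (S.vdiff ψ x c)
      ∈ S.tangent (ψ x) :=
    fderiv_sub_bracket_mem_tangent hψ hx (hasFDerivAt_vdiff_apply hU hψ hx c)
      (eventually_of_mem (hU.mem_nhds hx) fun y hy => vdiff_mem_tangent hψ hy c) d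
  have hκ (c : F) : ∀ q ∈ V, S.maurerCartan h q c - S.vdiff ψ q c ∈ S.isotropy (ψ q) := by
    intro q hq
    rw [vdiff_eq_tanProj_maurerCartan ((hval q hq).differentiableAt (by simp))
      (eventually_of_mem (hV.mem_nhds hq) hp), ← hp q hq]
    exact S.sub_tanProj_mem _ _
  have hiso (c d : F) : (fderiv ℝ (S.maurerCartan h) x d c - fderiv ℝ (S.vdiff ψ) x d c)
      - S.bracket (S.vdiff ψ x d) (S.maurerCartan h x c - S.vdiff ψ x c) ∈ S.isotropy (ψ x) := by
    have hmc := ((contDiffAt_maurerCartan (n := ∞) (hval x hxV)).differentiableAt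
      (by simp)).hasFDerivAt.clm_apply (hasFDerivAt_const c x)
    simpa using fderiv_sub_bracket_mem_isotropy hψ hx
      (hmc.sub (hasFDerivAt_vdiff_apply hU hψ hx c)) (eventually_of_mem (hV.mem_nhds hxV) (hκ c)) d
  refine sub_eq_zero.1 (eq_zero_of_mem_tangent_of_mem_isotropy (x := ψ x) ?_ ?_)
  · convert Submodule.sub_mem _ (htan b a) (htan a b) using 1
    rw [S.bracket_swap (S.vdiff ψ x b)]
    module
  · have hdiff := Submodule.sub_mem _ (hiso b a) (hiso a b)
    have hκκ := bracket_isotropy_mem_isotropy (hκ a x hxV) (hκ b x hxV)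
    have hψψ := bracket_mem_isotropy (vdiff_mem_tangent hψ hx a) (vdiff_mem_tangent hψ hx b)
    convert Submodule.sub_mem _ (Submodule.sub_mem _ hκκ hdiff) hψψ using 1
    rw [sub_eq_iff_eq_add.1 (maurerCartan_equation ((hval x hxV).of_le (by norm_cast)) a b)]
    simp only [map_sub, sub_apply]
    rw [S.bracket_swap (S.vdiff ψ x b) (S.maurerCartan h x a),
      S.bracket_swap (S.vdiff ψ x b) (S.vdiff ψ x a)]
    module

end VectorSpace

/-! ### Totally geodesic submanifolds -/

namespace Submfd

variable {N : S.Submfd} {F : Type*} [NormedAddCommGroup F] [NormedSpace ℝ F]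
  {ψ : F → S.Q} {U : Set F}

/-- `ψ : U → N` is a local parametrization of an open part of the submanifold `N` of `G/K`; unlike
in `Submfd.exists_param`, the model space is arbitrary and `ψ` need not be an embedding. -/
structure IsParam (N : S.Submfd) (U : Set F) (ψ : F → S.Q) : Prop where
  isOpen : IsOpen U
  smooth : S.IsSmoothOn 𝓘(ℝ, F) ψ U
  mem : ∀ x ∈ U, ψ x ∈ N.carrier
  inj : ∀ x ∈ U, Function.Injective (S.vdiff ψ x)
  range_eq : ∀ x ∈ U, LinearMap.range (S.vdiff ψ x).toLinearMap = N.tangent (ψ x)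

lemma IsParam.vdiff_mem (h : N.IsParam U ψ) {x : F} (hx : x ∈ U) (a : F) :
    S.vdiff ψ x a ∈ N.tangent (ψ x) := h.range_eq x hx ▸ ⟨a, rfl⟩

lemma IsParam.tangent_le (h : N.IsParam U ψ) {x : F} (hx : x ∈ U) :
    N.tangent (ψ x) ≤ S.tangent (ψ x) := by
  rw [← h.range_eq x hx]
  rintro _ ⟨a, rfl⟩
  exact vdiff_mem_tangent h.smooth hx a

lemma exists_isParam (N : S.Submfd) {y : S.Q} (hy : y ∈ N.carrier) :
    ∃ (U : Set (EuclideanSpace ℝ (Fin N.dim))) (ψ : EuclideanSpace ℝ (Fin N.dim) → S.Q),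
      N.IsParam U ψ ∧ 0 ∈ U ∧ ψ 0 = y ∧ ContinuousOn ψ U := by
  obtain ⟨U, O, ψ, hU, h0, hψ0, -, him, hemb, hs, hd⟩ := N.exists_param y hy
  have hmem : ∀ x ∈ U, ψ x ∈ N.carrier ∩ O := fun x hx => him ▸ mem_image_of_mem ψ hx
  exact ⟨U, ψ, ⟨hU, hs, fun x hx => (hmem x hx).1, fun x hx => (hd x hx).1,
    fun x hx => (hd x hx).2⟩, h0, hψ0, continuousOn_iff_continuous_domRestrict.2 hemb.continuous⟩

lemma IsParam.fderiv_sub_bracket_mem (h : N.IsParam U ψ) (hN : N.IsTotallyGeodesic) {x : F}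
    (hx : x ∈ U) {Ξ : F → 𝔤} {Ξ' : F →L[ℝ] 𝔤} (hd : HasFDerivAt Ξ Ξ' x)
    (hΞ : ∀ y ∈ U, Ξ y ∈ N.tangent (ψ y)) (a : F) :
    Ξ' a - S.bracket (S.vdiff ψ x a) (Ξ x) ∈ N.tangent (ψ x) := by
  obtain ⟨c', -, hc⟩ := isDifferentialAt_line h.smooth hx a
  have hU : ∀ᶠ y in 𝓝 x, y ∈ U := h.isOpen.mem_nhds hx
  have hx0 : x + (0 : ℝ) • a = x := by simp
  have htan : Ξ' a - S.bracket (S.vdiff ψ x a) (Ξ x) ∈ S.tangent (ψ x) :=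
    fderiv_sub_bracket_mem_tangent h.smooth hx hd
      (hU.mono fun y hy => h.tangent_le hy (hΞ y hy)) a
  have hiso : S.bracket (S.vdiff ψ x a) (Ξ x) ∈ S.isotropy (ψ x) :=
    bracket_mem_isotropy (vdiff_mem_tangent h.smooth hx a) (h.tangent_le hx (hΞ x hx))
  have hgeo := hN (fun t => ψ (x + t • a)) c' (fun t => Ξ (x + t • a)) _ _
    (((tendsto_add_smul_nhds_zero x a).eventually hU).mono fun t ht => ⟨h.mem _ ht, hΞ _ ht⟩) hc
    (by simpa only [hx0] using htan) (by simpa only [hx0] using hiso)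
    ((sub_add_cancel (Ξ' a) _).symm ▸ hd.hasLineDerivAt a)
  simpa only [hx0] using hgeo

variable [FiniteDimensional ℝ F]

lemma IsParam.contDiffAt_vdiff (h : N.IsParam U ψ) {x : F} (hx : x ∈ U) :
    ContDiffAt ℝ ∞ (S.vdiff ψ) x := (contDiffOn_vdiff h.smooth).contDiffAt (h.isOpen.mem_nhds hx)

lemma IsParam.hasFDerivAt_vdiff (h : N.IsParam U ψ) {x : F} (hx : x ∈ U) (c : F) :
    HasFDerivAt (fun q => S.vdiff ψ q c) ((fderiv ℝ (S.vdiff ψ) x).flip c) x :=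
  hasFDerivAt_vdiff_apply h.isOpen h.smooth hx c

lemma IsParam.covDeriv_mem (h : N.IsParam U ψ) (hN : N.IsTotallyGeodesic) {x : F}
    (hx : x ∈ U) (b c : F) :
    fderiv ℝ (S.vdiff ψ) x b c - S.bracket (S.vdiff ψ x b) (S.vdiff ψ x c) ∈ N.tangent (ψ x) :=
  h.fderiv_sub_bracket_mem hN hx (h.hasFDerivAt_vdiff hx c) (fun _ hy => h.vdiff_mem hy c) b

lemma IsParam.secondCovDeriv_mem (h : N.IsParam U ψ) (hN : N.IsTotallyGeodesic) {x : F}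
    (hx : x ∈ U) (a b c : F) :
    fderiv ℝ (fderiv ℝ (S.vdiff ψ)) x a b c
      - (S.bracket (fderiv ℝ (S.vdiff ψ) x a b) (S.vdiff ψ x c)
        + S.bracket (S.vdiff ψ x b) (fderiv ℝ (S.vdiff ψ) x a c))
      - S.bracket (S.vdiff ψ x a)
        (fderiv ℝ (S.vdiff ψ) x b c - S.bracket (S.vdiff ψ x b) (S.vdiff ψ x c))
      ∈ N.tangent (ψ x) := by
  have hfderiv : HasFDerivAt (fderiv ℝ (S.vdiff ψ)) (fderiv ℝ (fderiv ℝ (S.vdiff ψ)) x) x :=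
    (((h.contDiffAt_vdiff hx).fderiv_right (m := ∞) (by simp)).differentiableAt
      (by simp)).hasFDerivAt
  have hsecond : HasFDerivAt (fun q => fderiv ℝ (S.vdiff ψ) q b c)
      (((fderiv ℝ (fderiv ℝ (S.vdiff ψ)) x).flip b).flip c) x := by
    simpa using (hfderiv.clm_apply (hasFDerivAt_const b x)).clm_apply (hasFDerivAt_const c x)
  have hbracket := (S.bracket.hasFDerivAt.comp x (h.hasFDerivAt_vdiff hx b)).clm_apply
    (h.hasFDerivAt_vdiff hx c)
  convert h.fderiv_sub_bracket_mem hN hx (hsecond.sub hbracket)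
    (fun y hy => h.covDeriv_mem hN hy b c) a using 1
  simp [add_comm]

lemma IsParam.bracket_bracket_vdiff_mem (h : N.IsParam U ψ) (hN : N.IsTotallyGeodesic) {x : F}
    (hx : x ∈ U) (a b c : F) :
    S.bracket (S.bracket (S.vdiff ψ x a) (S.vdiff ψ x b)) (S.vdiff ψ x c) ∈ N.tangent (ψ x) := by
  have hsymm := (h.contDiffAt_vdiff hx).isSymmSndFDerivAt (by simpa using ENat.LEInfty.out) b a
  convert Submodule.sub_mem _ (h.secondCovDeriv_mem hN hx b a c)
    (h.secondCovDeriv_mem hN hx a b c) using 1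
  rw [hsymm, sub_eq_iff_eq_add.1 (fderiv_vdiff_sub_swap h.isOpen h.smooth hx a b)]
  simp only [map_sub, map_add, map_smul, add_apply, smul_apply]
  rw [S.bracket_jacobi (S.vdiff ψ x a) (S.vdiff ψ x b)]
  module

lemma bracket_bracket_mem (hN : N.IsTotallyGeodesic) {y : S.Q} (hy : y ∈ N.carrier) {u v w : 𝔤}
    (hu : u ∈ N.tangent y) (hv : v ∈ N.tangent y) (hw : w ∈ N.tangent y) :
    S.bracket (S.bracket u v) w ∈ N.tangent y := by
  obtain ⟨U, ψ, h, h0, rfl, -⟩ := N.exists_isParam hy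
  rw [← h.range_eq 0 h0] at hu hv hw
  obtain ⟨a, rfl⟩ := hu
  obtain ⟨b, rfl⟩ := hv
  obtain ⟨c, rfl⟩ := hw
  exact h.bracket_bracket_vdiff_mem hN h0 a b c

end Submfd

end CompactSymmetricSpace

/-! ### Holonomy of small loops -/

section SmallLoops

open Asymptotics

variable {F V : Type*} [NormedAddCommGroup F] [NormedSpace ℝ F]
  [NormedAddCommGroup V] [NormedSpace ℝ V]

lemma exists_linear_ode_solution [CompleteSpace F] {C : ℝ → F →L[ℝ] F}
    (hC : ContinuousOn C (Icc 0 1)) (hb : ∀ t ∈ Icc (0 : ℝ) 1, ‖C t‖ ≤ 1 / 2) (y₀ : F) :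
    ∃ y : ℝ → F, y 0 = y₀ ∧
      ∀ t ∈ Icc (0 : ℝ) 1, HasDerivWithinAt y (C t (y t)) (Icc 0 1) t := by
  have hPL : IsPicardLindelof (fun t x => C t x) (tmin := 0) (tmax := 1)
      (⟨0, by simp⟩ : Icc (0 : ℝ) 1) y₀ ‖y₀‖₊ 0 ‖y₀‖₊ 1 := by
    refine ⟨fun t ht => ((C t).lipschitz.weaken ?_).lipschitzOnWith,
      fun x _ => hC.clm_apply continuousOn_const, fun t ht x hx => ?_, by simp⟩
    · rw [← NNReal.coe_le_coe, coe_nnnorm, NNReal.coe_one]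
      linarith [hb t ht]
    · have hx' : ‖x‖ ≤ 2 * ‖y₀‖ :=
        (norm_le_of_mem_closedBall hx).trans_eq (by rw [coe_nnnorm]; ring)
      calc ‖C t x‖ ≤ ‖C t‖ * ‖x‖ := (C t).le_opNorm x
        _ ≤ 1 / 2 * (2 * ‖y₀‖) := by gcongr; exact hb t ht
        _ = _ := by simp
  exact hPL.exists_eq_forall_mem_Icc_hasDerivWithinAt₀

lemma isBigO_bilinear_apply {ι E : Type*} [NormedAddCommGroup E] [NormedSpace ℝ E] {l : Filter ι}
    (B : E →L[ℝ] F →L[ℝ] V) {f : ι → E} {g : ι → F} {u w : ι → ℝ} (hf : f =O[l] u)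
    (hg : g =O[l] w) : (fun i => B (f i) (g i)) =O[l] fun i => u i * w i :=
  B.isBoundedBilinearMap.isBigO_comp.trans (hf.norm_left.mul hg.norm_left)

lemma isLittleO_bilinear_apply {ι E : Type*} [NormedAddCommGroup E] [NormedSpace ℝ E]
    {l : Filter ι} (B : E →L[ℝ] F →L[ℝ] V) {f : ι → E} {g : ι → F} {u w : ι → ℝ}
    (hf : f =o[l] u) (hg : g =O[l] w) : (fun i => B (f i) (g i)) =o[l] fun i => u i * w i :=
  B.isBoundedBilinearMap.isBigO_comp.trans_isLittleO (hf.norm_left.mul_isBigO hg.norm_left)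

section MeanValue

variable {ι : Type*} {l : Filter ι} {ζ ζ' : ι → ℝ → V} {g : ι → ℝ}

lemma isBigOWith_sub_of_hasDerivWithinAt {C : ℝ}
    (hζ : ∀ᶠ i in l, ∀ t ∈ Icc (0 : ℝ) 1, HasDerivWithinAt (ζ i) (ζ' i t) (Icc 0 1) t)
    (hζ' : IsBigOWith C (l ×ˢ 𝓟 (Icc 0 1)) (fun p => ζ' p.1 p.2) fun p => g p.1) :
    IsBigOWith C (l ×ˢ 𝓟 (Icc 0 1)) (fun p => ζ p.1 p.2 - ζ p.1 0) fun p => g p.1 := by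
  rw [isBigOWith_iff, eventually_prod_principal_iff] at hζ' ⊢
  filter_upwards [hζ, hζ'] with i hi hbound t ht
  have hC : 0 ≤ C * ‖g i‖ := (norm_nonneg _).trans (hbound t ht)
  refine (norm_image_sub_le_of_norm_deriv_le_segment' hi
    (fun s hs => hbound s (Ico_subset_Icc_self hs)) t ht).trans ?_
  exact mul_le_of_le_one_right hC (by simpa using ht.2)

lemma isBigO_sub_of_hasDerivWithinAt
    (hζ : ∀ᶠ i in l, ∀ t ∈ Icc (0 : ℝ) 1, HasDerivWithinAt (ζ i) (ζ' i t) (Icc 0 1) t)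
    (hζ' : (fun p => ζ' p.1 p.2) =O[l ×ˢ 𝓟 (Icc 0 1)] fun p => g p.1) :
    (fun p => ζ p.1 p.2 - ζ p.1 0) =O[l ×ˢ 𝓟 (Icc 0 1)] fun p => g p.1 :=
  have ⟨_, hC⟩ := hζ'.isBigOWith
  (isBigOWith_sub_of_hasDerivWithinAt hζ hC).isBigO

lemma isLittleO_sub_of_hasDerivWithinAt
    (hζ : ∀ᶠ i in l, ∀ t ∈ Icc (0 : ℝ) 1, HasDerivWithinAt (ζ i) (ζ' i t) (Icc 0 1) t)
    (hζ' : (fun p => ζ' p.1 p.2) =o[l ×ˢ 𝓟 (Icc 0 1)] fun p => g p.1) :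
    (fun p => ζ p.1 p.2 - ζ p.1 0) =o[l ×ˢ 𝓟 (Icc 0 1)] fun p => g p.1 :=
  .of_isBigOWith fun _ hc => isBigOWith_sub_of_hasDerivWithinAt hζ (hζ'.forall_isBigOWith hc)

end MeanValue

section Holonomy

/-- The filter of the parameters `(ε, t)` with `ε → 0+`, uniformly in `t ∈ [0, 1]`. -/
abbrev smallLoopFilter : Filter (ℝ × ℝ) := 𝓝[>] 0 ×ˢ 𝓟 (Icc 0 1)

variable {B : V →L[ℝ] V →L[ℝ] V} {e : F → F →L[ℝ] V} {e' : F →L[ℝ] F →L[ℝ] V} {γ γ' : ℝ → F}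
  {ξ : ℝ → ℝ → V} {ξ₀ : V}

lemma isBigO_snd_of_norm_le {E : Type*} [NormedAddCommGroup E] {f : ℝ → E} {R : ℝ}
    (hf : ∀ t ∈ Icc (0 : ℝ) 1, ‖f t‖ ≤ R) :
    (fun p : ℝ × ℝ => f p.2) =O[smallLoopFilter] fun _ => (1 : ℝ) :=
  .of_bound R <| eventually_prod_principal_iff.2 <| .of_forall fun _ t ht => by
    simpa using hf t ht

lemma isBigO_smul_loop (hγ : (fun p : ℝ × ℝ => γ p.2) =O[smallLoopFilter] fun _ => (1 : ℝ)) :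
    (fun p : ℝ × ℝ => p.1 • γ p.2) =O[smallLoopFilter] Prod.fst := by
  simpa using (isBigO_refl Prod.fst smallLoopFilter).smul hγ

lemma tendsto_smul_loop (hγ : (fun p : ℝ × ℝ => γ p.2) =O[smallLoopFilter] fun _ => (1 : ℝ)) :
    Tendsto (fun p : ℝ × ℝ => p.1 • γ p.2) smallLoopFilter (𝓝 0) :=
  (isBigO_smul_loop hγ).trans_tendsto
    ((tendsto_nhdsWithin_of_tendsto_nhds tendsto_id).comp tendsto_fst)

lemma isLittleO_connection_sub (he : HasFDerivAt e e' 0)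
    (hγ : (fun p : ℝ × ℝ => γ p.2) =O[smallLoopFilter] fun _ => (1 : ℝ)) :
    (fun p : ℝ × ℝ => e (p.1 • γ p.2) - e 0 - e' (p.1 • γ p.2)) =o[smallLoopFilter] Prod.fst := by
  simpa [Function.comp_def] using
    (he.isLittleO.comp_tendsto (tendsto_smul_loop hγ)).trans_isBigO
      (by simpa [Function.comp_def] using isBigO_smul_loop hγ)

lemma isBigO_connection_sub (he : HasFDerivAt e e' 0)
    (hγ : (fun p : ℝ × ℝ => γ p.2) =O[smallLoopFilter] fun _ => (1 : ℝ)) :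
    (fun p : ℝ × ℝ => e (p.1 • γ p.2) - e 0) =O[smallLoopFilter] Prod.fst := by
  simpa [Function.comp_def] using
    (he.isBigO_sub.comp_tendsto (tendsto_smul_loop hγ)).trans
      (by simpa [Function.comp_def] using isBigO_smul_loop hγ)

variable (B) (e₀ : F →L[ℝ] V) (e' : F →L[ℝ] F →L[ℝ] V) (ξ₀ : V) in
/-- The bilinear form whose integral along a small loop is the second order term of the holonomy of
the connection `d - B(e, ·)` applied to `ξ₀`, where `e` has value `e₀` and derivative `e'` at the
base point. -/
def holonomyForm : F →L[ℝ] F →L[ℝ] V :=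
  (ContinuousLinearMap.compL ℝ F V V (B.flip ξ₀)) ∘L e' -
    ((ContinuousLinearMap.compL ℝ F V V).flip (B.flip ξ₀ ∘L e₀)) ∘L B ∘L e₀

lemma holonomyForm_apply (e₀ : F →L[ℝ] V) (u v : F) :
    holonomyForm B e₀ e' ξ₀ u v = B (e' u v) ξ₀ - B (e₀ u) (B (e₀ v) ξ₀) := rfl

lemma holonomy_integrand_eq (e : F → F →L[ℝ] V) (x v : F) (η ξ₀ : V) (ε : ℝ) :
    B (e (ε • x) (ε • v)) η
        - (B (e 0 (ε • v)) η + B (e 0 (ε • x)) (B (e (ε • x) (ε • v)) η))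
        - ε ^ 2 • holonomyForm B (e 0) e' ξ₀ x v
      = ε • B ((e (ε • x) - e 0 - e' (ε • x)) v) η + ε ^ 2 • B (e' x v) (η - ξ₀)
        - ε ^ 2 • B (e 0 x) (B ((e (ε • x) - e 0) v) η + B (e 0 v) (η - ξ₀)) := by
  simp only [holonomyForm_apply, map_smul, map_sub, map_add, smul_apply, sub_apply]
  module

variable (he : HasFDerivAt e e' 0)
  (hγ : (fun p : ℝ × ℝ => γ p.2) =O[smallLoopFilter] fun _ => (1 : ℝ))
  (hγ' : (fun p : ℝ × ℝ => γ' p.2) =O[smallLoopFilter] fun _ => (1 : ℝ))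
  (hξ₀ : ∀ᶠ ε in 𝓝[>] (0 : ℝ), ξ ε 0 = ξ₀)
  (hξ : (fun p : ℝ × ℝ => ξ p.1 p.2) =O[smallLoopFilter] fun _ => (1 : ℝ))
  (hξ' : ∀ᶠ ε in 𝓝[>] (0 : ℝ), ∀ t ∈ Icc (0 : ℝ) 1,
    HasDerivWithinAt (ξ ε) (B (e (ε • γ t) (ε • γ' t)) (ξ ε t)) (Icc 0 1) t)

include he hγ hγ' hξ₀ hξ hξ'

lemma isBigO_parallel_sub :
    (fun p : ℝ × ℝ => ξ p.1 p.2 - ξ₀) =O[smallLoopFilter] Prod.fst := by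
  have hbounded : (fun p : ℝ × ℝ => e (p.1 • γ p.2)) =O[smallLoopFilter] fun _ => (1 : ℝ) :=
    (he.continuousAt.tendsto.comp (tendsto_smul_loop hγ)).isBigO_one ℝ
  have hvel := isBigO_bilinear_apply (.id ℝ (F →L[ℝ] V)) hbounded (isBigO_smul_loop hγ')
  have hsub := isBigO_sub_of_hasDerivWithinAt hξ' (g := id)
    (by simpa using isBigO_bilinear_apply B hvel hξ)
  refine hsub.congr' ?_ .rfl
  exact eventually_prod_principal_iff.2 (hξ₀.mono fun ε hε t _ => by simp only [hε])

lemma isLittleO_holonomy_integrand :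
    (fun p : ℝ × ℝ => B (e (p.1 • γ p.2) (p.1 • γ' p.2)) (ξ p.1 p.2)
        - (B (e 0 (p.1 • γ' p.2)) (ξ p.1 p.2)
          + B (e 0 (p.1 • γ p.2)) (B (e (p.1 • γ p.2) (p.1 • γ' p.2)) (ξ p.1 p.2)))
        - p.1 ^ 2 • holonomyForm B (e 0) e' ξ₀ (γ p.2) (γ' p.2))
      =o[smallLoopFilter] fun p => p.1 ^ 2 := by
  have hclose := isBigO_parallel_sub he hγ hγ' hξ₀ hξ hξ'
  have hfst := isBigO_refl (Prod.fst : ℝ × ℝ → ℝ) smallLoopFilter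
  have hfst0 : (Prod.fst : ℝ × ℝ → ℝ) =o[smallLoopFilter] fun _ => (1 : ℝ) :=
    (isLittleO_one_iff ℝ).2 ((tendsto_nhdsWithin_of_tendsto_nhds tendsto_id).comp tendsto_fst)
  have hsmul {f : ℝ × ℝ → V} (hf : f =O[smallLoopFilter] Prod.fst) :
      (fun p => p.1 ^ 2 • f p) =o[smallLoopFilter] fun p => p.1 ^ 2 := by
    simpa using (hfst.pow 2).smul_isLittleO (hf.trans_isLittleO hfst0)
  have he₀ {f : ℝ × ℝ → F} (hf : f =O[smallLoopFilter] fun _ => (1 : ℝ)) :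
      (fun p => e 0 (f p)) =O[smallLoopFilter] fun _ => (1 : ℝ) :=
    ((e 0).isBigO_comp f _).trans hf
  have hremainder := isLittleO_bilinear_apply B
    (isLittleO_bilinear_apply (.id ℝ (F →L[ℝ] V)) (isLittleO_connection_sub he hγ) hγ') hξ
  have hvar := isBigO_bilinear_apply B
    (isBigO_bilinear_apply (.id ℝ (F →L[ℝ] V)) (isBigO_connection_sub he hγ) hγ') hξ
  have hderiv := isBigO_bilinear_apply B (isBigO_bilinear_apply e' hγ hγ') hclose
  have hcorrection := isBigO_bilinear_apply B (he₀ hγ)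
    ((hvar.trans (by simpa using hfst)).add
      ((isBigO_bilinear_apply B (he₀ hγ') hclose).trans (by simpa using hfst)))
  simp only [holonomy_integrand_eq]
  refine .sub (.add ?_ (hsmul (by simpa using hderiv))) (hsmul (by simpa using hcorrection))
  simpa [sq] using hfst.smul_isLittleO hremainder

/- Subtracting `B(e 0 (ε γ), ξ)` from `ξ` cancels the first order term of its derivative and, since
`γ` is closed, does not change the holonomy. -/
lemma isLittleO_holonomy (hdγ : ∀ t, HasDerivAt γ (γ' t) t) (hγ0 : γ 0 = 0) (hγ1 : γ 1 = 0)
    {Q : ℝ → V} (hQ0 : Q 0 = 0)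
    (hQ : ∀ t, HasDerivAt Q (holonomyForm B (e 0) e' ξ₀ (γ t) (γ' t)) t) :
    (fun ε => ξ ε 1 - ξ₀ - ε ^ 2 • Q 1) =o[𝓝[>] 0] fun ε : ℝ => ε ^ 2 := by
  let ζ : ℝ → ℝ → V := fun ε t => ξ ε t - B (e 0 (ε • γ t)) (ξ ε t) - ε ^ 2 • Q t
  have hcorrection (ε t : ℝ) :
      HasDerivAt (fun t => B (e 0 (ε • γ t))) (B (e 0 (ε • γ' t))) t :=
    (B ∘L e 0).hasFDerivAt.comp_hasDerivAt t ((hdγ t).const_smul ε)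
  have hζ := isLittleO_sub_of_hasDerivWithinAt (ζ := ζ) (g := fun ε => ε ^ 2)
    (hξ'.mono fun ε hε t ht =>
      ((hε t ht).sub ((hcorrection ε t).hasDerivWithinAt.clm_apply (hε t ht))).sub
        ((hQ t).hasDerivWithinAt.const_smul (ε ^ 2)))
    (isLittleO_holonomy_integrand he hγ hγ' hξ₀ hξ hξ')
  have hone : Tendsto (fun ε : ℝ => (ε, (1 : ℝ))) (𝓝[>] 0) smallLoopFilter :=
    tendsto_id.prodMk (tendsto_principal.2 (.of_forall fun _ => ⟨zero_le_one, le_rfl⟩))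
  refine (hζ.comp_tendsto hone).congr' (hξ₀.mono fun ε hε => ?_) .rfl
  simp [ζ, hγ0, hγ1, hQ0, hε, sub_right_comm]

lemma integral_mem_of_holonomy_mem [FiniteDimensional ℝ V] (hdγ : ∀ t, HasDerivAt γ (γ' t) t)
    (hγ0 : γ 0 = 0) (hγ1 : γ 1 = 0) {Q : ℝ → V} (hQ0 : Q 0 = 0)
    (hQ : ∀ t, HasDerivAt Q (holonomyForm B (e 0) e' ξ₀ (γ t) (γ' t)) t) {W : Submodule ℝ V}
    (h₀ : ξ₀ ∈ W) (h₁ : ∀ᶠ ε in 𝓝[>] (0 : ℝ), ξ ε 1 ∈ W) : Q 1 ∈ W := by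
  have hlim := (isLittleO_holonomy he hγ hγ' hξ₀ hξ hξ' hdγ hγ0 hγ1 hQ0 hQ
    ).tendsto_inv_smul_nhds_zero.add_const (Q 1)
  rw [zero_add] at hlim
  refine W.closed_of_finiteDimensional.mem_of_tendsto hlim ?_
  filter_upwards [h₁, self_mem_nhdsWithin] with ε hε hpos
  have hne : ε ^ 2 ≠ 0 := pow_ne_zero 2 (ne_of_gt hpos)
  rw [smul_sub _ (ξ ε 1 - ξ₀), inv_smul_smul₀ hne, sub_add_cancel]
  exact W.smul_mem _ (W.sub_mem hε h₀)

end Holonomy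

end SmallLoops

section CircleLoop

variable {F V : Type*} [NormedAddCommGroup F] [NormedSpace ℝ F]
  [NormedAddCommGroup V] [NormedSpace ℝ V]

/-- The circle `cos(2πt) a + sin(2πt) b`, translated so that it starts at the origin. -/
def circleLoop (a b : F) (t : ℝ) : F :=
  (Real.cos (2 * Real.pi * t) - 1) • a + Real.sin (2 * Real.pi * t) • b

/-- The velocity of `circleLoop a b`. -/
def circleLoopDeriv (a b : F) (t : ℝ) : F :=
  (-(2 * Real.pi * Real.sin (2 * Real.pi * t))) • a + (2 * Real.pi * Real.cos (2 * Real.pi * t)) • b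

lemma hasDerivAt_cos_two_pi (t : ℝ) : HasDerivAt (fun t => Real.cos (2 * Real.pi * t))
    (-(2 * Real.pi * Real.sin (2 * Real.pi * t))) t := by
  simpa [mul_comm] using ((hasDerivAt_id t).const_mul (2 * Real.pi)).cos

lemma hasDerivAt_sin_two_pi (t : ℝ) : HasDerivAt (fun t => Real.sin (2 * Real.pi * t))
    (2 * Real.pi * Real.cos (2 * Real.pi * t)) t := by
  simpa [mul_comm] using ((hasDerivAt_id t).const_mul (2 * Real.pi)).sin

lemma hasDerivAt_circleLoop (a b : F) (t : ℝ) :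
    HasDerivAt (circleLoop a b) (circleLoopDeriv a b t) t :=
  (((hasDerivAt_cos_two_pi t).sub_const 1).smul_const a).add
    ((hasDerivAt_sin_two_pi t).smul_const b)

lemma circleLoop_zero (a b : F) : circleLoop a b 0 = 0 := by simp [circleLoop]

lemma circleLoop_one (a b : F) : circleLoop a b 1 = 0 := by simp [circleLoop]

lemma contDiff_circleLoop (a b : F) : ContDiff ℝ ∞ (circleLoop a b) := by
  unfold circleLoop
  fun_prop

lemma continuous_circleLoopDeriv (a b : F) : Continuous (circleLoopDeriv a b) := by
  unfold circleLoopDeriv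
  fun_prop

lemma norm_circleLoop_le (a b : F) (t : ℝ) : ‖circleLoop a b t‖ ≤ 2 * ‖a‖ + ‖b‖ := by
  have hcos : |Real.cos (2 * Real.pi * t) - 1| ≤ 2 := by
    rw [abs_le]
    constructor <;> linarith [Real.neg_one_le_cos (2 * Real.pi * t),
      Real.cos_le_one (2 * Real.pi * t)]
  refine norm_add_le_of_le ?_ ?_
  · rw [norm_smul, Real.norm_eq_abs]
    gcongr
  · rw [norm_smul, Real.norm_eq_abs]
    exact mul_le_of_le_one_left (norm_nonneg b) (Real.abs_sin_le_one _)

lemma norm_circleLoopDeriv_le (a b : F) (t : ℝ) :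
    ‖circleLoopDeriv a b t‖ ≤ 2 * Real.pi * ‖a‖ + 2 * Real.pi * ‖b‖ := by
  have h2π : 0 < 2 * Real.pi := Real.two_pi_pos
  refine norm_add_le_of_le ?_ ?_
  · rw [norm_smul, norm_neg, norm_mul, Real.norm_of_nonneg h2π.le, Real.norm_eq_abs]
    exact mul_le_mul_of_nonneg_right
      (mul_le_of_le_one_right h2π.le (Real.abs_sin_le_one _)) (norm_nonneg _)
  · rw [norm_smul, norm_mul, Real.norm_of_nonneg h2π.le, Real.norm_eq_abs]
    exact mul_le_mul_of_nonneg_right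
      (mul_le_of_le_one_right h2π.le (Real.abs_cos_le_one _)) (norm_nonneg _)

/- The symmetric part of `β` integrates to zero along a closed curve, so only the antisymmetric part
is left, multiplied by the area of the disc. -/
lemma exists_primitive_circleLoop (β : F →L[ℝ] F →L[ℝ] V) (a b : F) :
    ∃ Q : ℝ → V, Q 0 = 0 ∧ Q 1 = Real.pi • (β a b - β b a) ∧
      ∀ t, HasDerivAt Q (β (circleLoop a b t) (circleLoopDeriv a b t)) t := by
  let c : ℝ → ℝ := fun t => Real.cos (2 * Real.pi * t)
  let s : ℝ → ℝ := fun t => Real.sin (2 * Real.pi * t)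
  refine ⟨fun t => ((c t - 1) * (c t - 1) / 2) • β a a
    + (Real.pi * t + s t * c t / 2 - s t) • β a b + (-(Real.pi * t) + s t * c t / 2) • β b a
    + (s t * s t / 2) • β b b, by simp [c, s], by simp [c, s]; module, fun t => ?_⟩
  have hc := hasDerivAt_cos_two_pi t
  have hs := hasDerivAt_sin_two_pi t
  have hlin : HasDerivAt (fun t : ℝ => Real.pi * t) Real.pi t := by
    simpa using (hasDerivAt_id t).const_mul Real.pi
  have haa := (((hc.sub_const 1).fun_mul (hc.sub_const 1)).div_const 2).smul_const (β a a)
  have hab := ((hlin.fun_add ((hs.fun_mul hc).div_const 2)).fun_sub hs).smul_const (β a b)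
  have hba := (hlin.fun_neg.fun_add ((hs.fun_mul hc).div_const 2)).smul_const (β b a)
  have hbb := ((hs.fun_mul hs).div_const 2).smul_const (β b b)
  convert ((haa.fun_add hab).fun_add hba).fun_add hbb using 1
  simp only [circleLoop, circleLoopDeriv, map_add, map_smul, add_apply, smul_apply]
  have hcs := Real.sin_sq_add_cos_sq (2 * Real.pi * t)
  generalize Real.cos (2 * Real.pi * t) = x at *
  generalize Real.sin (2 * Real.pi * t) = y at *
  have coeff_ab : Real.pi + (2 * Real.pi * x * x + y * -(2 * Real.pi * y)) / 2 - 2 * Real.pi * x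
      = (x - 1) * (2 * Real.pi * x) := by linear_combination -Real.pi * hcs
  have coeff_ba : -Real.pi + (2 * Real.pi * x * x + y * -(2 * Real.pi * y)) / 2
      = y * -(2 * Real.pi * y) := by linear_combination Real.pi * hcs
  rw [coeff_ab, coeff_ba]
  module

/- To second order, the holonomy of the connection `d - B(e, ·)` around small circles is its
curvature. -/
lemma curvature_apply_mem_of_holonomy_mem [FiniteDimensional ℝ V] {B : V →L[ℝ] V →L[ℝ] V}
    {e : F → F →L[ℝ] V} {e' : F →L[ℝ] F →L[ℝ] V} (he : HasFDerivAt e e' 0) (a b : F)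
    {W : Submodule ℝ V} {ξ : ℝ → ℝ → V} {ξ₀ : V} (h₀ : ξ₀ ∈ W)
    (hξ₀ : ∀ᶠ ε in 𝓝[>] (0 : ℝ), ξ ε 0 = ξ₀) (h₁ : ∀ᶠ ε in 𝓝[>] (0 : ℝ), ξ ε 1 ∈ W)
    (hξ : (fun p : ℝ × ℝ => ξ p.1 p.2) =O[smallLoopFilter] fun _ => (1 : ℝ))
    (hξ' : ∀ᶠ ε in 𝓝[>] (0 : ℝ), ∀ t ∈ Icc (0 : ℝ) 1, HasDerivWithinAt (ξ ε)
      (B (e (ε • circleLoop a b t) (ε • circleLoopDeriv a b t)) (ξ ε t)) (Icc 0 1) t) :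
    B (e' a b - e' b a) ξ₀ - (B (e 0 a) (B (e 0 b) ξ₀) - B (e 0 b) (B (e 0 a) ξ₀)) ∈ W := by
  obtain ⟨Q, hQ0, hQ1, hQ⟩ := exists_primitive_circleLoop (holonomyForm B (e 0) e' ξ₀) a b
  have hmem := integral_mem_of_holonomy_mem he
    (isBigO_snd_of_norm_le fun t _ => norm_circleLoop_le a b t)
    (isBigO_snd_of_norm_le fun t _ => norm_circleLoopDeriv_le a b t) hξ₀ hξ hξ'
    (hasDerivAt_circleLoop a b) (circleLoop_zero a b) (circleLoop_one a b) hQ0 hQ h₀ h₁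
  rw [hQ1, W.smul_mem_iff Real.pi_ne_zero, holonomyForm_apply, holonomyForm_apply] at hmem
  convert hmem using 1
  simp only [map_sub, sub_apply]
  abel

end CircleLoop

namespace CompactSymmetricSpace

variable {𝔸 𝔤 : Type*} [NormedRing 𝔸] [NormedAlgebra ℝ 𝔸] [FiniteDimensional ℝ 𝔸]
  [NormedAddCommGroup 𝔤] [InnerProductSpace ℝ 𝔤] [FiniteDimensional ℝ 𝔤]

variable {S : CompactSymmetricSpace 𝔸 𝔤}

lemma norm_eq_of_hasDerivWithinAt_bracket {u ξ : ℝ → 𝔤}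
    (hξ : ∀ t ∈ Icc (0 : ℝ) 1, HasDerivWithinAt ξ (S.bracket (u t) (ξ t)) (Icc 0 1) t) :
    ∀ t ∈ Icc (0 : ℝ) 1, ‖ξ t‖ = ‖ξ 0‖ := by
  intro t ht
  have hinner : ∀ s ∈ Icc (0 : ℝ) 1, HasDerivWithinAt (fun s => ⟪ξ s, ξ s⟫) 0 (Icc 0 1) s := by
    intro s hs
    simpa [S.inner_bracket_left] using (hξ s hs).inner ℝ (hξ s hs)
  have hconst :=
    norm_image_sub_le_of_norm_deriv_le_segment' hinner (C := 0) (fun _ _ => by simp) t ht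
  rw [zero_mul, norm_le_zero_iff, sub_eq_zero, real_inner_self_eq_norm_sq,
    real_inner_self_eq_norm_sq] at hconst
  exact (sq_eq_sq₀ (norm_nonneg _) (norm_nonneg _)).1 hconst

namespace Submfd

variable {N : S.Submfd} {F : Type*} [NormedAddCommGroup F] [NormedSpace ℝ F]
  {ψ : F → S.Q} {U : Set F}

lemma IsParam.isNullLoop (h : N.IsParam U ψ) (hc : ContinuousOn ψ U) {r : ℝ}
    (hr : Metric.closedBall 0 r ⊆ U) {x : ℝ → F} (hx : ContDiff ℝ ∞ x) (h0 : x 0 = 0)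
    (h1 : x 1 = 0) (hxr : ∀ t, x t ∈ Metric.closedBall 0 r) :
    N.IsNullLoop (ψ 0) (fun t => ψ (x t)) := by
  refine ⟨fun t _ => ?_, ?_⟩
  · obtain ⟨V, hV, hxV, g, hg, hp⟩ := h.smooth (x t) (hr (hxr t))
    refine ⟨x ⁻¹' V, hV.preimage hx.continuous, hxV, fun s => g (x s), ?_, fun s hs => hp _ hs⟩
    rw [contMDiffOn_iff_contDiffOn] at hg ⊢
    exact hg.comp hx.contDiffOn fun s hs => hs
  · let D := Metric.closedBall (0 : F) r
    let o : D := ⟨0, h0 ▸ hxr 0⟩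
    have : ContractibleSpace D := (convex_closedBall (0 : F) r).contractibleSpace ⟨0, o.2⟩
    let f : C(D, N.carrier) := ⟨fun z => ⟨ψ z, h.mem _ (hr z.2)⟩,
      (hc.comp_continuous continuous_subtype_val fun z => hr z.2).subtype_mk
        fun z => h.mem _ (hr z.2)⟩
    let q : Path o o :=
      { toFun := fun t => ⟨x t, hxr t⟩
        continuous_toFun := (hx.continuous.comp continuous_subtype_val).subtype_mk
          fun t => hxr t
        source' := Subtype.ext h0
        target' := Subtype.ext h1 }
    have hq : q.Homotopic (Path.refl o) := SimplyConnectedSpace.paths_homotopic _ _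
    exact ⟨h.mem _ (hr o.2), q.map f.continuous, fun t => rfl, hq.map f⟩

variable [FiniteDimensional ℝ F]

/- `Γ` is the connection form, in the frame `vdiff ψ`, of the Levi-Civita connection of `N`. -/
lemma IsParam.exists_connectionForm (h : N.IsParam U ψ) (hN : N.IsTotallyGeodesic)
    (h0 : 0 ∈ U) :
    ∃ Γ : F → F →L[ℝ] F →L[ℝ] F, (∀ᶠ z in 𝓝 0, ContinuousAt Γ z) ∧
      ∀ᶠ z in 𝓝 0, ∀ v y, S.vdiff ψ z (Γ z v y) =
        S.bracket (S.vdiff ψ z v) (S.vdiff ψ z y) - fderiv ℝ (S.vdiff ψ) z v y := by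
  obtain ⟨A₁, hA₁⟩ := (S.vdiff ψ 0).toLinearMap.exists_leftInverse_of_injective
    (LinearMap.ker_eq_bot.2 (h.inj 0 h0))
  let A : 𝔤 →L[ℝ] F := LinearMap.toContinuousLinearMap A₁
  have hA : A ∘L S.vdiff ψ 0 = 1 := ContinuousLinearMap.ext fun z => LinearMap.congr_fun hA₁ z
  have hcont {z : F} (hz : z ∈ U) : ContinuousAt (S.vdiff ψ) z :=
    (h.contDiffAt_vdiff hz).continuousAt
  have hfderiv {z : F} (hz : z ∈ U) : ContinuousAt (fderiv ℝ (S.vdiff ψ)) z :=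
    ((h.contDiffAt_vdiff hz).fderiv_right (m := ∞) (by simp)).continuousAt
  have hU : ∀ᶠ z in 𝓝 (0 : F), z ∈ U := h.isOpen.mem_nhds h0
  have hunit : ∀ᶠ z in 𝓝 (0 : F), IsUnit (A ∘L S.vdiff ψ z) := by
    have hc : ContinuousAt (fun z => A ∘L S.vdiff ψ z) 0 := continuousAt_const.clm_comp (hcont h0)
    exact hc.eventually (Units.isOpen.mem_nhds (hA.symm ▸ isUnit_one : IsUnit (A ∘L S.vdiff ψ 0)))
  let ρ : F → 𝔤 →L[ℝ] F := fun z => Ring.inverse (A ∘L S.vdiff ψ z) ∘L A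
  let m : F → F →L[ℝ] F →L[ℝ] 𝔤 := fun z =>
    (ContinuousLinearMap.compL ℝ F 𝔤 𝔤).flip (S.vdiff ψ z) ∘L S.bracket ∘L S.vdiff ψ z
      - fderiv ℝ (S.vdiff ψ) z
  refine ⟨fun z => ContinuousLinearMap.compL ℝ F 𝔤 F (ρ z) ∘L m z, ?_, ?_⟩
  · filter_upwards [hunit, hU] with z ⟨u, hu⟩ hz
    have hinv : ContinuousAt (fun z => Ring.inverse (A ∘L S.vdiff ψ z)) z :=
      ContinuousAt.comp (f := fun z => A ∘L S.vdiff ψ z) (g := Ring.inverse)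
        (hu ▸ NormedRing.inverse_continuousAt u)
        (continuousAt_const.clm_comp (hcont hz))
    have hm : ContinuousAt m z := .sub (.clm_comp
      ((ContinuousLinearMap.compL ℝ F 𝔤 𝔤).flip.continuous.continuousAt.comp (hcont hz))
      (continuousAt_const.clm_comp (hcont hz))) (hfderiv hz)
    exact ((ContinuousLinearMap.compL ℝ F 𝔤 F).continuous.continuousAt.comp
      (hinv.clm_comp continuousAt_const)).clm_comp hm
  · filter_upwards [hunit, hU] with z hz hzU v y
    obtain ⟨w, hw⟩ : m z v y ∈ LinearMap.range (S.vdiff ψ z).toLinearMap := by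
      rw [h.range_eq z hzU, ← neg_mem_iff]
      simpa [m] using h.covDeriv_mem hN hzU v y
    have hρ : ρ z (S.vdiff ψ z w) = w :=
      congrArg (fun T : F →L[ℝ] F => T w) (Ring.inverse_mul_cancel _ hz)
    change S.vdiff ψ z (ρ z (m z v y)) = m z v y
    rw [← hw]
    exact congrArg _ hρ

lemma IsParam.exists_parallel (h : N.IsParam U ψ) (hN : N.IsTotallyGeodesic) (h0 : 0 ∈ U) :
    ∃ r > 0, Metric.closedBall 0 r ⊆ U ∧ ∀ (x x' : ℝ → F), (∀ t, HasDerivAt x (x' t) t) →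
      Continuous x' → (∀ t, x t ∈ Metric.closedBall 0 r) → (∀ t, ‖x' t‖ ≤ r) → ∀ y₀ : F,
      ∃ ξ : ℝ → 𝔤, ξ 0 = S.vdiff ψ (x 0) y₀ ∧
        (∀ t ∈ Icc (0 : ℝ) 1, ξ t ∈ N.tangent (ψ (x t))) ∧ ∀ t ∈ Icc (0 : ℝ) 1,
          HasDerivWithinAt ξ (S.bracket (S.vdiff ψ (x t) (x' t)) (ξ t)) (Icc 0 1) t := by
  have := FiniteDimensional.complete ℝ F
  obtain ⟨Γ, hΓ, hEΓ⟩ := h.exists_connectionForm hN h0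
  have hΓ0 : ContinuousAt Γ 0 := hΓ.self_of_nhds
  have hnorm : ContinuousAt (fun z => ‖Γ z‖) 0 := .norm (E := F →L[ℝ] F →L[ℝ] F) hΓ0
  have hbound : ∀ᶠ z in 𝓝 0, ‖Γ z‖ < ‖Γ 0‖ + 1 :=
    hnorm.tendsto.eventually_lt_const (lt_add_one _)
  obtain ⟨R, hR, hball⟩ := Metric.nhds_basis_closedBall.eventually_iff.1
    (((hΓ.and hEΓ).and hbound).and (h.isOpen.mem_nhds h0))
  set K := ‖Γ 0‖ + 1
  have hK : 0 < K := by positivity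
  have hsub : Metric.closedBall (0 : F) (min R (1 / (2 * K))) ⊆ Metric.closedBall 0 R :=
    Metric.closedBall_subset_closedBall (min_le_left _ _)
  refine ⟨min R (1 / (2 * K)), by positivity, fun z hz => (hball (hsub hz)).2, ?_⟩
  intro x x' hx hx' hxr hx'r y₀
  have hnear (t : ℝ) := hball (hsub (hxr t))
  have hC : Continuous fun t => Γ (x t) (x' t) :=
    (continuous_iff_continuousAt.2 fun t =>
      (hnear t).1.1.1.comp (hx t).continuousAt).clm_apply hx'
  have hCbound (t : ℝ) : ‖Γ (x t) (x' t)‖ ≤ 1 / 2 :=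
    calc ‖Γ (x t) (x' t)‖ ≤ ‖Γ (x t)‖ * ‖x' t‖ := (Γ (x t)).le_opNorm _
      _ ≤ K * (1 / (2 * K)) := by
        gcongr
        · exact (hnear t).1.2.le
        · exact (hx'r t).trans (min_le_right _ _)
      _ = 1 / 2 := by field_simp
  obtain ⟨y, hy0, hy⟩ := exists_linear_ode_solution hC.continuousOn (fun t _ => hCbound t) y₀
  refine ⟨fun t => S.vdiff ψ (x t) (y t), by simp only [hy0], fun t _ => h.vdiff_mem (hnear t).2 _,
    fun t ht => ?_⟩
  have hframe : HasDerivAt (fun t => S.vdiff ψ (x t)) (fderiv ℝ (S.vdiff ψ) (x t) (x' t)) t :=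
    ((h.contDiffAt_vdiff (hnear t).2).differentiableAt (by simp)).hasFDerivAt.comp_hasDerivAt t
      (hx t)
  convert hframe.hasDerivWithinAt.clm_apply (hy t ht) using 1
  rw [(hnear t).1.1.2, add_sub_cancel]

lemma IsParam.eventually_exists_parallel_circleLoop (h : N.IsParam U ψ) (hc : ContinuousOn ψ U)
    (hN : N.IsTotallyGeodesic) (h0 : 0 ∈ U) {W : Submodule ℝ 𝔤}
    (hW : N.IsHolonomyInvariant (ψ 0) W) (a b y₀ : F) (hy₀ : S.vdiff ψ 0 y₀ ∈ W) :
    ∀ᶠ ε in 𝓝[>] (0 : ℝ), ∃ ξ : ℝ → 𝔤, ξ 0 = S.vdiff ψ 0 y₀ ∧ ξ 1 ∈ W ∧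
      ∀ t ∈ Icc (0 : ℝ) 1, HasDerivWithinAt ξ (S.bracket
        (S.vdiff ψ (ε • circleLoop a b t) (ε • circleLoopDeriv a b t)) (ξ t)) (Icc 0 1) t := by
  obtain ⟨r, hr, hrU, hpar⟩ := h.exists_parallel hN h0
  have hsmall (C : ℝ) : ∀ᶠ ε in 𝓝[>] (0 : ℝ), ε * C ≤ r :=
    (((continuous_mul_const C).tendsto' 0 0 (zero_mul C)).mono_left
      nhdsWithin_le_nhds).eventually_le_const hr
  filter_upwards [hsmall _, hsmall _, self_mem_nhdsWithin] with ε hεr hεr' hε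
  have hnorm {z : F} {C : ℝ} (hz : ‖z‖ ≤ C) (hC : ε * C ≤ r) : ‖ε • z‖ ≤ r := by
    rw [norm_smul, Real.norm_of_nonneg (le_of_lt hε)]
    exact (mul_le_mul_of_nonneg_left hz (le_of_lt hε)).trans hC
  have hxr (t : ℝ) : ε • circleLoop a b t ∈ Metric.closedBall 0 r :=
    mem_closedBall_zero_iff.2 (hnorm (norm_circleLoop_le a b t) hεr)
  obtain ⟨ξ, hξ0, hξN, hξ⟩ := hpar (fun t => ε • circleLoop a b t)
    (fun t => ε • circleLoopDeriv a b t) (fun t => (hasDerivAt_circleLoop a b t).const_smul ε)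
    ((continuous_circleLoopDeriv a b).const_smul ε) hxr
    (fun t => hnorm (norm_circleLoopDeriv_le a b t) hεr') y₀
  rw [circleLoop_zero, smul_zero] at hξ0
  refine ⟨ξ, hξ0, hW (fun t => ψ (ε • circleLoop a b t)) ξ
    (h.isNullLoop hc hrU ((contDiff_circleLoop a b).const_smul ε) (by simp [circleLoop_zero])
      (by simp [circleLoop_one]) hxr)
    (fun t ht => ⟨hξN t ht, _, hξ t ht, fun w hw => ?_⟩) (hξ0 ▸ hy₀), hξ⟩
  exact inner_isotropy_tangent (bracket_mem_isotropy
    (vdiff_mem_tangent h.smooth (hrU (hxr t)) _)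
    (h.tangent_le (hrU (hxr t)) (hξN t ht))) (h.tangent_le (hrU (hxr t)) hw)

/- By `fderiv_vdiff_sub_swap`, the curvature of a totally geodesic submanifold of `G/K` is
`R(a, b) = -ad [a, b]`. -/
lemma IsParam.bracket_bracket_mem_of_isHolonomyInvariant (h : N.IsParam U ψ)
    (hc : ContinuousOn ψ U) (hN : N.IsTotallyGeodesic) (h0 : 0 ∈ U) {W : Submodule ℝ 𝔤}
    (hW : N.IsHolonomyInvariant (ψ 0) W) (a b y₀ : F) (hy₀ : S.vdiff ψ 0 y₀ ∈ W) :
    S.bracket (S.bracket (S.vdiff ψ 0 a) (S.vdiff ψ 0 b)) (S.vdiff ψ 0 y₀) ∈ W := by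
  obtain ⟨ξ, hξ⟩ := (h.eventually_exists_parallel_circleLoop hc hN h0 hW a b y₀ hy₀).choice
  have hbounded : (fun p : ℝ × ℝ => ξ p.1 p.2) =O[smallLoopFilter] fun _ => (1 : ℝ) := by
    refine .of_bound ‖S.vdiff ψ 0 y₀‖
      (eventually_prod_principal_iff.2 (hξ.mono fun ε hε t ht => ?_))
    rw [norm_eq_of_hasDerivWithinAt_bracket hε.2.2 t ht, hε.1, norm_one, mul_one]
  have hcurv := curvature_apply_mem_of_holonomy_mem
    ((h.contDiffAt_vdiff h0).differentiableAt (by simp)).hasFDerivAt a b hy₀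
    (hξ.mono fun ε hε => hε.1) (hξ.mono fun ε hε => hε.2.1) hbounded (hξ.mono fun ε hε => hε.2.2)
  rw [fderiv_vdiff_sub_swap h.isOpen h.smooth h0] at hcurv
  convert hcurv using 1
  rw [S.bracket_jacobi (S.vdiff ψ 0 a), map_smul, smul_apply]
  module

lemma bracket_eq_zero_of_isHolonomyInvariant (hN : N.IsTotallyGeodesic) {y : S.Q}
    (hy : y ∈ N.carrier) {W W' : Submodule ℝ 𝔤} (hW : W ≤ N.tangent y) (hW' : W' ≤ N.tangent y)
    (hperp : W ⟂ W') (hinv : N.IsHolonomyInvariant y W') {w w' : 𝔤} (hw : w ∈ W)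
    (hw' : w' ∈ W') : S.bracket w w' = 0 := by
  obtain ⟨U, ψ, h, h0, rfl, hc⟩ := N.exists_isParam hy
  obtain ⟨a, ha⟩ : w ∈ LinearMap.range (S.vdiff ψ 0).toLinearMap := h.range_eq 0 h0 ▸ hW hw
  obtain ⟨b, hb⟩ : w' ∈ LinearMap.range (S.vdiff ψ 0).toLinearMap := h.range_eq 0 h0 ▸ hW' hw'
  change S.vdiff ψ 0 a = w at ha
  change S.vdiff ψ 0 b = w' at hb
  have hmem := h.bracket_bracket_mem_of_isHolonomyInvariant hc hN h0 hinv a b b (hb ▸ hw')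
  rw [ha, hb] at hmem
  have horth : ⟪w, S.bracket (S.bracket w w') w'⟫ = 0 :=
    Submodule.isOrtho_iff_inner_eq.1 hperp _ hw _ hmem
  refine inner_self_eq_zero (𝕜 := ℝ).1 ?_
  calc ⟪S.bracket w w', S.bracket w w'⟫ = ⟪w, S.bracket w' (S.bracket w w')⟫ := by
        rw [S.bracket_swap w w', inner_neg_left, S.inner_bracket_left, neg_neg]
    _ = 0 := by rw [S.bracket_swap, inner_neg_right, horth, neg_zero]

end Submfd

end CompactSymmetricSpace

/-! ### Parallel normal fields -/

section Constancy

variable {E : Type*} [NormedAddCommGroup E] [NormedSpace ℝ E]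
  {M : Type*} [TopologicalSpace M] [ChartedSpace E M] [IsManifold 𝓘(ℝ, E) ∞ M]

lemma eventually_eq_of_mfderiv_eq_zero {g : M → ℝ} (hg : MDifferentiable 𝓘(ℝ, E) 𝓘(ℝ, ℝ) g)
    (h : ∀ m, mfderiv 𝓘(ℝ, E) 𝓘(ℝ, ℝ) g m = 0) (p : M) : ∀ᶠ q in 𝓝 p, g q = g p := by
  let e := chartAt E p
  have hd (z : E) (hz : z ∈ e.target) : HasFDerivAt (fun z => g (e.symm z)) (0 : E →L[ℝ] ℝ) z := by
    have hsymm : MDifferentiableAt 𝓘(ℝ, E) 𝓘(ℝ, E) e.symm z :=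
      ((contMDiffOn_chart_symm (I := 𝓘(ℝ, E)) (n := ∞) (x := p)).contMDiffAt
        (e.open_target.mem_nhds hz)).mdifferentiableAt (by simp)
    have hcomp := HasMFDerivAt.comp z (hg (e.symm z)).hasMFDerivAt hsymm.hasMFDerivAt
    rw [h, ContinuousLinearMap.zero_comp] at hcomp
    exact hasMFDerivAt_iff_hasFDerivAt.1 hcomp
  obtain ⟨r, hr, hball⟩ := Metric.isOpen_iff.1 e.open_target (e p) (mem_chart_target E p)
  filter_upwards [e.open_source.mem_nhds (mem_chart_source E p),
    (e.continuousAt (mem_chart_source E p)).eventually (Metric.ball_mem_nhds _ hr)] with q hq hqr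
  have heq := (convex_ball (e p) r).is_const_of_fderivWithin_eq_zero (𝕜 := ℝ)
    (f := fun z => g (e.symm z))
    (fun z hz => (hd z (hball hz)).differentiableAt.differentiableWithinAt)
    (fun z hz => by rw [fderivWithin_of_isOpen Metric.isOpen_ball hz, (hd z (hball hz)).fderiv])
    hqr (Metric.mem_ball_self hr)
  simpa [e.left_inv hq, e.left_inv (mem_chart_source E p)] using heq

lemma eq_of_forall_hasDerivAt_chartCurve_zero [PreconnectedSpace M] {g : M → ℝ}
    (hg : MDifferentiable 𝓘(ℝ, E) 𝓘(ℝ, ℝ) g)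
    (h : ∀ m (X : E), HasDerivAt (fun t => g (chartCurve m X t)) 0 0) (m m' : M) : g m = g m' := by
  have hzero (m : M) : mfderiv 𝓘(ℝ, E) 𝓘(ℝ, ℝ) g m = 0 :=
    ContinuousLinearMap.ext fun X : E =>
      (hasDerivAt_comp_chartCurve (hg m).hasMFDerivAt X).unique (h m X)
  have hconst : IsLocallyConstant g :=
    (IsLocallyConstant.iff_eventually_eq g).2 (eventually_eq_of_mfderiv_eq_zero hg hzero)
  exact hconst.apply_eq_of_preconnectedSpace m m'

end Constancy

namespace CompactSymmetricSpace

variable {𝔸 𝔤 : Type*} [NormedRing 𝔸] [NormedAlgebra ℝ 𝔸] [FiniteDimensional ℝ 𝔸]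
  [NormedAddCommGroup 𝔤] [InnerProductSpace ℝ 𝔤] [FiniteDimensional ℝ 𝔤]
  {S : CompactSymmetricSpace 𝔸 𝔤} {E : Type*} [NormedAddCommGroup E] [NormedSpace ℝ E]
  {M : Type*} [TopologicalSpace M] [ChartedSpace E M] {f : M → S.Q}

lemma IsImmersion.isDifferentialAt (hf : S.IsImmersion E f) (m : M) :
    S.IsDifferentialAt 𝓘(ℝ, E) f m (S.diff 𝓘(ℝ, E) f m) := hf.1.isDifferentialAt (mem_univ m)

lemma IsImmersion.tangentOf_le (hf : S.IsImmersion E f) (m : M) :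
    S.tangentOf E f m ≤ S.tangent (f m) := by
  rintro _ ⟨X, rfl⟩
  exact (hf.isDifferentialAt m).mem_tangent X

lemma IsImmersion.exists_tangentOf_add_normalOf (hf : S.IsImmersion E f) {m : M} {ξ : 𝔤}
    (hξ : ξ ∈ S.tangent (f m)) :
    ∃ u ∈ S.tangentOf E f m, ∃ v ∈ S.normalOf E f m, ξ = u + v := by
  obtain ⟨u, hu, v, hv, rfl⟩ := (S.tangentOf E f m).exists_add_mem_mem_orthogonal ξ
  exact ⟨u, hu, v, ⟨(Submodule.add_mem_iff_right _ (hf.tangentOf_le m hu)).1 hξ, hv⟩, rfl⟩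

lemma IsImmersion.mem_tangentOf (hf : S.IsImmersion E f) {m : M} {ξ : 𝔤}
    (hξ : ξ ∈ S.tangent (f m)) (h : ∀ w ∈ S.normalOf E f m, ⟪ξ, w⟫ = 0) :
    ξ ∈ S.tangentOf E f m := by
  obtain ⟨u, hu, v, hv, rfl⟩ := hf.exists_tangentOf_add_normalOf hξ
  have hvv := h v hv
  rw [inner_add_left, Submodule.inner_right_of_mem_orthogonal hu hv.2, zero_add] at hvv
  rwa [inner_self_eq_zero.1 hvv, add_zero]

namespace IsParallelNormal

variable {ν ν₁ ν₂ : M → 𝔤}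

lemma mem_normalOf (h : S.IsParallelNormal E f ν) (m : M) : ν m ∈ S.normalOf E f m := h.2.1 m

lemma hasMFDerivAt (h : S.IsParallelNormal E f ν) (m : M) :
    HasMFDerivAt 𝓘(ℝ, E) 𝓘(ℝ, 𝔤) ν m (mfderiv 𝓘(ℝ, E) 𝓘(ℝ, 𝔤) ν m) :=
  ((h.1 m).mdifferentiableAt (by simp)).hasMFDerivAt

lemma exists_hasDerivAt_chartCurve (h : S.IsParallelNormal E f ν) (m : M) (X : E) :
    ∃ ν' : 𝔤, HasDerivAt (fun t => ν (chartCurve m X t)) ν' 0 ∧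
      ∀ w ∈ S.normalOf E f m, ⟪ν', w⟫ = 0 :=
  ⟨_, hasDerivAt_comp_chartCurve (h.hasMFDerivAt m) X, h.2.2 m X⟩

lemma of_hasDerivAt (hs : ContMDiff 𝓘(ℝ, E) 𝓘(ℝ, 𝔤) ∞ ν) (hn : ∀ m, ν m ∈ S.normalOf E f m)
    (h : ∀ m (X : E), ∃ ν' : 𝔤, HasDerivAt (fun t => ν (chartCurve m X t)) ν' 0 ∧
      ∀ w ∈ S.normalOf E f m, ⟪ν', w⟫ = 0) : S.IsParallelNormal E f ν := by
  refine ⟨hs, hn, fun m (X : E) w hw => ?_⟩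
  obtain ⟨ν', hν', hperp⟩ := h m X
  have heq := (hasDerivAt_comp_chartCurve
    ((hs m).mdifferentiableAt (by simp)).hasMFDerivAt X).unique hν'
  exact (congrArg (fun z : 𝔤 => ⟪z, w⟫) heq).trans (hperp w hw)

lemma zero : S.IsParallelNormal E f (fun _ => (0 : 𝔤)) :=
  of_hasDerivAt contMDiff_const (fun _ => Submodule.zero_mem _) fun _ _ =>
    ⟨0, hasDerivAt_const _ _, fun w _ => inner_zero_left w⟩

lemma add (h₁ : S.IsParallelNormal E f ν₁) (h₂ : S.IsParallelNormal E f ν₂) :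
    S.IsParallelNormal E f (fun m => ν₁ m + ν₂ m) := by
  refine of_hasDerivAt (h₁.1.add h₂.1) (fun m => add_mem (h₁.mem_normalOf m) (h₂.mem_normalOf m))
    fun m X => ?_
  obtain ⟨a, ha, ha'⟩ := h₁.exists_hasDerivAt_chartCurve m X
  obtain ⟨b, hb, hb'⟩ := h₂.exists_hasDerivAt_chartCurve m X
  exact ⟨a + b, ha.fun_add hb, fun w hw => by rw [inner_add_left, ha' w hw, hb' w hw, add_zero]⟩

lemma const_smul (h : S.IsParallelNormal E f ν) (r : ℝ) :
    S.IsParallelNormal E f (fun m => r • ν m) := by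
  refine of_hasDerivAt ((contDiff_const_smul (𝕜 := ℝ) (n := ∞) r).contMDiff.comp h.1)
    (fun m => Submodule.smul_mem _ r (h.mem_normalOf m)) fun m X => ?_
  obtain ⟨a, ha, ha'⟩ := h.exists_hasDerivAt_chartCurve m X
  exact ⟨r • a, ha.fun_const_smul r, fun w hw => by rw [real_inner_smul_left, ha' w hw, mul_zero]⟩

lemma sub (h₁ : S.IsParallelNormal E f ν₁) (h₂ : S.IsParallelNormal E f ν₂) :
    S.IsParallelNormal E f (fun m => ν₁ m - ν₂ m) := by
  simpa [sub_eq_add_neg] using h₁.add (h₂.const_smul (-1))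

lemma sum {ι : Type*} (s : Finset ι) {ν : ι → M → 𝔤} (h : ∀ i, S.IsParallelNormal E f (ν i)) :
    S.IsParallelNormal E f (fun m => ∑ i ∈ s, ν i m) := by
  simpa only [Finset.sum_fn] using Finset.sum_induction ν (S.IsParallelNormal E f)
    (fun _ _ => add) zero fun i _ => h i

variable [IsManifold 𝓘(ℝ, E) ∞ M] [PreconnectedSpace M]

lemma inner_eq (h₁ : S.IsParallelNormal E f ν₁) (h₂ : S.IsParallelNormal E f ν₂) (m m' : M) :
    ⟪ν₁ m, ν₂ m⟫ = ⟪ν₁ m', ν₂ m'⟫ := by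
  refine eq_of_forall_hasDerivAt_chartCurve_zero (E := E) (g := fun m => ⟪ν₁ m, ν₂ m⟫)
    (((contDiff_inner (𝕜 := ℝ) (n := ∞)).contMDiff.comp
      (h₁.1.prodMk_space h₂.1)).mdifferentiable (by simp)) (fun m X => ?_) m m'
  obtain ⟨a, ha, ha'⟩ := h₁.exists_hasDerivAt_chartCurve m X
  obtain ⟨b, hb, hb'⟩ := h₂.exists_hasDerivAt_chartCurve m X
  have hinner := ha.inner ℝ hb
  rwa [chartCurve_zero, ha' _ (h₂.mem_normalOf m), real_inner_comm, hb' _ (h₁.mem_normalOf m),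
    add_zero] at hinner

lemma eq_zero_of_eq_zero (h : S.IsParallelNormal E f ν) {m : M} (hm : ν m = 0) (m' : M) :
    ν m' = 0 := by
  refine inner_self_eq_zero (𝕜 := ℝ).1 ?_
  rw [h.inner_eq h m' m, hm, inner_zero_left]

lemma eq_of_eq (h₁ : S.IsParallelNormal E f ν₁) (h₂ : S.IsParallelNormal E f ν₂) {m : M}
    (h : ν₁ m = ν₂ m) : ν₁ = ν₂ :=
  funext fun x => sub_eq_zero.1 ((h₁.sub h₂).eq_zero_of_eq_zero (sub_eq_zero.2 h) x)

/- The covariant derivative of `ν₁` is tangent to `M`, hence orthogonal to `[[ν₁, ν₂], ν₂]`. -/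
lemma inner_bracket_self_eq
    (htriple : ∀ m, ∀ u ∈ S.normalOf E f m, ∀ v ∈ S.normalOf E f m, ∀ w ∈ S.normalOf E f m,
      S.bracket (S.bracket u v) w ∈ S.normalOf E f m)
    (h₁ : S.IsParallelNormal E f ν₁) (h₂ : S.IsParallelNormal E f ν₂) (m m' : M) :
    ⟪S.bracket (ν₁ m) (ν₂ m), S.bracket (ν₁ m) (ν₂ m)⟫ =
      ⟪S.bracket (ν₁ m') (ν₂ m'), S.bracket (ν₁ m') (ν₂ m')⟫ := by
  have hbracket : ContDiff ℝ ∞ fun p : 𝔤 × 𝔤 => S.bracket p.1 p.2 :=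
    S.bracket.isBoundedBilinearMap.contDiff
  refine eq_of_forall_hasDerivAt_chartCurve_zero (E := E)
    (g := fun m => ⟪S.bracket (ν₁ m) (ν₂ m), S.bracket (ν₁ m) (ν₂ m)⟫)
    (((hbracket.inner ℝ hbracket).contMDiff.comp (h₁.1.prodMk_space h₂.1)).mdifferentiable
      (by simp)) (fun m X => ?_) m m'
  obtain ⟨a, ha, ha'⟩ := h₁.exists_hasDerivAt_chartCurve m X
  obtain ⟨b, hb, hb'⟩ := h₂.exists_hasDerivAt_chartCurve m X
  have hu := h₁.mem_normalOf m
  have hv := h₂.mem_normalOf m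
  have hd := (S.bracket.hasFDerivAt.comp_hasDerivAt (0 : ℝ) ha).clm_apply hb
  have hinner := hd.inner ℝ hd
  simp only [Function.comp_def, chartCurve_zero] at hinner
  refine hinner.congr_deriv ?_
  set u := ν₁ m
  set v := ν₂ m
  have hleft : ⟪S.bracket a v, S.bracket u v⟫ = 0 := by
    rw [S.bracket_swap a v, inner_neg_left, S.inner_bracket_left, S.bracket_swap _ (S.bracket u v),
      inner_neg_right, ha' _ (htriple m u hu v hv v hv), neg_zero, neg_zero, neg_zero]
  have hright : ⟪S.bracket u b, S.bracket u v⟫ = 0 := by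
    rw [S.inner_bracket_left, S.bracket_swap _ (S.bracket u v), inner_neg_right,
      hb' _ (htriple m u hu v hv u hu), neg_zero, neg_zero]
  rw [real_inner_comm, inner_add_left, hleft, hright, add_zero, add_zero]

end IsParallelNormal

lemma mem_parallelSubbundle_iff {x₀ m : M} {W : Submodule ℝ 𝔤} {v : 𝔤} :
    v ∈ S.parallelSubbundle E f x₀ W m ↔ ∃ ν, S.IsParallelNormal E f ν ∧ ν x₀ ∈ W ∧ ν m = v := by
  refine ⟨fun h => ?_, fun h => Submodule.subset_span h⟩
  induction h using Submodule.span_induction with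
  | mem _ h => exact h
  | zero => exact ⟨_, IsParallelNormal.zero, W.zero_mem, rfl⟩
  | add x y _ _ hx hy =>
    obtain ⟨a, ha, ha', rfl⟩ := hx
    obtain ⟨b, hb, hb', rfl⟩ := hy
    exact ⟨_, ha.add hb, W.add_mem ha' hb', rfl⟩
  | smul r x _ hx =>
    obtain ⟨a, ha, ha', rfl⟩ := hx
    exact ⟨_, ha.const_smul r, W.smul_mem r ha', rfl⟩

lemma IsParallelNormal.mem_parallelSubbundle [IsManifold 𝓘(ℝ, E) ∞ M] [PreconnectedSpace M]
    {ν : M → 𝔤} {x₀ m₁ : M} {W : Submodule ℝ 𝔤} (hν : S.IsParallelNormal E f ν)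
    (h : ν m₁ ∈ S.parallelSubbundle E f x₀ W m₁) (m : M) :
    ν m ∈ S.parallelSubbundle E f x₀ W m := by
  obtain ⟨μ, hμ, hμW, hμν⟩ := mem_parallelSubbundle_iff.1 h
  rw [← hμ.eq_of_eq hν hμν]
  exact mem_parallelSubbundle_iff.2 ⟨μ, hμ, hμW, rfl⟩

lemma endPoint_zero {P : Type*} (f : P → S.Q) : S.endPoint f (fun _ => 0) = f := by
  funext m
  simp [endPoint, Exp, expG_zero]

lemma IsSection.tangent_eq (hf : S.IsImmersion E f) {m : M} {N : S.Submfd}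
    (h : S.IsSection E f m N) : N.tangent (f m) = S.normalOf E f m := by
  obtain ⟨hm, _, _, _, hdim, hperp⟩ := h
  obtain ⟨U, ψ, hψ, h0, hψ0, _⟩ := N.exists_isParam hm
  have hortho := (hperp _ IsParallelNormal.zero (by rwa [endPoint_zero])).2 m
    (by rwa [endPoint_zero])
  rw [endPoint_zero] at hortho
  refine Submodule.eq_of_le_of_finrank_eq (fun v hv => ⟨?_, hortho hv⟩) ?_
  · rw [← hψ0] at hv ⊢
    exact hψ.tangent_le h0 hv
  · rw [← hdim, ← hψ0, ← hψ.range_eq 0 h0, LinearMap.finrank_range_of_inj (hψ.inj 0 h0),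
      finrank_euclideanSpace_fin]

variable (E) in
/-- The normal holonomy group of `f` is trivial: every normal vector extends to a parallel field. -/
def HasTrivialNormalHolonomy (f : M → S.Q) : Prop :=
  ∀ m, ∀ v ∈ S.normalOf E f m, ∃ ν, S.IsParallelNormal E f ν ∧ ν m = v

variable (E) in
/-- `f` is an immersion with trivial normal holonomy group, all of whose normal spaces are tangent
to totally geodesic submanifolds of `G/K`. -/
structure HasGeodesicSections (f : M → S.Q) : Prop where
  immersion : S.IsImmersion E f
  trivialNormalHolonomy : HasTrivialNormalHolonomy E f
  sections : ∀ m, ∃ N : S.Submfd,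
    N.IsTotallyGeodesic ∧ f m ∈ N.carrier ∧ N.tangent (f m) = S.normalOf E f m

lemma IsEquifocal.hasGeodesicSections (hf : S.IsEquifocal E f) : HasGeodesicSections E f where
  immersion := hf.immersion
  trivialNormalHolonomy := hf.trivialNormalHolonomy
  sections m :=
    let ⟨N, hN⟩ := hf.sections m
    ⟨N, hN.2.2.2.1, hN.1, hN.tangent_eq hf.immersion⟩

variable (E) in
/-- The normal space of `f` at `x₀` is tangent to the totally geodesic submanifold `N`, and is the
orthogonal sum of `W 0` and `W 1`, which are invariant under the restricted holonomy group of
`N`. -/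
structure IsNormalSplitting (f : M → S.Q) (x₀ : M) (N : S.Submfd) (W : Fin 2 → Submodule ℝ 𝔤) :
    Prop where
  isTotallyGeodesic : N.IsTotallyGeodesic
  mem_carrier : f x₀ ∈ N.carrier
  tangent_eq : N.tangent (f x₀) = S.normalOf E f x₀
  orthogonal : W 0 ⟂ W 1
  sup_eq : W 0 ⊔ W 1 = N.tangent (f x₀)
  invariant : ∀ i, N.IsHolonomyInvariant (f x₀) (W i)

lemma IsSectionSplitting.isNormalSplitting (hf : S.IsImmersion E f) {x₀ : M} {N : S.Submfd}
    {W : Fin 2 → Submodule ℝ 𝔤} (hW : S.IsSectionSplitting E f x₀ N W) :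
    IsNormalSplitting E f x₀ N W where
  isTotallyGeodesic := hW.isSection.2.2.2.1
  mem_carrier := hW.isSection.1
  tangent_eq := hW.isSection.tangent_eq hf
  orthogonal := hW.orthogonal
  sup_eq := hW.sup_eq
  invariant := hW.invariant

lemma HasGeodesicSections.bracket_bracket_mem (hf : HasGeodesicSections E f) (m : M) :
    ∀ u ∈ S.normalOf E f m, ∀ v ∈ S.normalOf E f m, ∀ w ∈ S.normalOf E f m,
      S.bracket (S.bracket u v) w ∈ S.normalOf E f m := by
  obtain ⟨N, hN, hmem, htangent⟩ := hf.sections m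
  rw [← htangent]
  exact fun u hu v hv w hw => Submfd.bracket_bracket_mem hN hmem hu hv hw

namespace IsNormalSplitting

variable {x₀ : M} {N : S.Submfd} {W : Fin 2 → Submodule ℝ 𝔤} {i j : Fin 2}

lemma isOrtho (hW : IsNormalSplitting E f x₀ N W) (hij : j ≠ i) : W i ⟂ W j := by
  fin_cases i <;> fin_cases j <;>
    first | exact absurd rfl hij | exact hW.orthogonal | exact hW.orthogonal.symm

lemma sup_eq_normalOf (hW : IsNormalSplitting E f x₀ N W) (hij : j ≠ i) :
    W i ⊔ W j = S.normalOf E f x₀ := by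
  rw [← hW.tangent_eq, ← hW.sup_eq]
  fin_cases i <;> fin_cases j <;> first | exact absurd rfl hij | rfl | exact sup_comm _ _

lemma le_normalOf (hW : IsNormalSplitting E f x₀ N W) (i : Fin 2) :
    W i ≤ S.normalOf E f x₀ :=
  let ⟨_, hij⟩ := exists_ne i
  hW.sup_eq_normalOf hij ▸ le_sup_left

variable [IsManifold 𝓘(ℝ, E) ∞ M] [PreconnectedSpace M] {m : M} {u w : 𝔤}

lemma bracket_eq_zero (hf : HasGeodesicSections E f) (hW : IsNormalSplitting E f x₀ N W)
    (hij : j ≠ i) (hu : u ∈ S.parallelSubbundle E f x₀ (W i) m)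
    (hw : w ∈ S.parallelSubbundle E f x₀ (W j) m) : S.bracket u w = 0 := by
  obtain ⟨ν, hν, hνW, rfl⟩ := mem_parallelSubbundle_iff.1 hu
  obtain ⟨μ, hμ, hμW, rfl⟩ := mem_parallelSubbundle_iff.1 hw
  have hle (k : Fin 2) : W k ≤ N.tangent (f x₀) := hW.tangent_eq ▸ hW.le_normalOf k
  have hx₀ : S.bracket (ν x₀) (μ x₀) = 0 := Submfd.bracket_eq_zero_of_isHolonomyInvariant
    hW.isTotallyGeodesic hW.mem_carrier (hle i) (hle j) (hW.isOrtho hij) (hW.invariant j) hνW hμW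
  refine inner_self_eq_zero (𝕜 := ℝ).1 ?_
  rw [hν.inner_bracket_self_eq hf.bracket_bracket_mem hμ m x₀, hx₀, inner_zero_left]

lemma mem_parallelSubbundle_of_forall_inner (hf : HasTrivialNormalHolonomy E f)
    (hW : IsNormalSplitting E f x₀ N W) (hij : j ≠ i) (hw : w ∈ S.normalOf E f m)
    (h : ∀ u ∈ S.parallelSubbundle E f x₀ (W j) m, ⟪w, u⟫ = 0) :
    w ∈ S.parallelSubbundle E f x₀ (W i) m := by
  obtain ⟨ν, hν, rfl⟩ := hf m w hw
  obtain ⟨a, ha, b, hb, hab⟩ :=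
    Submodule.mem_sup.1 (hW.sup_eq_normalOf hij ▸ hν.mem_normalOf x₀)
  obtain ⟨μ, hμ, rfl⟩ := hf x₀ b (hW.le_normalOf j hb)
  have hμμ := h (μ m) (mem_parallelSubbundle_iff.2 ⟨μ, hμ, hb, rfl⟩)
  rw [hν.inner_eq hμ m x₀, ← hab, inner_add_left,
    Submodule.isOrtho_iff_inner_eq.1 (hW.isOrtho hij) a ha _ hb, zero_add,
    inner_self_eq_zero] at hμμ
  rw [hμμ, add_zero] at hab
  exact mem_parallelSubbundle_iff.2 ⟨ν, hν, hab ▸ ha, rfl⟩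

end IsNormalSplitting

end CompactSymmetricSpace

open BoundedContinuousFunction

/-! ### The equation `g' = g u` for square integrable `u` -/

section UnitInterval

/-- Lebesgue measure of the unit interval, as a measure on `ℝ`; integrals against it make
primitives constant outside `[0, 1]`. -/
abbrev unitMeasure : Measure ℝ := volume.restrict (Icc (0 : ℝ) 1)

variable {V : Type*} [NormedAddCommGroup V]

lemma norm_Lp_two_sq {α : Type*} [MeasurableSpace α] {μ : Measure α} (X : Lp V 2 μ) :
    ‖X‖ ^ 2 = ∫ s, ‖X s‖ ^ 2 ∂μ := by
  have h := (Lp.memLp X).eLpNorm_eq_integral_rpow_norm (by norm_num) (by norm_num)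
  have h0 : 0 ≤ ∫ s, ‖X s‖ ^ 2 ∂μ := integral_nonneg fun s => by positivity
  rw [Lp.norm_def, h, ENNReal.toReal_ofReal (by positivity)]
  simp only [ENNReal.toReal_ofNat, Real.rpow_ofNat]
  rw [← Real.rpow_natCast, ← Real.rpow_mul h0]
  norm_num

variable [NormedSpace ℝ V]

lemma intervalIntegral_unitMeasure (f : ℝ → V) {t : ℝ} (ht : t ∈ Icc (0 : ℝ) 1) :
    ∫ s in (0 : ℝ)..t, f s ∂unitMeasure = ∫ s in (0 : ℝ)..t, f s := by
  rw [intervalIntegral.integral_of_le ht.1, intervalIntegral.integral_of_le ht.1, unitMeasure,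
    Measure.restrict_restrict_of_subset]
  exact fun s hs => ⟨hs.1.le, hs.2.trans ht.2⟩

lemma intervalIntegral_unitMeasure_congr {f g : ℝ → V} (h : f =ᵐ[unitMeasure] g) (t : ℝ) :
    ∫ s in (0 : ℝ)..t, f s ∂unitMeasure = ∫ s in (0 : ℝ)..t, g s ∂unitMeasure :=
  intervalIntegral.integral_congr_ae (h.mono fun _ hs _ => hs)

lemma intervalIntegral_unitMeasure_projIcc (f : ℝ → V) (t : ℝ) :
    ∫ s in (0 : ℝ)..t, f s ∂unitMeasure =
      ∫ s in (0 : ℝ)..(projIcc (0 : ℝ) 1 zero_le_one t : ℝ), f s ∂unitMeasure := by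
  rcases le_total t 0 with h0 | h0
  · have hnull : (volume : Measure ℝ) (Ioc t 0 ∩ Icc 0 1) = 0 :=
      measure_mono_null (fun s hs => le_antisymm hs.1.2 hs.2.1) (measure_singleton 0)
    rw [projIcc_of_le_left _ h0, intervalIntegral.integral_same,
      intervalIntegral.integral_of_ge h0, unitMeasure, Measure.restrict_restrict measurableSet_Ioc,
      Measure.restrict_eq_zero.2 hnull, integral_zero_measure, neg_zero]
  rcases le_total t 1 with h1 | h1
  · rw [projIcc_of_mem _ ⟨h0, h1⟩]
  · have hinter : Ioc 0 t ∩ Icc (0 : ℝ) 1 = Ioc 0 1 ∩ Icc 0 1 := by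
      ext s
      exact ⟨fun h => ⟨⟨h.1.1, h.2.2⟩, h.2⟩, fun h => ⟨⟨h.1.1, h.2.2.trans h1⟩, h.2⟩⟩
    rw [projIcc_of_right_le _ h1, intervalIntegral.integral_of_le h0,
      intervalIntegral.integral_of_le zero_le_one, unitMeasure,
      Measure.restrict_restrict measurableSet_Ioc, Measure.restrict_restrict measurableSet_Ioc,
      hinter]

lemma denseRange_toLp_unitMeasure (V : Type*) [NormedAddCommGroup V] [NormedSpace ℝ V] :
    DenseRange (BoundedContinuousFunction.toLp 2 unitMeasure ℝ :
      (ℝ →ᵇ V) →L[ℝ] Lp V 2 unitMeasure) :=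
  BoundedContinuousFunction.toLp_denseRange (p := 2) (E := V) unitMeasure ℝ (by norm_num)

end UnitInterval

section Volterra

variable {𝔸 : Type*} [NormedRing 𝔸]

lemma integrable_mul_Lp (g : ℝ →ᵇ 𝔸) (X : Lp 𝔸 2 unitMeasure) :
    Integrable (fun s => g s * X s) unitMeasure :=
  ((Lp.memLp X).integrable (by norm_num)).bdd_mul g.continuous.aestronglyMeasurable
    (ae_of_all _ g.norm_coe_le_norm)

variable [NormedAlgebra ℝ 𝔸]

lemma norm_integral_mul_sq_le (g : ℝ →ᵇ 𝔸) (X : Lp 𝔸 2 unitMeasure) {t : ℝ}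
    (ht : t ∈ Icc (0 : ℝ) 1) :
    ‖∫ s in (0 : ℝ)..t, g s * X s ∂unitMeasure‖ ^ 2 ≤
      (∫ s in (0 : ℝ)..t, ‖g s‖ ^ 2) * ‖X‖ ^ 2 := by
  rw [← intervalIntegral_unitMeasure (fun s => ‖g s‖ ^ 2) ht, norm_Lp_two_sq,
    intervalIntegral.integral_of_le ht.1, intervalIntegral.integral_of_le ht.1]
  let μ := unitMeasure.restrict (Ioc 0 t)
  have hXm : MemLp X 2 μ := (Lp.memLp X).restrict _
  have hgm : MemLp g 2 μ :=
    MemLp.of_bound g.continuous.aestronglyMeasurable ‖g‖ (ae_of_all _ g.norm_coe_le_norm)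
  have hnorm : ‖∫ s, g s * X s ∂μ‖ ≤ ∫ s, ‖g s‖ * ‖X s‖ ∂μ :=
    (norm_integral_le_integral_norm _).trans <|
      integral_mono_ae (integrable_mul_Lp g X).restrict.norm (hgm.norm.integrable_mul hXm.norm)
        (ae_of_all _ fun s => norm_mul_le _ _)
  have hcs := integral_mul_le_Lp_mul_Lq_of_nonneg (μ := μ) Real.HolderConjugate.two_two
    (ae_of_all _ fun s => norm_nonneg (g s)) (ae_of_all _ fun s => norm_nonneg (X s))
    (by simpa using hgm.norm) (by simpa using hXm.norm)
  simp only [Real.rpow_ofNat, ← Real.sqrt_eq_rpow] at hcs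
  have hrestrict : ∫ s, ‖X s‖ ^ 2 ∂μ ≤ ∫ s, ‖X s‖ ^ 2 ∂unitMeasure :=
    setIntegral_le_integral ((Lp.memLp X).integrable_norm_pow (by norm_num))
      (ae_of_all _ fun s => by positivity)
  have hg0 : 0 ≤ ∫ s, ‖g s‖ ^ 2 ∂μ := integral_nonneg fun s => by positivity
  have hX0 : 0 ≤ ∫ s, ‖X s‖ ^ 2 ∂μ := integral_nonneg fun s => by positivity
  calc ‖∫ s, g s * X s ∂μ‖ ^ 2
      ≤ (√(∫ s, ‖g s‖ ^ 2 ∂μ) * √(∫ s, ‖X s‖ ^ 2 ∂μ)) ^ 2 :=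
        pow_le_pow_left₀ (norm_nonneg _) (hnorm.trans hcs) 2
    _ = (∫ s, ‖g s‖ ^ 2 ∂μ) * ∫ s, ‖X s‖ ^ 2 ∂μ := by
        rw [mul_pow, Real.sq_sqrt hg0, Real.sq_sqrt hX0]
    _ ≤ _ := mul_le_mul_of_nonneg_left hrestrict hg0

lemma norm_integral_mul_le (g : ℝ →ᵇ 𝔸) (X : Lp 𝔸 2 unitMeasure) (t : ℝ) :
    ‖∫ s in (0 : ℝ)..t, g s * X s ∂unitMeasure‖ ≤ ‖g‖ * ‖X‖ := by
  rw [intervalIntegral_unitMeasure_projIcc]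
  obtain ⟨r, hr⟩ := projIcc (0 : ℝ) 1 zero_le_one t
  have hsq : ∫ s in (0 : ℝ)..r, ‖g s‖ ^ 2 ≤ ‖g‖ ^ 2 :=
    calc ∫ s in (0 : ℝ)..r, ‖g s‖ ^ 2 ≤ ∫ _ in (0 : ℝ)..r, ‖g‖ ^ 2 :=
          intervalIntegral.integral_mono_on hr.1
            ((g.continuous.norm.pow 2).intervalIntegrable _ _)
            (continuous_const.intervalIntegrable _ _)
            fun s _ => pow_le_pow_left₀ (norm_nonneg _) (g.norm_coe_le_norm s) 2
      _ = r * ‖g‖ ^ 2 := by simp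
      _ ≤ ‖g‖ ^ 2 := mul_le_of_le_one_left (by positivity) hr.2
  refine le_of_sq_le_sq ((norm_integral_mul_sq_le g X hr).trans ?_) (by positivity)
  rw [mul_pow]
  exact mul_le_mul_of_nonneg_right hsq (by positivity)

/-- The bilinear Volterra operator, sending `g` and `X` to the primitive of `g X` that vanishes at
`0`; it is constant on both sides of `[0, 1]`. -/
def volterra : (ℝ →ᵇ 𝔸) →L[ℝ] Lp 𝔸 2 unitMeasure →L[ℝ] (ℝ →ᵇ 𝔸) :=
  LinearMap.mkContinuous₂
    (LinearMap.mk₂ ℝ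
      (fun g X => BoundedContinuousFunction.ofNormedAddCommGroup
        (fun t => ∫ s in (0 : ℝ)..t, g s * X s ∂unitMeasure)
        (intervalIntegral.continuous_primitive
          (fun _ _ => (integrable_mul_Lp g X).intervalIntegrable) 0)
        (‖g‖ * ‖X‖) (norm_integral_mul_le g X))
      (fun g h X => by
        ext t
        simp only [coe_ofNormedAddCommGroup, BoundedContinuousFunction.add_apply, add_mul]
        exact intervalIntegral.integral_add (integrable_mul_Lp g X).intervalIntegrable
          (integrable_mul_Lp h X).intervalIntegrable)
      (fun a g X => by
        ext t
        simp only [coe_ofNormedAddCommGroup, BoundedContinuousFunction.smul_apply, smul_mul_assoc]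
        exact intervalIntegral.integral_smul _ _)
      (fun g X Y => by
        ext t
        simp only [coe_ofNormedAddCommGroup, BoundedContinuousFunction.add_apply]
        rw [← intervalIntegral.integral_add (integrable_mul_Lp g X).intervalIntegrable
          (integrable_mul_Lp g Y).intervalIntegrable]
        refine intervalIntegral_unitMeasure_congr ?_ t
        filter_upwards [Lp.coeFn_add X Y] with s hs
        rw [hs, Pi.add_apply, mul_add])
      (fun a g X => by
        ext t
        simp only [coe_ofNormedAddCommGroup, BoundedContinuousFunction.smul_apply]
        rw [← intervalIntegral.integral_smul]
        refine intervalIntegral_unitMeasure_congr ?_ t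
        filter_upwards [Lp.coeFn_smul a X] with s hs
        rw [hs, Pi.smul_apply, mul_smul_comm]))
    1 (fun g X => by
      rw [one_mul]
      exact BoundedContinuousFunction.norm_ofNormedAddCommGroup_le _ (by positivity)
        (norm_integral_mul_le g X))

lemma volterra_apply (g : ℝ →ᵇ 𝔸) (X : Lp 𝔸 2 unitMeasure) (t : ℝ) :
    volterra g X t = ∫ s in (0 : ℝ)..t, g s * X s ∂unitMeasure := rfl

lemma volterra_apply_zero (g : ℝ →ᵇ 𝔸) (X : Lp 𝔸 2 unitMeasure) : volterra g X 0 = 0 := by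
  simp [volterra_apply]

lemma volterra_apply_projIcc (g : ℝ →ᵇ 𝔸) (X : Lp 𝔸 2 unitMeasure) (t : ℝ) :
    volterra g X t = volterra g X (projIcc (0 : ℝ) 1 zero_le_one t : ℝ) :=
  intervalIntegral_unitMeasure_projIcc _ _

lemma volterra_flip_pow_succ_apply (u : Lp 𝔸 2 unitMeasure) (n : ℕ) (g : ℝ →ᵇ 𝔸) :
    ((volterra.flip u) ^ (n + 1)) g = volterra (((volterra.flip u) ^ n) g) u := by
  rw [pow_succ']
  rfl

lemma norm_volterra_flip_pow_apply_sq_le (u : Lp 𝔸 2 unitMeasure) (n : ℕ) (g : ℝ →ᵇ 𝔸) {t : ℝ}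
    (ht : t ∈ Icc (0 : ℝ) 1) :
    ‖((volterra.flip u) ^ n) g t‖ ^ 2 ≤ (‖u‖ ^ 2) ^ n * ‖g‖ ^ 2 * (t ^ n / n.factorial) := by
  induction n generalizing t with
  | zero => simpa using pow_le_pow_left₀ (norm_nonneg _) (g.norm_coe_le_norm t) 2
  | succ n ih =>
    let h := ((volterra.flip u) ^ n) g
    let c := (‖u‖ ^ 2) ^ n * ‖g‖ ^ 2
    have hint : ∫ s in (0 : ℝ)..t, ‖h s‖ ^ 2 ≤ ∫ s in (0 : ℝ)..t, c * (s ^ n / n.factorial) :=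
      intervalIntegral.integral_mono_on ht.1
        ((h.continuous.norm.pow 2).intervalIntegrable _ _)
        (Continuous.intervalIntegrable (by fun_prop) _ _) fun s hs => ih ⟨hs.1, hs.2.trans ht.2⟩
    have hpow : ∫ s in (0 : ℝ)..t, c * (s ^ n / n.factorial) =
        c * (t ^ (n + 1) / (n + 1).factorial) := by
      rw [intervalIntegral.integral_const_mul, intervalIntegral.integral_div, integral_pow,
        Nat.factorial_succ]
      push_cast
      have : (n.factorial : ℝ) ≠ 0 := by positivity
      field_simp
      ring
    rw [volterra_flip_pow_succ_apply, volterra_apply]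
    calc ‖∫ s in (0 : ℝ)..t, h s * u s ∂unitMeasure‖ ^ 2
        ≤ (∫ s in (0 : ℝ)..t, ‖h s‖ ^ 2) * ‖u‖ ^ 2 := norm_integral_mul_sq_le h u ht
      _ ≤ c * (t ^ (n + 1) / (n + 1).factorial) * ‖u‖ ^ 2 :=
          mul_le_mul_of_nonneg_right (hint.trans_eq hpow) (sq_nonneg _)
      _ = _ := by ring

lemma exists_norm_volterra_flip_pow_lt_one (u : Lp 𝔸 2 unitMeasure) :
    ∃ n, ‖(volterra.flip u : (ℝ →ᵇ 𝔸) →L[ℝ] (ℝ →ᵇ 𝔸)) ^ n‖ < 1 := by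
  have hlim := (FloorSemiring.tendsto_pow_div_factorial_atTop (‖u‖ ^ 2)).comp
    (tendsto_add_atTop_nat 1)
  obtain ⟨n, hn⟩ := (hlim.eventually (gt_mem_nhds (show (0 : ℝ) < 1 / 4 by norm_num))).exists
  have hbound (g : ℝ →ᵇ 𝔸) (t : ℝ) : ‖((volterra.flip u) ^ (n + 1)) g t‖ ≤ 1 / 2 * ‖g‖ := by
    rw [volterra_flip_pow_succ_apply, volterra_apply_projIcc, ← volterra_flip_pow_succ_apply]
    obtain ⟨r, hr⟩ := projIcc (0 : ℝ) 1 zero_le_one t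
    refine le_of_sq_le_sq ?_ (by positivity)
    calc ‖((volterra.flip u) ^ (n + 1)) g r‖ ^ 2
        ≤ (‖u‖ ^ 2) ^ (n + 1) * ‖g‖ ^ 2 * (r ^ (n + 1) / (n + 1).factorial) :=
          norm_volterra_flip_pow_apply_sq_le u (n + 1) g hr
      _ = (‖u‖ ^ 2) ^ (n + 1) / (n + 1).factorial * ‖g‖ ^ 2 * r ^ (n + 1) := by ring
      _ ≤ 1 / 4 * ‖g‖ ^ 2 * 1 :=
          mul_le_mul (mul_le_mul_of_nonneg_right hn.le (by positivity))
            (pow_le_one₀ hr.1 hr.2) (pow_nonneg hr.1 _) (by positivity)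
      _ = (1 / 2 * ‖g‖) ^ 2 := by ring
  refine ⟨n + 1, (ContinuousLinearMap.opNorm_le_bound _ one_half_pos.le fun g => ?_).trans_lt
    one_half_lt_one⟩
  exact (BoundedContinuousFunction.norm_le (by positivity)).2 (hbound g)

lemma hasDerivWithinAt_volterra [CompleteSpace 𝔸] (g : ℝ →ᵇ 𝔸) {X : Lp 𝔸 2 unitMeasure}
    {x : ℝ → 𝔸} (hx : Continuous x) (hX : X =ᵐ[unitMeasure] x) {t : ℝ} (ht : t ∈ Icc (0 : ℝ) 1) :
    HasDerivWithinAt (volterra g X) (g t * x t) (Icc 0 1) t := by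
  have h : HasDerivAt (fun r => ∫ s in (0 : ℝ)..r, g s * x s) (g t * x t) t :=
    intervalIntegral.integral_hasDerivAt_right (Continuous.intervalIntegrable (by fun_prop) _ _)
      (Continuous.stronglyMeasurableAtFilter (by fun_prop) _ _)
      (Continuous.continuousAt (by fun_prop))
  refine h.hasDerivWithinAt.congr_of_mem (fun r hr => ?_) ht
  rw [volterra_apply, ← intervalIntegral_unitMeasure _ hr]
  exact intervalIntegral_unitMeasure_congr (hX.mono fun s hs => by simp only [hs]) r

end Volterra

section Transport

variable {𝔸 : Type*} [NormedRing 𝔸] [NormedAlgebra ℝ 𝔸] [CompleteSpace 𝔸]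

lemma isUnit_one_sub_volterra_flip (u : Lp 𝔸 2 unitMeasure) :
    IsUnit (1 - (volterra.flip u : (ℝ →ᵇ 𝔸) →L[ℝ] (ℝ →ᵇ 𝔸))) := by
  obtain ⟨n, hn⟩ := exists_norm_volterra_flip_pow_lt_one u
  let V : (ℝ →ᵇ 𝔸) →L[ℝ] (ℝ →ᵇ 𝔸) := volterra.flip u
  have hunit : IsUnit (1 - V ^ n) := isUnit_one_sub_of_norm_lt_one hn
  rw [← mul_neg_geom_sum V n] at hunit
  have hcomm : Commute (1 - V) (∑ i ∈ Finset.range n, V ^ i) :=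
    (Commute.one_left _).sub_left
      (Commute.sum_right _ _ _ fun i _ => (Commute.refl V).pow_right i)
  exact (hcomm.isUnit_mul_iff.1 hunit).1

/-- The solution in `𝔸` of `g' = g u`, `g(0) = 1`, as a bounded continuous path that is constant
on both sides of `[0, 1]`: the unique solution of the Volterra equation `g - volterra g u = 1`. -/
def transport (u : Lp 𝔸 2 unitMeasure) : ℝ →ᵇ 𝔸 := Ring.inverse (1 - volterra.flip u) 1

lemma transport_eq (u : Lp 𝔸 2 unitMeasure) : transport u = 1 + volterra (transport u) u := by
  have h : transport u - volterra (transport u) u = 1 :=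
    DFunLike.congr_fun (Ring.mul_inverse_cancel _ (isUnit_one_sub_volterra_flip u)) 1
  exact sub_eq_iff_eq_add.1 h

lemma eq_transport {u : Lp 𝔸 2 unitMeasure} {g : ℝ →ᵇ 𝔸} (h : g = 1 + volterra g u) :
    g = transport u := by
  have hg : (1 - volterra.flip u : (ℝ →ᵇ 𝔸) →L[ℝ] (ℝ →ᵇ 𝔸)) g = 1 := sub_eq_iff_eq_add.2 h
  rw [transport, ← hg]
  exact (DFunLike.congr_fun (Ring.inverse_mul_cancel _ (isUnit_one_sub_volterra_flip u)) g).symm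

lemma contDiff_transport : ContDiff ℝ ∞ (transport : Lp 𝔸 2 unitMeasure → ℝ →ᵇ 𝔸) := by
  refine contDiff_iff_contDiffAt.2 fun u => ?_
  obtain ⟨x, hx⟩ := isUnit_one_sub_volterra_flip u
  have hsub : ContDiffAt ℝ ∞ (fun u : Lp 𝔸 2 unitMeasure =>
      1 - (volterra.flip u : (ℝ →ᵇ 𝔸) →L[ℝ] (ℝ →ᵇ 𝔸))) u :=
    contDiffAt_const.sub (ContinuousLinearMap.contDiff _).contDiffAt
  have hinv := contDiffAt_ringInverse ℝ (n := ∞) x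
  rw [hx] at hinv
  exact (hinv.comp u hsub).clm_apply contDiffAt_const

lemma transport_apply_zero (u : Lp 𝔸 2 unitMeasure) : transport u 0 = 1 := by
  rw [transport_eq]
  simp [volterra_apply_zero]

/-- The derivative of `transport` at `u`. -/
def transportDeriv (u : Lp 𝔸 2 unitMeasure) : Lp 𝔸 2 unitMeasure →L[ℝ] (ℝ →ᵇ 𝔸) :=
  fderiv ℝ transport u

lemma hasFDerivAt_transport (u : Lp 𝔸 2 unitMeasure) :
    HasFDerivAt transport (transportDeriv u) u :=
  (contDiff_transport.differentiable (by simp) u).hasFDerivAt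

lemma continuous_transportDeriv :
    Continuous fun p : Lp 𝔸 2 unitMeasure × Lp 𝔸 2 unitMeasure => transportDeriv p.1 p.2 :=
  contDiff_transport.continuous_fderiv_apply (by simp)

attribute [irreducible] volterra transport transportDeriv

lemma fderiv_apply_of_eq_add_bilinear {E F : Type*} [NormedAddCommGroup E] [NormedSpace ℝ E]
    [NormedAddCommGroup F] [NormedSpace ℝ F] (B : F →L[ℝ] E →L[ℝ] F) {c : F} {T : E → F}
    {T' : E →L[ℝ] F} {u : E} (hT : HasFDerivAt T T' u) (heq : ∀ v, T v = c + B (T v) v) (X : E) :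
    T' X = B (T u) X + B (T' X) u := by
  have hrhs := ((B.hasFDerivAt.comp u hT).clm_apply (hasFDerivAt_id u)).const_add c
  exact DFunLike.congr_fun (hT.unique (hrhs.congr_of_eventuallyEq (.of_forall heq))) X

lemma transportDeriv_eq (u X : Lp 𝔸 2 unitMeasure) :
    transportDeriv u X = volterra (transport u) X + volterra (transportDeriv u X) u :=
  fderiv_apply_of_eq_add_bilinear volterra (hasFDerivAt_transport u) transport_eq X

lemma transportDeriv_apply_zero (u X : Lp 𝔸 2 unitMeasure) : transportDeriv u X 0 = 0 := by
  rw [transportDeriv_eq]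
  simp [volterra_apply_zero]

lemma hasDerivWithinAt_transport {u : Lp 𝔸 2 unitMeasure} {x : ℝ → 𝔸} (hx : Continuous x)
    (hu : u =ᵐ[unitMeasure] x) {t : ℝ} (ht : t ∈ Icc (0 : ℝ) 1) :
    HasDerivWithinAt (transport u) (transport u t * x t) (Icc 0 1) t := by
  refine ((hasDerivWithinAt_volterra (transport u) hx hu ht).const_add 1).congr_of_mem
    (fun r _ => ?_) ht
  exact DFunLike.congr_fun (transport_eq u) r

lemma hasDerivWithinAt_transportDeriv {u X : Lp 𝔸 2 unitMeasure} {x y : ℝ → 𝔸}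
    (hx : Continuous x) (hu : u =ᵐ[unitMeasure] x) (hy : Continuous y)
    (hX : X =ᵐ[unitMeasure] y) {t : ℝ} (ht : t ∈ Icc (0 : ℝ) 1) :
    HasDerivWithinAt (transportDeriv u X) (transport u t * y t + transportDeriv u X t * x t)
      (Icc 0 1) t := by
  refine ((hasDerivWithinAt_volterra (transport u) hy hX ht).add
    (hasDerivWithinAt_volterra (transportDeriv u X) hx hu ht)).congr_of_mem (fun r _ => ?_) ht
  exact DFunLike.congr_fun (transportDeriv_eq u X) r

end Transport

section Gronwall

variable {𝔸 : Type*} [NormedRing 𝔸] [NormedAlgebra ℝ 𝔸] [CompleteSpace 𝔸]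

/- Compare `g` with the curve `z ↦ k exp((z - x) a)` in `K` through a point `k` nearest to `g x`. -/
lemma frequently_slope_infDist_lt {K : Set 𝔸} (hK : IsCompact K) (hne : K.Nonempty) {a : 𝔸}
    (hexp : ∀ k ∈ K, ∀ r : ℝ, k * NormedSpace.exp (r • a) ∈ K) {g : ℝ → 𝔸} {x r : ℝ}
    (hg : HasDerivWithinAt g (g x * a) (Ici x) x) (hr : ‖a‖ * Metric.infDist (g x) K < r) :
    ∃ᶠ z in 𝓝[>] x, (z - x)⁻¹ * (Metric.infDist (g z) K - Metric.infDist (g x) K) < r := by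
  obtain ⟨k, hk, hdist⟩ := hK.exists_infDist_eq_dist hne (g x)
  rw [dist_eq_norm] at hdist
  let e : ℝ → 𝔸 := fun z => g z - k * NormedSpace.exp ((z - x) • a)
  have he : HasDerivWithinAt e (g x * a - k * a) (Ici x) x := by
    have hexp : HasDerivAt (fun r : ℝ => NormedSpace.exp (r • a)) a (x - x) := by
      rw [sub_self]
      exact hasDerivAt_exp_smul_zero a
    exact hg.sub ((hexp.comp_sub_const x x).const_mul k).hasDerivWithinAt
  have hex : ‖e x‖ = Metric.infDist (g x) K := by simp [e, hdist]
  have hlt : ‖g x * a - k * a‖ < r := by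
    refine lt_of_le_of_lt ?_ hr
    rw [← sub_mul, hdist, mul_comm ‖a‖]
    exact norm_mul_le _ _
  refine ((he.liminf_right_slope_norm_le hlt).and_eventually self_mem_nhdsWithin).mono
    fun z ⟨hz, hxz⟩ => lt_of_le_of_lt ?_ hz
  refine mul_le_mul_of_nonneg_left (sub_le_sub ?_ hex.le)
    (inv_nonneg.2 (sub_nonneg.2 (le_of_lt hxz)))
  rw [← dist_eq_norm]
  exact Metric.infDist_le_dist_of_mem (hexp k hk _)

lemma mem_of_hasDerivWithinAt_mul {K : Set 𝔸} (hK : IsCompact K) {g a : ℝ → 𝔸} {C : ℝ}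
    (hC : ∀ t, ‖a t‖ ≤ C) (hexp : ∀ t, ∀ k ∈ K, ∀ r : ℝ, k * NormedSpace.exp (r • a t) ∈ K)
    (h0 : g 0 ∈ K)
    (hg : ∀ t ∈ Icc (0 : ℝ) 1, HasDerivWithinAt g (g t * a t) (Icc 0 1) t) {t : ℝ}
    (ht : t ∈ Icc (0 : ℝ) 1) : g t ∈ K := by
  have hne : K.Nonempty := ⟨_, h0⟩
  have key := le_gronwallBound_of_liminf_deriv_right_le (f := fun t => Metric.infDist (g t) K)
    (f' := fun x => C * Metric.infDist (g x) K) (δ := 0) (K := C) (ε := 0) (a := 0) (b := 1)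
    ((Metric.continuous_infDist_pt _).comp_continuousOn fun t ht => (hg t ht).continuousWithinAt)
    (fun x hx r hr => ?_) (Metric.infDist_zero_of_mem h0).le (fun x _ => by simp) t ht
  · rw [gronwallBound_ε0_δ0] at key
    exact (hK.isClosed.mem_iff_infDist_zero hne).2 (le_antisymm key Metric.infDist_nonneg)
  · have hright : HasDerivWithinAt g (g x * a x) (Ici x) x :=
      ((hg x ⟨hx.1, hx.2.le⟩).mono (Icc_subset_Icc_left hx.1)).mono_of_mem_nhdsWithin
        (Icc_mem_nhdsGE hx.2)
    exact frequently_slope_infDist_lt hK hne (hexp x) hright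
      ((mul_le_mul_of_nonneg_right (hC x) Metric.infDist_nonneg).trans_lt hr)

end Gronwall

namespace CompactSymmetricSpace

variable {𝔸 𝔤 : Type*} [NormedRing 𝔸] [NormedAlgebra ℝ 𝔸] [FiniteDimensional ℝ 𝔸]
  [NormedAddCommGroup 𝔤] [InnerProductSpace ℝ 𝔤] [FiniteDimensional ℝ 𝔤]

variable (S : CompactSymmetricSpace 𝔸 𝔤)

/-! ### The transport of `L²`-paths in `𝔤` -/

/-- The map `H⁰([0,1], 𝔤) → L²([0,1], 𝔸)` induced by the inclusion `𝔤 → 𝔸`. -/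
def lieLp : S.H0 →L[ℝ] Lp 𝔸 2 unitMeasure := S.lieL.compLpL 2 unitMeasure

lemma coeFn_lieLp (u : S.H0) : S.lieLp u =ᵐ[unitMeasure] fun s => S.lie (u s) :=
  S.lieL.coeFn_compLpL u

/-- The path `s ↦ g_u(s)` in the ambient algebra `𝔸`, as a bounded continuous function. -/
def ambientPath (u : S.H0) : ℝ →ᵇ 𝔸 := transport (S.lieLp u)

/-- The derivative of `u ↦ g_u` as a map to the bounded continuous paths in `𝔸`. -/
def ambientPathDeriv (u : S.H0) : S.H0 →L[ℝ] (ℝ →ᵇ 𝔸) := transportDeriv (S.lieLp u) ∘L S.lieLp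

lemma ambientPath_eq (u : S.H0) : S.ambientPath u = 1 + volterra (S.ambientPath u) (S.lieLp u) :=
  transport_eq _

lemma hasFDerivAt_ambientPath (u : S.H0) :
    HasFDerivAt S.ambientPath (S.ambientPathDeriv u) u :=
  (hasFDerivAt_transport (S.lieLp u)).comp u S.lieLp.hasFDerivAt

lemma continuous_ambientPath : Continuous S.ambientPath :=
  continuous_iff_continuousAt.2 fun u => (S.hasFDerivAt_ambientPath u).continuousAt

lemma continuous_ambientPathDeriv : Continuous fun p : S.H0 × S.H0 => S.ambientPathDeriv p.1 p.2 :=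
  continuous_transportDeriv.comp
    ((S.lieLp.continuous.comp continuous_fst).prodMk (S.lieLp.continuous.comp continuous_snd))

lemma ambientPath_apply_zero (u : S.H0) : S.ambientPath u 0 = 1 := transport_apply_zero _

lemma ambientPathDeriv_apply_zero (u X : S.H0) : S.ambientPathDeriv u X 0 = 0 :=
  transportDeriv_apply_zero _ _

lemma ambientPath_apply_projIcc (u : S.H0) (t : ℝ) :
    S.ambientPath u t = S.ambientPath u (projIcc (0 : ℝ) 1 zero_le_one t : ℝ) := by
  rw [ambientPath_eq, BoundedContinuousFunction.add_apply, BoundedContinuousFunction.add_apply,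
    volterra_apply_projIcc]
  rfl

variable {S}

lemma coeFn_lieLp_of_ae_eq {u : S.H0} {x : ℝ → 𝔤} (hu : u =ᵐ[unitMeasure] x) :
    S.lieLp u =ᵐ[unitMeasure] fun s => S.lie (x s) :=
  (S.coeFn_lieLp u).trans (hu.mono fun s hs => by simp only [hs])

lemma hasDerivWithinAt_ambientPath {u : S.H0} {x : ℝ → 𝔤} (hx : Continuous x)
    (hu : u =ᵐ[unitMeasure] x) {t : ℝ} (ht : t ∈ Icc (0 : ℝ) 1) :
    HasDerivWithinAt (S.ambientPath u) (S.ambientPath u t * S.lie (x t)) (Icc 0 1) t :=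
  hasDerivWithinAt_transport (S.lieL.continuous.comp hx) (coeFn_lieLp_of_ae_eq hu) ht

lemma hasDerivWithinAt_ambientPathDeriv {u X : S.H0} {x y : ℝ → 𝔤} (hx : Continuous x)
    (hu : u =ᵐ[unitMeasure] x) (hy : Continuous y) (hX : X =ᵐ[unitMeasure] y) {t : ℝ}
    (ht : t ∈ Icc (0 : ℝ) 1) :
    HasDerivWithinAt (S.ambientPathDeriv u X)
      (S.ambientPath u t * S.lie (y t) + S.ambientPathDeriv u X t * S.lie (x t)) (Icc 0 1) t :=
  hasDerivWithinAt_transportDeriv (S.lieL.continuous.comp hx) (coeFn_lieLp_of_ae_eq hu)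
    (S.lieL.continuous.comp hy) (coeFn_lieLp_of_ae_eq hX) ht

variable (S)

lemma ambientPath_toLp_mem_range (x : ℝ →ᵇ 𝔤) {t : ℝ} (ht : t ∈ Icc (0 : ℝ) 1) :
    S.ambientPath (x.toLp 2 unitMeasure ℝ) t ∈ range S.val := by
  refine mem_of_hasDerivWithinAt_mul S.isCompact_range_val (a := fun t => S.lie (x t))
    (C := ‖S.lieL‖ * ‖x‖) (fun t => S.lieL.le_opNorm_of_le (x.norm_coe_le_norm t)) ?_
    ⟨1, by rw [ambientPath_apply_zero, val_one]⟩
    (fun t ht => hasDerivWithinAt_ambientPath x.continuous (x.coeFn_toLp 2 unitMeasure ℝ) ht) ht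
  rintro t _ ⟨k, rfl⟩ r
  exact ⟨k * S.expG (r • x t), by rw [val_mul, val_expG, map_smul]⟩

lemma ambientPath_mem_range (u : S.H0) (t : ℝ) : S.ambientPath u t ∈ range S.val := by
  rw [ambientPath_apply_projIcc]
  obtain ⟨r, hr⟩ := projIcc (0 : ℝ) 1 zero_le_one t
  refine (denseRange_toLp_unitMeasure 𝔤).induction_on
    (p := fun u => S.ambientPath u r ∈ range S.val) u ?_
    fun x => S.ambientPath_toLp_mem_range x hr
  exact S.isCompact_range_val.isClosed.preimage
    ((BoundedContinuousFunction.evalCLM ℝ r).continuous.comp S.continuous_ambientPath)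

/-- The path `g_u` in `G`, extended to `ℝ` by constants. -/
def path (u : S.H0) (t : ℝ) : S.G := (S.ambientPath_mem_range u t).choose

lemma val_path (u : S.H0) (t : ℝ) : S.val (S.path u t) = S.ambientPath u t :=
  (S.ambientPath_mem_range u t).choose_spec

lemma path_zero (u : S.H0) : S.path u 0 = 1 :=
  S.val_injective (by rw [val_path, ambientPath_apply_zero, val_one])

lemma continuous_path (u : S.H0) : Continuous (S.path u) := by
  rw [S.isEmbedding_val.continuous_iff]
  exact (S.ambientPath u).continuous.congr fun t => (S.val_path u t).symm

lemma intervalIntegral_mul_lie (u : S.H0) (g : ℝ → 𝔸) {t : ℝ} (ht : t ∈ Icc (0 : ℝ) 1) :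
    ∫ s in (0 : ℝ)..t, g s * S.lie (u s) = ∫ s in (0 : ℝ)..t, g s * S.lieLp u s ∂unitMeasure := by
  rw [← intervalIntegral_unitMeasure _ ht]
  exact intervalIntegral_unitMeasure_congr
    ((S.coeFn_lieLp u).mono fun s hs => by simp only [hs]) t

lemma isTransport_path (u : S.H0) : S.IsTransport u (S.path u) := by
  refine ⟨(S.continuous_path u).continuousOn, fun t ht => ?_⟩
  simp only [val_path]
  rw [S.intervalIntegral_mul_lie u _ ht, ← volterra_apply]
  exact DFunLike.congr_fun (S.ambientPath_eq u) t

variable {S} in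
lemma IsTransport.eq_path {u : S.H0} {g : ℝ → S.G} (h : S.IsTransport u g) {t : ℝ}
    (ht : t ∈ Icc (0 : ℝ) 1) : g t = S.path u t := by
  obtain ⟨C, hC⟩ := S.exists_norm_val_le
  let γ : Icc (0 : ℝ) 1 → 𝔸 := fun r => S.val (g r)
  have hγ : Continuous (IccExtend zero_le_one γ) :=
    (S.continuous_val.comp_continuousOn h.1).domRestrict.Icc_extend'
  let k : ℝ →ᵇ 𝔸 := BoundedContinuousFunction.ofNormedAddCommGroup _ hγ C fun r => hC _
  have hk {r : ℝ} (hr : r ∈ Icc (0 : ℝ) 1) : k r = S.val (g r) := IccExtend_of_mem zero_le_one γ hr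
  have hvolterra {r : ℝ} (hr : r ∈ Icc (0 : ℝ) 1) : k r = 1 + volterra k (S.lieLp u) r := by
    rw [hk hr, h.2 r hr, volterra_apply, ← S.intervalIntegral_mul_lie u _ hr]
    congr 1
    refine intervalIntegral.integral_congr fun s hs => ?_
    rw [uIcc_of_le hr.1] at hs
    simp only [hk ⟨hs.1, hs.2.trans hr.2⟩]
  have hpath : k = S.ambientPath u := by
    refine eq_transport ?_
    ext r
    have hproj : k r = k (projIcc (0 : ℝ) 1 zero_le_one r : ℝ) :=
      (hk (projIcc (0 : ℝ) 1 zero_le_one r).2).symm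
    rw [hproj, hvolterra (Subtype.coe_prop _), ← volterra_apply_projIcc]
    rfl
  exact S.val_injective (by rw [val_path, ← hpath, hk ht])

lemma φ_eq (u : S.H0) : S.φ u = S.path u 1 := by
  have h : ∃ g, S.IsTransport u g := ⟨_, S.isTransport_path u⟩
  rw [φ, dif_pos h]
  exact h.choose_spec.eq_path ⟨zero_le_one, le_rfl⟩

lemma πφ_eq (u : S.H0) : S.πφ u = S.proj (S.path u 1) := by
  rw [πφ, φ_eq]

lemma hasFDerivAt_val_path (u : S.H0) (t : ℝ) :
    HasFDerivAt (fun v => S.val (S.path v t))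
      (BoundedContinuousFunction.evalCLM ℝ t ∘L S.ambientPathDeriv u) u := by
  simp only [val_path]
  exact (BoundedContinuousFunction.evalCLM (β := 𝔸) ℝ t).hasFDerivAt.comp u
    (S.hasFDerivAt_ambientPath u)

/-- The right-invariant velocity `(d/dr) g_{u + rX}(t) · g_u(t)⁻¹` of the paths `g_u`. -/
def pathVelocity (u : S.H0) (t : ℝ) : S.H0 →ₗ[ℝ] 𝔤 where
  toFun X := S.lieInv (S.ambientPathDeriv u X t * S.val (S.path u t)⁻¹)
  map_add' X Y := by simp [add_mul]
  map_smul' a X := by simp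

lemma pathVelocity_apply (u : S.H0) (t : ℝ) (X : S.H0) :
    S.pathVelocity u t X = S.lieInv (S.ambientPathDeriv u X t * S.val (S.path u t)⁻¹) := rfl

lemma ambientPathDeriv_eq (u : S.H0) (t : ℝ) (X : S.H0) :
    S.ambientPathDeriv u X t = S.lie (S.pathVelocity u t X) * S.val (S.path u t) :=
  (lie_lieInv_of_hasMFDerivAt (S.hasFDerivAt_val_path u t).hasMFDerivAt X).symm

lemma pathVelocity_zero (u X : S.H0) : S.pathVelocity u 0 X = 0 := by
  rw [pathVelocity_apply, ambientPathDeriv_apply_zero, zero_mul, map_zero]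

lemma isDifferentialAt_πφ (u : S.H0) :
    S.IsDifferentialAt 𝓘(ℝ, S.H0) S.πφ u (S.dπφ u) := by
  have h := isDifferentialAt_of_lift (f := S.πφ) (S.hasFDerivAt_val_path u 1).hasMFDerivAt
    (.of_forall fun v => (S.πφ_eq v).symm)
  rw [dπφ, h.diff_eq]
  exact h

lemma dπφ_apply (u X : S.H0) : S.dπφ u X = S.tanProj (S.path u 1) (S.pathVelocity u 1 X) := by
  have h := isDifferentialAt_of_lift (f := S.πφ) (S.hasFDerivAt_val_path u 1).hasMFDerivAt
    (.of_forall fun v => (S.πφ_eq v).symm)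
  rw [dπφ, h.diff_eq, diffOfLift_apply]
  rfl

lemma exists_unit_ambientPath (u : S.H0) :
    ∃ x : (ℝ →ᵇ 𝔸)ˣ, (x : ℝ →ᵇ 𝔸) = S.ambientPath u ∧
      ∀ t, ((x⁻¹ : (ℝ →ᵇ 𝔸)ˣ) : ℝ →ᵇ 𝔸) t = S.val (S.path u t)⁻¹ := by
  obtain ⟨C, hC⟩ := S.exists_norm_val_le
  let k : ℝ →ᵇ 𝔸 := BoundedContinuousFunction.ofNormedAddCommGroup _
    (S.continuous_val.comp (S.continuous_path u).inv) C fun r => hC _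
  have hpathk : S.ambientPath u * k = 1 := by
    ext t
    change S.ambientPath u t * S.val (S.path u t)⁻¹ = 1
    rw [← val_path, val_mul_inv]
  have hkpath : k * S.ambientPath u = 1 := by
    ext t
    change S.val (S.path u t)⁻¹ * S.ambientPath u t = 1
    rw [← val_path, val_inv_mul]
  exact ⟨⟨S.ambientPath u, k, hpathk, hkpath⟩, rfl, fun t => rfl⟩

lemma ringInverse_ambientPath_apply (u : S.H0) (t : ℝ) :
    Ring.inverse (S.ambientPath u) t = S.val (S.path u t)⁻¹ := by
  obtain ⟨x, hx, h⟩ := S.exists_unit_ambientPath u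
  rw [← hx, Ring.inverse_unit, h]

lemma differentiable_ringInverse_ambientPath :
    Differentiable ℝ fun u : S.H0 => Ring.inverse (S.ambientPath u) := by
  intro u
  obtain ⟨x, hx, -⟩ := S.exists_unit_ambientPath u
  have h := (hasFDerivAt_ringInverse (𝕜 := ℝ) x).differentiableAt
  rw [hx] at h
  exact h.comp u (S.hasFDerivAt_ambientPath u).differentiableAt

variable {S} in
lemma hasDerivWithinAt_val_path_inv {u : S.H0} {x : ℝ → 𝔤} (hx : Continuous x)
    (hu : u =ᵐ[unitMeasure] x) {t : ℝ} (ht : t ∈ Icc (0 : ℝ) 1) :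
    HasDerivWithinAt (fun t => S.val (S.path u t)⁻¹)
      (-(S.lie (x t) * S.val (S.path u t)⁻¹)) (Icc 0 1) t := by
  have hinv := hasFDerivAt_ringInverse (𝕜 := ℝ) (S.path u t : 𝔸ˣ)
  have hval : ((S.path u t : 𝔸ˣ) : 𝔸) = S.ambientPath u t := S.val_path u t
  rw [hval] at hinv
  have h := hinv.comp_hasDerivWithinAt t (hasDerivWithinAt_ambientPath hx hu ht)
  refine (h.congr_of_mem (fun r _ => ?_) ht).congr_deriv ?_
  · rw [Function.comp_apply, ← val_path, ringInverse_val]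
  · change -(S.val (S.path u t)⁻¹ * (S.ambientPath u t * S.lie (x t)) * S.val (S.path u t)⁻¹) = _
    rw [← mul_assoc, ← val_path, val_inv_mul, one_mul]

variable {S} in
lemma hasDerivWithinAt_pathVelocity {u X : S.H0} {x y : ℝ → 𝔤} (hx : Continuous x)
    (hu : u =ᵐ[unitMeasure] x) (hy : Continuous y) (hX : X =ᵐ[unitMeasure] y) {t : ℝ}
    (ht : t ∈ Icc (0 : ℝ) 1) :
    HasDerivWithinAt (fun t => S.pathVelocity u t X) (S.Ad (S.path u t) (y t)) (Icc 0 1) t := by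
  have h := (hasDerivWithinAt_ambientPathDeriv hx hu hy hX ht).mul
    (hasDerivWithinAt_val_path_inv hx hu ht)
  refine (S.lieInv.hasFDerivAt.comp_hasDerivWithinAt t h).congr_deriv ?_
  rw [Ad_apply, val_path]
  congr 1
  simp only [add_mul, mul_neg, mul_assoc]
  abel

lemma continuous_pathVelocity_one : Continuous fun p : S.H0 × S.H0 => S.pathVelocity p.1 1 p.2 := by
  have heval := (BoundedContinuousFunction.evalCLM (β := 𝔸) ℝ (1 : ℝ)).continuous
  have hinv : Continuous fun p : S.H0 × S.H0 => Ring.inverse (S.ambientPath p.1) 1 :=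
    heval.comp (S.differentiable_ringInverse_ambientPath.continuous.comp continuous_fst)
  refine (S.lieInv.continuous.comp
    ((heval.comp S.continuous_ambientPathDeriv).mul hinv)).congr fun p => ?_
  rw [pathVelocity_apply, ← ringInverse_ambientPath_apply]
  rfl

/-! ### Horizontal vectors of `π ∘ φ` -/

/-- The inclusion of `𝔤` into the paths in `𝔸`, as constant paths. -/
def constLie : 𝔤 →L[ℝ] (ℝ →ᵇ 𝔸) :=
  LinearMap.toContinuousLinearMap
    { toFun := fun v => BoundedContinuousFunction.const ℝ (S.lie v)
      map_add' := fun v w => by ext t; simp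
      map_smul' := fun a v => by ext t; simp }

/-- The path `s ↦ Ad(g_u(s)⁻¹) v`. -/
def adInvPath (u : S.H0) (v : 𝔤) : ℝ →ᵇ 𝔤 :=
  S.lieInv.compLeftContinuousBounded ℝ
    (Ring.inverse (S.ambientPath u) * S.constLie v * S.ambientPath u)

lemma adInvPath_apply (u : S.H0) (v : 𝔤) (s : ℝ) :
    S.adInvPath u v s = S.Ad (S.path u s)⁻¹ v := by
  rw [Ad_apply, inv_inv]
  change S.lieInv (Ring.inverse (S.ambientPath u) s * S.lie v * S.ambientPath u s) = _
  rw [ringInverse_ambientPath_apply, val_path]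

lemma differentiable_adInvPath : Differentiable ℝ fun p : S.H0 × 𝔤 => S.adInvPath p.1 p.2 := by
  have hinv : Differentiable ℝ fun p : S.H0 × 𝔤 => Ring.inverse (S.ambientPath p.1) :=
    S.differentiable_ringInverse_ambientPath.comp differentiable_fst
  have hconst : Differentiable ℝ fun p : S.H0 × 𝔤 => S.constLie p.2 :=
    S.constLie.differentiable.comp differentiable_snd
  have hpath : Differentiable ℝ fun p : S.H0 × 𝔤 => S.ambientPath p.1 :=
    fun p => (S.hasFDerivAt_ambientPath p.1).differentiableAt.comp p differentiableAt_fst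
  exact (S.lieInv.compLeftContinuousBounded ℝ).differentiable.comp ((hinv.mul hconst).mul hpath)

/-- The element `s ↦ Ad(g_u(s)⁻¹) v` of `H⁰([0,1], 𝔤)`, which is the horizontal lift to `u` of a
tangent vector `v` of `G/K`. -/
def horizontal (u : S.H0) : 𝔤 →ₗ[ℝ] S.H0 where
  toFun v := (S.adInvPath u v).toLp 2 unitMeasure ℝ
  map_add' v w := by
    rw [← map_add]
    congr 1
    ext t
    simp [adInvPath_apply]
  map_smul' a v := by
    rw [RingHom.id_apply, ← map_smul]
    congr 1
    ext t
    simp [adInvPath_apply]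

lemma horizontal_apply (u : S.H0) (v : 𝔤) :
    S.horizontal u v = (S.adInvPath u v).toLp 2 unitMeasure ℝ := rfl

lemma differentiable_horizontal : Differentiable ℝ fun p : S.H0 × 𝔤 => S.horizontal p.1 p.2 :=
  (BoundedContinuousFunction.toLp 2 unitMeasure ℝ :
    (ℝ →ᵇ 𝔤) →L[ℝ] S.H0).differentiable.comp S.differentiable_adInvPath

attribute [irreducible] ambientPath ambientPathDeriv pathVelocity adInvPath horizontal

variable {S} in
lemma inner_horizontal_eq_intervalIntegral (u : S.H0) (v : 𝔤) {X : S.H0} {y : ℝ → 𝔤}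
    (hX : X =ᵐ[unitMeasure] y) :
    ⟪S.horizontal u v, X⟫ = ∫ s in (0 : ℝ)..1, ⟪v, S.Ad (S.path u s) (y s)⟫ := by
  rw [L2.inner_def, intervalIntegral.integral_of_le zero_le_one, ← integral_Icc_eq_integral_Ioc,
    horizontal_apply]
  refine integral_congr_ae ?_
  filter_upwards [(S.adInvPath u v).coeFn_toLp 2 unitMeasure ℝ, hX] with s hs hXs
  rw [hs, hXs, adInvPath_apply, ← S.inner_Ad (S.path u s), Ad_Ad_inv]

lemma inner_horizontal_horizontal (u : S.H0) (v w : 𝔤) :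
    ⟪S.horizontal u v, S.horizontal u w⟫ = ⟪v, w⟫ := by
  rw [inner_horizontal_eq_intervalIntegral u v
    (S.horizontal_apply u w ▸ (S.adInvPath u w).coeFn_toLp 2 unitMeasure ℝ)]
  simp [adInvPath_apply]

lemma inner_horizontal_toLp (x y : ℝ →ᵇ 𝔤) (v : 𝔤) :
    ⟪S.horizontal (x.toLp 2 unitMeasure ℝ) v, y.toLp 2 unitMeasure ℝ⟫ =
      ⟪v, S.pathVelocity (x.toLp 2 unitMeasure ℝ) 1 (y.toLp 2 unitMeasure ℝ)⟫ := by
  let u : S.H0 := x.toLp 2 unitMeasure ℝ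
  let X : S.H0 := y.toLp 2 unitMeasure ℝ
  have hX : X =ᵐ[unitMeasure] y := y.coeFn_toLp 2 unitMeasure ℝ
  have hderiv (t : ℝ) (ht : t ∈ Icc (0 : ℝ) 1) :
      HasDerivWithinAt (fun t => ⟪v, S.pathVelocity u t X⟫) ⟪v, S.Ad (S.path u t) (y t)⟫
        (Icc 0 1) t :=
    (innerSL ℝ v).hasFDerivAt.comp_hasDerivWithinAt t
      (hasDerivWithinAt_pathVelocity x.continuous (x.coeFn_toLp 2 unitMeasure ℝ) y.continuous hX ht)
  have hcont : Continuous fun t => ⟪v, S.Ad (S.path u t) (y t)⟫ := by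
    refine ((S.adInvPath u v).continuous.inner y.continuous).congr fun t => ?_
    rw [adInvPath_apply, ← S.inner_Ad (S.path u t), Ad_Ad_inv]
  change ⟪S.horizontal u v, X⟫ = ⟪v, S.pathVelocity u 1 X⟫
  rw [inner_horizontal_eq_intervalIntegral u v hX,
    intervalIntegral.integral_eq_sub_of_hasDerivAt_of_le zero_le_one
      (fun t ht => (hderiv t ht).continuousWithinAt)
      (fun t ht => (hderiv t ⟨ht.1.le, ht.2.le⟩).hasDerivAt (Icc_mem_nhds ht.1 ht.2))
      (hcont.intervalIntegrable _ _), pathVelocity_zero, inner_zero_right, sub_zero]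

lemma inner_horizontal (u X : S.H0) (v : 𝔤) :
    ⟪S.horizontal u v, X⟫ = ⟪v, S.pathVelocity u 1 X⟫ := by
  refine (denseRange_toLp_unitMeasure 𝔤).induction_on₂
    (p := fun u X : S.H0 => ⟪S.horizontal u v, X⟫ = ⟪v, S.pathVelocity u 1 X⟫) ?_
    (fun x y => S.inner_horizontal_toLp x y v) u X
  have hhor : Continuous fun p : S.H0 × S.H0 => S.horizontal p.1 v :=
    S.differentiable_horizontal.continuous.comp (continuous_fst.prodMk continuous_const)
  exact isClosed_eq (hhor.inner continuous_snd)
    (continuous_const.inner S.continuous_pathVelocity_one)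

lemma dπφ_mem_tangent (u X : S.H0) : S.dπφ u X ∈ S.tangent (S.πφ u) :=
  (S.isDifferentialAt_πφ u).mem_tangent X

variable {S}

lemma inner_horizontal_eq_inner_dπφ {u : S.H0} (X : S.H0) {v : 𝔤} (hv : v ∈ S.tangent (S.πφ u)) :
    ⟪S.horizontal u v, X⟫ = ⟪v, S.dπφ u X⟫ := by
  rw [πφ_eq] at hv
  have h := inner_tangent_isotropy (S.sub_tanProj_mem (S.path u 1) (S.pathVelocity u 1 X)) hv
  rw [inner_horizontal, dπφ_apply, ← sub_eq_zero, ← inner_sub_right, h]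

lemma dπφ_horizontal {u : S.H0} {v : 𝔤} (hv : v ∈ S.tangent (S.πφ u)) :
    S.dπφ u (S.horizontal u v) = v := by
  have hd : S.dπφ u (S.horizontal u v) - v ∈ S.tangent (S.πφ u) :=
    sub_mem (S.dπφ_mem_tangent u _) hv
  refine sub_eq_zero.1 ((inner_self_eq_zero (𝕜 := ℝ)).1 ?_)
  rw [inner_sub_right, ← inner_horizontal_eq_inner_dπφ _ hd, inner_horizontal_horizontal, sub_self]

lemma horizontal_mem_ker_dπφ_orthogonal {u : S.H0} {v : 𝔤} (hv : v ∈ S.tangent (S.πφ u)) :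
    S.horizontal u v ∈ (LinearMap.ker (S.dπφ u).toLinearMap)ᗮ := by
  refine (Submodule.mem_orthogonal' _ _).2 fun X hX => ?_
  have hX : S.dπφ u X = 0 := hX
  rw [inner_horizontal_eq_inner_dπφ X hv, hX, inner_zero_right]

lemma hlift_eq {u : S.H0} {v : 𝔤} (hv : v ∈ S.tangent (S.πφ u)) :
    S.hlift u v = S.horizontal u v := by
  have hhor := horizontal_mem_ker_dπφ_orthogonal hv
  have hspec : S.hlift u v ∈ (LinearMap.ker (S.dπφ u).toLinearMap)ᗮ ∧ S.dπφ u (S.hlift u v) = v :=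
    Classical.epsilon_spec
      (p := fun n => n ∈ (LinearMap.ker (S.dπφ u).toLinearMap)ᗮ ∧ S.dπφ u n = v)
      ⟨S.horizontal u v, hhor, dπφ_horizontal hv⟩
  have hker : S.dπφ u (S.hlift u v - S.horizontal u v) = 0 := by
    rw [map_sub, hspec.2, dπφ_horizontal hv, sub_self]
  exact sub_eq_zero.1 ((inner_self_eq_zero (𝕜 := ℝ)).1
    ((Submodule.mem_orthogonal _ _).1 (sub_mem hspec.1 hhor) _ hker))

section Lift

variable {E : Type*} [NormedAddCommGroup E] [NormedSpace ℝ E]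
  {M : Type*} [TopologicalSpace M] [ChartedSpace E M] {f : M → S.Q} {p : M × S.H0}

lemma mem_tangent_of_mem_lift (hp : p ∈ S.lift f) {w : 𝔤} (hw : w ∈ S.normalOf E f p.1) :
    w ∈ S.tangent (S.πφ p.2) := by
  have hfp : f p.1 = S.πφ p.2 := hp
  exact hfp ▸ hw.1

lemma horizontal_mem_normalLift (hp : p ∈ S.lift f) {w : 𝔤} (hw : w ∈ S.normalOf E f p.1) :
    S.horizontal p.2 w ∈ S.normalLift E f p := by
  refine (Submodule.mem_orthogonal' _ _).2 fun X hX => ?_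
  rw [inner_horizontal_eq_inner_dπφ _ (mem_tangent_of_mem_lift hp hw)]
  exact (Submodule.mem_orthogonal' _ _).1 hw.2 _ hX

lemma IsImmersion.mem_tangentLift (hf : S.IsImmersion E f) (hp : p ∈ S.lift f) {X : S.H0}
    (h : ∀ w ∈ S.normalOf E f p.1, ⟪S.horizontal p.2 w, X⟫ = 0) : X ∈ S.tangentLift E f p := by
  have hfp : f p.1 = S.πφ p.2 := hp
  refine hf.mem_tangentOf (hfp ▸ S.dπφ_mem_tangent p.2 X) fun w hw => ?_
  rw [real_inner_comm]
  exact (inner_horizontal_eq_inner_dπφ X (mem_tangent_of_mem_lift hp hw)).symm.trans (h w hw)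

lemma IsImmersion.exists_sub_horizontal_mem_tangentLift (hf : S.IsImmersion E f)
    (hp : p ∈ S.lift f) (X : S.H0) :
    ∃ w ∈ S.normalOf E f p.1, X - S.horizontal p.2 w ∈ S.tangentLift E f p := by
  refine ⟨(S.normalOf E f p.1).starProjection (S.dπφ p.2 X), Submodule.starProjection_apply_mem _ _,
    hf.mem_tangentLift hp fun w hw => ?_⟩
  rw [inner_sub_right, inner_horizontal_eq_inner_dπφ _ (mem_tangent_of_mem_lift hp hw),
    inner_horizontal_horizontal, ← inner_sub_right]
  exact (Submodule.mem_orthogonal _ _).1 (Submodule.sub_starProjection_mem_orthogonal _) _ hw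

lemma IsImmersion.exists_eq_horizontal (hf : S.IsImmersion E f) (hp : p ∈ S.lift f) {n : S.H0}
    (hn : n ∈ S.normalLift E f p) : ∃ w ∈ S.normalOf E f p.1, n = S.horizontal p.2 w := by
  obtain ⟨w, hw, htan⟩ := hf.exists_sub_horizontal_mem_tangentLift hp n
  refine ⟨w, hw, sub_eq_zero.1 ((inner_self_eq_zero (𝕜 := ℝ)).1 ?_)⟩
  exact (Submodule.mem_orthogonal _ _).1 (sub_mem hn (horizontal_mem_normalLift hp hw)) _ htan

end Lift

end CompactSymmetricSpace

namespace CompactSymmetricSpace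

variable {𝔸 𝔤 : Type*} [NormedRing 𝔸] [NormedAlgebra ℝ 𝔸] [FiniteDimensional ℝ 𝔸]
  [NormedAddCommGroup 𝔤] [InnerProductSpace ℝ 𝔤] [FiniteDimensional ℝ 𝔤]

variable (S : CompactSymmetricSpace 𝔸 𝔤)

/-! ### The derivative of horizontal lifts -/

/-- The derivative of `(u, v) ↦ (s ↦ Ad(g_u(s)⁻¹) v)`. -/
def adInvPathDeriv (u : S.H0) (v : 𝔤) : S.H0 × 𝔤 →L[ℝ] (ℝ →ᵇ 𝔤) :=
  fderiv ℝ (fun p : S.H0 × 𝔤 => S.adInvPath p.1 p.2) (u, v)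

/-- The derivative of the horizontal lift `(u, v) ↦ horizontal u v`. -/
def horizontalDeriv (u : S.H0) (v : 𝔤) : S.H0 × 𝔤 →L[ℝ] S.H0 :=
  (BoundedContinuousFunction.toLp 2 unitMeasure ℝ) ∘L S.adInvPathDeriv u v

lemma coeFn_horizontalDeriv (u : S.H0) (v : 𝔤) (Y : S.H0 × 𝔤) :
    S.horizontalDeriv u v Y =ᵐ[unitMeasure] S.adInvPathDeriv u v Y :=
  (S.adInvPathDeriv u v Y).coeFn_toLp 2 unitMeasure ℝ

variable {S} in
lemma hasDerivAt_adInvPath {u : ℝ → S.H0} {v : ℝ → 𝔤} {X : S.H0} {v' : 𝔤}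
    (hu : HasDerivAt u X 0) (hv : HasDerivAt v v' 0) :
    HasDerivAt (fun t => S.adInvPath (u t) (v t)) (S.adInvPathDeriv (u 0) (v 0) (X, v')) 0 :=
  (S.differentiable_adInvPath (u 0, v 0)).hasFDerivAt.comp_hasDerivAt (0 : ℝ)
    (f := fun t => (u t, v t)) (hu.prodMk hv)

variable {S} in
lemma hasDerivAt_horizontal {u : ℝ → S.H0} {v : ℝ → 𝔤} {X : S.H0} {v' : 𝔤}
    (hu : HasDerivAt u X 0) (hv : HasDerivAt v v' 0) :
    HasDerivAt (fun t => S.horizontal (u t) (v t)) (S.horizontalDeriv (u 0) (v 0) (X, v')) 0 := by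
  simp only [horizontal_apply]
  exact (BoundedContinuousFunction.toLp 2 unitMeasure ℝ :
    (ℝ →ᵇ 𝔤) →L[ℝ] S.H0).hasFDerivAt.comp_hasDerivAt (0 : ℝ) (hasDerivAt_adInvPath hu hv)

lemma adInvPathDeriv_apply (u X : S.H0) (v v' : 𝔤) (s : ℝ) :
    S.adInvPathDeriv u v (X, v') s =
      S.Ad (S.path u s)⁻¹ (v' - S.bracket (S.pathVelocity u s X) v) := by
  let U (r : ℝ) : S.H0 := u + r • X
  let V (r : ℝ) : 𝔤 := v + r • v'
  have hU : HasDerivAt U X 0 := by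
    simpa [U] using ((hasDerivAt_id (0 : ℝ)).smul_const X).const_add u
  have hV : HasDerivAt V v' 0 := by
    simpa [V] using ((hasDerivAt_id (0 : ℝ)).smul_const v').const_add v
  have hU0 : U 0 = u := by simp [U]
  have hV0 : V 0 = v := by simp [V]
  have hpath := (S.hasFDerivAt_val_path (U 0) s).comp_hasDerivAt (0 : ℝ) hU
  have hval : HasDerivAt (fun r => S.val (S.path (U r) s))
      (S.lie (S.pathVelocity (U 0) s X) * S.val (S.path (U 0) s)) 0 :=
    hpath.congr_deriv (S.ambientPathDeriv_eq (U 0) s X)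
  have hAd := hasDerivAt_Ad_inv hval hV
  have heval := (BoundedContinuousFunction.evalCLM (β := 𝔤) ℝ s).hasFDerivAt.comp_hasDerivAt (0 : ℝ)
    (hasDerivAt_adInvPath hU hV)
  rw [hU0, hV0] at hAd heval
  exact heval.unique (hAd.congr_of_eventuallyEq (.of_forall fun r => S.adInvPath_apply _ _ _))

variable {S}

lemma inner_horizontal_horizontalDeriv (u X : S.H0) {v w : 𝔤} (v' : 𝔤) (h : S.bracket v w = 0) :
    ⟪S.horizontal u w, S.horizontalDeriv u v (X, v')⟫ = ⟪w, v'⟫ := by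
  have hbracket (ξ : 𝔤) : ⟪w, S.bracket ξ v⟫ = 0 := by
    rw [bracket_swap, inner_neg_right, real_inner_comm, inner_bracket_left, h, inner_zero_right,
      neg_zero, neg_zero]
  rw [inner_horizontal_eq_intervalIntegral u w (S.coeFn_horizontalDeriv u v (X, v'))]
  simp [adInvPathDeriv_apply, Ad_Ad_inv, inner_sub_right, hbracket]

/- At `s = 0` the path `g_u` is constantly `1`, so that there the derivative of the path
`s ↦ Ad(g_u(s)⁻¹) v` is `v'`. -/
lemma eq_of_horizontalDeriv_eq_horizontal {u X : S.H0} {v v' w : 𝔤}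
    (h : S.horizontalDeriv u v (X, v') = S.horizontal u w) : w = v' := by
  have hae : S.adInvPathDeriv u v (X, v') =ᵐ[unitMeasure] S.adInvPath u w := by
    refine (S.coeFn_horizontalDeriv u v (X, v')).symm.trans ?_
    rw [h, horizontal_apply]
    exact (S.adInvPath u w).coeFn_toLp 2 unitMeasure ℝ
  have hzero := Measure.eqOn_Icc_of_ae_eq volume zero_ne_one hae
    (S.adInvPathDeriv u v (X, v')).continuous.continuousOn (S.adInvPath u w).continuous.continuousOn
    (left_mem_Icc.2 zero_le_one)
  rw [adInvPathDeriv_apply, adInvPath_apply, path_zero, pathVelocity_zero, inv_one, Ad_one, Ad_one,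
    map_zero, _root_.zero_apply, sub_zero] at hzero
  exact hzero.symm

section Lift

variable {E : Type*} [NormedAddCommGroup E] [NormedSpace ℝ E]
  {M : Type*} [TopologicalSpace M] [ChartedSpace E M] {f : M → S.Q} {p : M × S.H0}
  {c : ℝ → M × S.H0} {X : S.H0} {ν : M → 𝔤}

lemma IsLiftCurve.mem_lift (hc : S.IsLiftCurve E f p c X) : p ∈ S.lift f := hc.2.1 ▸ hc.1 0

lemma horizontal_mem_DNLift {D : M → Submodule ℝ 𝔤} (hp : p ∈ S.lift f) {w : 𝔤}
    (hw : w ∈ S.normalOf E f p.1) (hwD : w ∈ D p.1) :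
    S.horizontal p.2 w ∈ S.DNLift E f D p := by
  refine ⟨horizontal_mem_normalLift hp hw, ?_⟩
  change S.dπφ p.2 (S.horizontal p.2 w) ∈ D p.1
  rwa [dπφ_horizontal (mem_tangent_of_mem_lift hp hw)]

lemma DT_sup_DT0_le {D : Fin 2 → M → Submodule ℝ 𝔤} {i j : Fin 2} (hij : j ≠ i) :
    S.DT E f D j p ⊔ S.DT0 E f p ≤ S.shapeKer E f p (S.DNLift E f (D i) p) := by
  have hji : j + 1 = i := by omega
  refine sup_le ?_ (inf_le_inf_left _ (le_iInf₂ fun n hn => iInf₂_le n hn.1))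
  rw [DT, hji]
  exact inf_le_left

lemma shape_eq_zero_of_mem_shapeKer {V : Submodule ℝ S.H0} (hX : X ∈ S.shapeKer E f p V)
    {n : S.H0} (hn : n ∈ V) : S.shape E f p n X = 0 :=
  (Submodule.mem_iInf _).1 ((Submodule.mem_iInf _).1 hX.2 n) hn

namespace IsParallelNormal

lemma fieldLift_eq (hν : S.IsParallelNormal E f ν) (hp : p ∈ S.lift f) :
    S.fieldLift ν p = S.horizontal p.2 (ν p.1) :=
  hlift_eq (mem_tangent_of_mem_lift hp (hν.mem_normalOf p.1))

lemma fieldLift_mem_normalLift (hν : S.IsParallelNormal E f ν) (hp : p ∈ S.lift f) :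
    S.fieldLift ν p ∈ S.normalLift E f p := by
  rw [hν.fieldLift_eq hp]
  exact horizontal_mem_normalLift hp (hν.mem_normalOf p.1)

end IsParallelNormal

lemma IsLiftCurve.exists_velocity (hf : S.IsImmersion E f) (hc : S.IsLiftCurve E f p c X) :
    ∃ Y : E, S.diff 𝓘(ℝ, E) f p.1 Y = S.dπφ p.2 X ∧ ∀ ν, S.IsParallelNormal E f ν →
      HasDerivAt (fun t => S.fieldLift ν (c t))
        (S.horizontalDeriv p.2 (ν p.1) (X, mfderiv 𝓘(ℝ, E) 𝓘(ℝ, 𝔤) ν p.1 Y)) 0 := by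
  obtain ⟨hlift, rfl, hfst, hsnd⟩ := hc
  let c' : ℝ →L[ℝ] E := mfderiv 𝓘(ℝ, ℝ) 𝓘(ℝ, E) (fun t => (c t).1) 0
  refine ⟨c' 1, ?_, fun ν hν => ?_⟩
  · have hdf := (hf.isDifferentialAt (c 0).1).comp_curve (c := fun t => (c t).1) hfst.hasMFDerivAt
    have hdπφ := (S.isDifferentialAt_πφ (c 0).2).comp_curve (c := fun t => (c t).2)
      hsnd.hasFDerivAt.hasMFDerivAt
    have hcurve : (fun t => f (c t).1) = fun t => S.πφ (c t).2 := funext fun t => hlift t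
    rw [hcurve] at hdf
    refine (DFunLike.congr_fun (hdf.unique hdπφ) (1 : ℝ)).trans ?_
    exact congrArg (S.dπφ (c 0).2) (one_smul ℝ X)
  · let dν : E →L[ℝ] 𝔤 := mfderiv 𝓘(ℝ, E) 𝓘(ℝ, 𝔤) ν (c 0).1
    have hcomp : HasFDerivAt (fun t => ν (c t).1) (dν ∘L c') 0 :=
      hasMFDerivAt_iff_hasFDerivAt.1
        (HasMFDerivAt.comp (0 : ℝ) (hν.hasMFDerivAt (c 0).1) hfst.hasMFDerivAt)
    exact (hasDerivAt_horizontal hsnd hcomp.hasDerivAt).congr_of_eventuallyEq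
      (.of_forall fun t => hν.fieldLift_eq (hlift t))

lemma IsParallelNormal.exists_forall_hasDerivAt_fieldLift (hν : S.IsParallelNormal E f ν)
    (hf : S.IsImmersion E f) (p : M × S.H0) :
    ∃ B : S.H0 →L[ℝ] S.H0, ∀ c X, S.IsLiftCurve E f p c X →
      HasDerivAt (fun t => S.fieldLift ν (c t)) (B X) 0 := by
  let df : E →L[ℝ] 𝔤 := S.diff 𝓘(ℝ, E) f p.1
  let dν : E →L[ℝ] 𝔤 := mfderiv 𝓘(ℝ, E) 𝓘(ℝ, 𝔤) ν p.1
  obtain ⟨ρ, hρ⟩ := df.toLinearMap.exists_leftInverse_of_injective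
    (LinearMap.ker_eq_bot.2 (hf.2 p.1))
  refine ⟨S.horizontalDeriv p.2 (ν p.1) ∘L (ContinuousLinearMap.id ℝ S.H0).prod
    (dν ∘L LinearMap.toContinuousLinearMap ρ ∘L S.dπφ p.2), fun c X hc => ?_⟩
  obtain ⟨Y, hY, hderiv⟩ := hc.exists_velocity hf
  have hYρ : ρ (S.dπφ p.2 X) = Y := hY ▸ LinearMap.congr_fun hρ Y
  refine (hderiv ν hν).congr_deriv ?_
  change _ = S.horizontalDeriv p.2 (ν p.1) (X, dν (ρ (S.dπφ p.2 X)))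
  rw [hYρ]
  rfl

variable [PreconnectedSpace M] [IsManifold 𝓘(ℝ, E) ∞ M]

namespace HasTrivialNormalHolonomy

lemma exists_frame (h : HasTrivialNormalHolonomy E f) (m : M) :
    ∃ (d : ℕ) (ν : Fin d → M → 𝔤), (∀ k, S.IsParallelNormal E f (ν k)) ∧
      ∀ m', ∀ w ∈ S.normalOf E f m', w = ∑ k, ⟪ν k m', w⟫ • ν k m' := by
  let b := stdOrthonormalBasis ℝ (S.normalOf E f m)
  choose ν hν hνb using fun k => h m (b k) (b k).2
  refine ⟨_, ν, hν, fun m' w hw => ?_⟩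
  obtain ⟨μ, hμ, rfl⟩ := h m' w hw
  have hm : μ m = ∑ k, ⟪ν k m, μ m⟫ • ν k m := by
    have hsum := congrArg Subtype.val (b.sum_repr' ⟨μ m, hμ.mem_normalOf m⟩)
    simpa only [hνb, Submodule.coe_sum, Submodule.coe_smul, Submodule.coe_inner] using hsum.symm
  have heq := hμ.eq_of_eq
    (IsParallelNormal.sum Finset.univ fun k => (hν k).const_smul ⟪ν k m, μ m⟫) hm
  simp only [(hν _).inner_eq hμ m' m]
  exact congrFun heq m'

lemma deriv_mem_normalLift (h : HasTrivialNormalHolonomy E f) (hf : S.IsImmersion E f)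
    (hc : S.IsLiftCurve E f p c X) {η : ℝ → S.H0} {η' : S.H0}
    (hη : ∀ t, η t ∈ S.normalLift E f (c t)) (hη0 : η 0 = 0) (hη' : HasDerivAt η η' 0) :
    η' ∈ S.normalLift E f p := by
  obtain ⟨d, ν, hν, hframe⟩ := h.exists_frame p.1
  obtain ⟨Y, -, hY⟩ := hc.exists_velocity hf
  have hexpand (t : ℝ) :
      η t = ∑ k, ⟪S.fieldLift (ν k) (c t), η t⟫ • S.fieldLift (ν k) (c t) := by
    obtain ⟨w, hw, hηw⟩ := hf.exists_eq_horizontal (hc.1 t) (hη t)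
    simp only [(hν _).fieldLift_eq (hc.1 t), hηw, inner_horizontal_horizontal, ← map_smul,
      ← map_sum, ← hframe _ w hw]
  have hsum : HasDerivAt η (∑ k, ⟪S.fieldLift (ν k) p, η'⟫ • S.fieldLift (ν k) p) 0 := by
    refine (HasDerivAt.fun_sum fun k _ =>
      (((hY _ (hν k)).inner ℝ hη').fun_smul (hY _ (hν k))).congr_deriv ?_).congr_of_eventuallyEq
      (.of_forall hexpand)
    rw [hη0, hc.2.1, inner_zero_right, inner_zero_right, add_zero, zero_smul, zero_add]
  rw [hη'.unique hsum]
  exact Submodule.sum_mem _ fun k _ =>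
    Submodule.smul_mem _ _ ((hν k).fieldLift_mem_normalLift hc.mem_lift)

lemma exists_isShapeOperator (h : HasTrivialNormalHolonomy E f) (hf : S.IsImmersion E f)
    (hp : p ∈ S.lift f) {n : S.H0} (hn : n ∈ S.normalLift E f p) :
    ∃ A, S.IsShapeOperator E f p n A := by
  obtain ⟨w, hw, rfl⟩ := hf.exists_eq_horizontal hp hn
  obtain ⟨ν, hν, rfl⟩ := h p.1 w hw
  obtain ⟨B, hB⟩ := hν.exists_forall_hasDerivAt_fieldLift hf p
  have : CompleteSpace (S.normalLift E f p) := Submodule.instOrthogonalCompleteSpace _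
  let P := (S.normalLift E f p).starProjection
  have hPmem (Z : S.H0) : P Z ∈ S.normalLift E f p := Submodule.starProjection_apply_mem _ _
  refine ⟨P ∘L B - B, fun Z _ => hf.mem_tangentLift hp fun w hw => ?_,
    fun c X η η' hc hη hη0 hη' => ?_⟩
  · change ⟪S.horizontal p.2 w, P (B Z) - B Z⟫ = 0
    rw [← neg_sub, inner_neg_right, neg_eq_zero]
    exact (Submodule.mem_orthogonal _ _).1 (Submodule.sub_starProjection_mem_orthogonal _) _
      (horizontal_mem_normalLift hp hw)
  · have hdiff : η' - B X ∈ S.normalLift E f p := by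
      refine h.deriv_mem_normalLift hf hc (η := fun t => η t - S.fieldLift ν (c t))
        (fun t => sub_mem (hη t) (hν.fieldLift_mem_normalLift (hc.1 t))) ?_
        (hη'.fun_sub (hB c X hc))
      rw [hη0, hc.2.1, hν.fieldLift_eq hp, sub_self]
    have hsum : η' + (P (B X) - B X) = η' - B X + P (B X) := by abel
    exact hsum ▸ add_mem hdiff (hPmem (B X))

lemma isShapeOperator_shape (h : HasTrivialNormalHolonomy E f) (hf : S.IsImmersion E f)
    (hp : p ∈ S.lift f) {n : S.H0} (hn : n ∈ S.normalLift E f p) :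
    S.IsShapeOperator E f p n (S.shape E f p n) := by
  have hA := h.exists_isShapeOperator hf hp hn
  rw [shape, dif_pos hA]
  exact hA.choose_spec

/- If `Ã_{ν^L} X = 0`, the derivative of `ν^L` along `X` is the horizontal lift of some normal
vector `w`; its value at `s = 0` is `w` on the one hand, the tangent vector `ν'` on the other. -/
lemma hasDerivAt_fieldLift_zero (h : HasTrivialNormalHolonomy E f) (hf : S.IsImmersion E f)
    (hν : S.IsParallelNormal E f ν) (hc : S.IsLiftCurve E f p c X)
    (hX : S.shape E f p (S.fieldLift ν p) X = 0) :
    HasDerivAt (fun t => S.fieldLift ν (c t)) 0 0 := by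
  have hp := hc.mem_lift
  obtain ⟨Y, -, hY⟩ := hc.exists_velocity hf
  have hnormal := (h.isShapeOperator_shape hf hp (hν.fieldLift_mem_normalLift hp)).2 c X _ _ hc
    (fun t => hν.fieldLift_mem_normalLift (hc.1 t)) (by rw [hc.2.1]) (hY ν hν)
  rw [hX, add_zero] at hnormal
  obtain ⟨w, hw, hderiv⟩ := hf.exists_eq_horizontal hp hnormal
  have hww : ⟪w, w⟫ = 0 :=
    (congrArg (⟪·, w⟫) (eq_of_horizontalDeriv_eq_horizontal hderiv)).trans (hν.2.2 p.1 Y w hw)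
  refine (hY ν hν).congr_deriv ?_
  rw [hderiv, inner_self_eq_zero.1 hww, map_zero]

end HasTrivialNormalHolonomy

namespace IsNormalSplitting

variable {x₀ m₁ : M} {N : S.Submfd} {W : Fin 2 → Submodule ℝ 𝔤} {i : Fin 2}

lemma mem_parallelSubbundle_of_sub_horizontal_mem_tangentLift (hf : HasGeodesicSections E f)
    (hW : IsNormalSplitting E f x₀ N W) (hp : p ∈ S.lift f) {v v' w : 𝔤}
    (hv : v ∈ S.parallelSubbundle E f x₀ (W i) p.1) (hv' : ∀ u ∈ S.normalOf E f p.1, ⟪v', u⟫ = 0)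
    (hw : w ∈ S.normalOf E f p.1)
    (h : S.horizontalDeriv p.2 v (X, v') - S.horizontal p.2 w ∈ S.tangentLift E f p) :
    w ∈ S.parallelSubbundle E f x₀ (W i) p.1 := by
  obtain ⟨j, hij⟩ := exists_ne i
  refine hW.mem_parallelSubbundle_of_forall_inner hf.trivialNormalHolonomy hij hw fun u hu => ?_
  have hun : u ∈ S.normalOf E f p.1 := by
    obtain ⟨μ, hμ, -, rfl⟩ := mem_parallelSubbundle_iff.1 hu
    exact hμ.mem_normalOf p.1
  have hperp := (Submodule.mem_orthogonal' _ _).1 (horizontal_mem_normalLift hp hun) _ h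
  rw [inner_sub_right, inner_horizontal_horizontalDeriv _ _ _ (hW.bracket_eq_zero hf hij hv hu),
    inner_horizontal_horizontal, real_inner_comm, hv' u hun, zero_sub, neg_eq_zero] at hperp
  rw [real_inner_comm, hperp]

lemma exists_hasDerivAt_fieldLift (hf : HasGeodesicSections E f)
    (hW : IsNormalSplitting E f x₀ N W) (hν : S.IsParallelNormal E f ν)
    (hνW : ν p.1 ∈ S.parallelSubbundle E f x₀ (W i) p.1) (hc : S.IsLiftCurve E f p c X) :
    ∃ τ ∈ S.tangentLift E f p, ∃ ζ ∈ S.DNLift E f (S.parallelSubbundle E f x₀ (W i)) p,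
      HasDerivAt (fun t => S.fieldLift ν (c t)) (τ + ζ) 0 := by
  have hp := hc.mem_lift
  obtain ⟨Y, -, hY⟩ := hc.exists_velocity hf.immersion
  obtain ⟨w, hw, hτ⟩ := hf.immersion.exists_sub_horizontal_mem_tangentLift hp
    (S.horizontalDeriv p.2 (ν p.1) (X, mfderiv 𝓘(ℝ, E) 𝓘(ℝ, 𝔤) ν p.1 Y))
  have hwW := hW.mem_parallelSubbundle_of_sub_horizontal_mem_tangentLift hf hp hνW
    (hν.2.2 p.1 Y) hw hτ
  refine ⟨_, hτ, _, horizontal_mem_DNLift hp hw hwW, ?_⟩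
  rw [sub_add_cancel]
  exact hY ν hν

end IsNormalSplitting

end Lift

end CompactSymmetricSpace

theorem parallelNormalLift_derivative_general
    {𝔸 𝔤 : Type*} [NormedRing 𝔸] [NormedAlgebra ℝ 𝔸] [FiniteDimensional ℝ 𝔸]
    [NormedAddCommGroup 𝔤] [InnerProductSpace ℝ 𝔤] [FiniteDimensional ℝ 𝔤]
    (S : CompactSymmetricSpace 𝔸 𝔤)
    {E : Type*} [NormedAddCommGroup E] [NormedSpace ℝ E]
    {M : Type*} [TopologicalSpace M] [PreconnectedSpace M]
    [ChartedSpace E M] [IsManifold 𝓘(ℝ, E) ∞ M]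
    (f : M → S.Q) (hf : CompactSymmetricSpace.HasGeodesicSections E f)
    (x₀ : M) (N : S.Submfd) (W : Fin 2 → Submodule ℝ 𝔤)
    (hW : CompactSymmetricSpace.IsNormalSplitting E f x₀ N W)
    (D : Fin 2 → M → Submodule ℝ 𝔤) (hD : ∀ i, D i = S.parallelSubbundle E f x₀ (W i))
    (i : Fin 2) (m₁ : M) (ν : M → 𝔤) (hν : S.IsParallelNormal E f ν) (hνD : ν m₁ ∈ D i m₁)
    (p : M × S.H0) (c : ℝ → M × S.H0) (X : S.H0) (hc : S.IsLiftCurve E f p c X) :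
    (∃ τ ∈ S.tangentLift E f p, ∃ ζ ∈ S.normalLift E f p,
      HasDerivAt (fun t => S.fieldLift ν (c t)) (τ + ζ) 0 ∧ ζ ∈ S.DNLift E f (D i) p) ∧
    (∀ j, j ≠ i → X ∈ S.DT E f D j p ⊔ S.DT0 E f p →
      HasDerivAt (fun t => S.fieldLift ν (c t)) 0 0) := by
  have hp := hc.mem_lift
  have hνp : ν p.1 ∈ D i p.1 := by
    rw [hD] at hνD ⊢
    exact hν.mem_parallelSubbundle hνD p.1
  refine ⟨?_, fun j hij hX => ?_⟩
  · rw [hD] at hνp ⊢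
    obtain ⟨τ, hτ, ζ, hζ, hderiv⟩ := hW.exists_hasDerivAt_fieldLift hf hν hνp hc
    exact ⟨τ, hτ, ζ, hζ.1, hderiv, hζ⟩
  · have hlift : S.fieldLift ν p ∈ S.DNLift E f (D i) p := hν.fieldLift_eq hp ▸
      CompactSymmetricSpace.horizontal_mem_DNLift hp (hν.mem_normalOf p.1) hνp
    exact hf.trivialNormalHolonomy.hasDerivAt_fieldLift_zero hf.immersion hν hc
      (CompactSymmetricSpace.shape_eq_zero_of_mem_shapeKer
        (CompactSymmetricSpace.DT_sup_DT0_le hij hX) hlift)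

end

/-- Let `f : M → G/K` be an equifocal submanifold whose section `N` through `f x₀` is not flat and
has reducible restricted holonomy, with invariant decomposition `W 0 ⊕ W 1`; let `D i` be the
`∇^⊥`-parallel subbundle of the normal bundle with `(D i)_{x₀} = W i`. Let `ν` be the parallel normal
field extending a normal vector `v ∈ (D i)_{m₁}`. At every point `p` of `M̃` and for every vector `X`
tangent to `M̃` at `p` (the velocity of a curve `c` in `M̃`):
(i) the derivative of `ν^L` along `X` exists, and its normal part `ζ` lies in `D̃^N_i`;
(ii) if `X ∈ D̃^T_j ⊕ D̃^T_0` with `j ≠ i`, the derivative is zero. -/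
theorem parallelNormalLift_derivative
    {𝔸 𝔤 : Type*} [NormedRing 𝔸] [NormedAlgebra ℝ 𝔸] [FiniteDimensional ℝ 𝔸]
    [NormedAddCommGroup 𝔤] [InnerProductSpace ℝ 𝔤] [FiniteDimensional ℝ 𝔤]
    (S : CompactSymmetricSpace 𝔸 𝔤)
    {E : Type*} [NormedAddCommGroup E] [NormedSpace ℝ E] [FiniteDimensional ℝ E]
    {M : Type*} [TopologicalSpace M] [T2Space M] [ConnectedSpace M]
    [ChartedSpace E M] [IsManifold 𝓘(ℝ, E) ∞ M]
    (f : M → S.Q) (hf : S.IsEquifocal E f)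
    (x₀ : M) (N : S.Submfd) (W : Fin 2 → Submodule ℝ 𝔤) (hW : S.IsSectionSplitting E f x₀ N W)
    (D : Fin 2 → M → Submodule ℝ 𝔤) (hD : ∀ i, D i = S.parallelSubbundle E f x₀ (W i))
    (i : Fin 2) (m₁ : M) (v : 𝔤) (hv : v ∈ D i m₁)
    (ν : M → 𝔤) (hν : S.IsParallelNormal E f ν) (hνv : ν m₁ = v) :
    ∀ p ∈ S.lift f, ∀ (c : ℝ → M × S.H0) (X : S.H0), S.IsLiftCurve E f p c X →
      (∃ τ ∈ S.tangentLift E f p, ∃ ζ ∈ S.normalLift E f p,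
        HasDerivAt (fun t => S.fieldLift ν (c t)) (τ + ζ) 0 ∧
          ζ ∈ S.DNLift E f (D i) p) ∧
      (∀ j, j ≠ i → X ∈ S.DT E f D j p ⊔ S.DT0 E f p →
        HasDerivAt (fun t => S.fieldLift ν (c t)) 0 0) := by
  intro p _ c X hc
  exact parallelNormalLift_derivative_general S f hf.hasGeodesicSections x₀ N W
    (hW.isNormalSplitting hf.immersion) D hD i m₁ ν hν (hνv ▸ hv) p c X hc
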